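/- arXiv:2303.09157 — 2 statements merged into one kernel-verified Lean document; each statement's English description precedes it below -/
import Mathlib

section
/- Let R > 0 and suppose u_i → u strictly in BV(B(0,R)) on the planar disc B(0,R) ⊂ ℝ², and that S_u = ∅. Then there is a subsequence of (u_i) (not relabeled) such that for almost every 0 < r < R, the precise representatives u_i* converge to u* uniformly on the circle ∂B(0,r). -/
/-!
The functions are restricted to circles: the slice of `u` at radius `r` is the periodic function
`θ ↦ u (r cos θ, r sin θ)`. Its essential variation `evar` is the lower limit of `L¹` difference
quotients, and integrating `r * evar` over the radii gives exactly the mass of the angular part of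
the derivative, `∫ |⟪Jx, σ⟫| dν` with `J` the rotation by a right angle (`NBV.lintegral_evar`).

Strict convergence implies, by an argument of Reshetnyak type, that the angular masses of the `u_i`
asymptotically do not exceed that of `u` (`angMass_limsup`). Since `evar` is lower semicontinuous
under `L¹` convergence (`evar_sub_tendsto`), the excess of the variation of the slices of `u_i` over
that of the slice of `u` tends to zero in mean (`tendsto_excess`). Along a subsequence, on almost
every circle, the slices thus converge in `L¹` and the excess variation tends to zero.

Since `S_u` is empty, the slice of `u` has no jump on almost every circle. Indeed, almost every
radius is one near which the slices depend on the radius in a Lipschitz way (`NBV.ae_radial`). If a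
set of radii with positive measure had jumping slices, then at a density point of it the jumps on
neighbouring circles would sit at neighbouring angles, and `u` would oscillate in small discs
(`jump_contra`). Slices of finite variation without jumps are essentially uniformly continuous
(`NBV.ae_essCont`).

A function that leaves the range of `g` on an arc pays twice the overshoot in variation
(`evar_closeness`), so a function `L¹`-close to `g` with little excess variation obeys nearly the
same bounds on arcs (`arc_stability`). Applied to `u_i` and `u` on one circle this gives essentially
uniform convergence of the slices. Applied to neighbouring circles of a single function it shows
that, on almost every circle, essential bounds on arcs pass to the precise representative
(`NBV.ae_preciseRep`). The lemmas `exists_nbv` and `preciseRep_congr` reduce everything to Borel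
representatives vanishing off the disc.
-/

open MeasureTheory Filter
open scoped ENNReal RealInnerProductSpace

noncomputable section

/-- The closed cone `C(v,a) = {x ∈ ℝ² : x·v ≥ a|x|}`. -/
def cone (v : EuclideanSpace ℝ (Fin 2)) (a : ℝ) : Set (EuclideanSpace ℝ (Fin 2)) :=
  {x | a * ‖x‖ ≤ ⟪x, v⟫}

/-- `u ∈ BV(Ω)` for an open set `Ω ⊂ ℝ²`, presented through the polar decomposition
`Du = σ |Du|`: `ν` plays the role of the total variation measure `|Du|` (a finite positive
measure concentrated on `Ω`) and `σ = dDu/d|Du|` is the vector-valued Radon–Nikodym density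
of unit length `ν`-a.e.; the defining requirement is the integration-by-parts formula
`∫_Ω u ∂φ/∂y_l dL² = −∫_Ω φ σ_l dν` for all `φ ∈ C_c¹(Ω)`. -/
structure IsBVScalarOn (Ω : Set (EuclideanSpace ℝ (Fin 2)))
    (u : EuclideanSpace ℝ (Fin 2) → ℝ)
    (ν : Measure (EuclideanSpace ℝ (Fin 2)))
    (σ : EuclideanSpace ℝ (Fin 2) → EuclideanSpace ℝ (Fin 2)) : Prop where
  integrable : IntegrableOn u Ω volume
  finite : ν Set.univ < ⊤
  concentrated : ν Ωᶜ = 0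
  meas : Measurable σ
  unit : ∀ᵐ x ∂ν, ‖σ x‖ = 1
  parts : ∀ φ : EuclideanSpace ℝ (Fin 2) → ℝ, ContDiff ℝ 1 φ → HasCompactSupport φ →
    tsupport φ ⊆ Ω → ∀ l : Fin 2,
      ∫ x in Ω, u x * fderiv ℝ φ x (EuclideanSpace.single l (1:ℝ)) ∂volume
        = - ∫ x, φ x * σ x l ∂ν

/-- The precise representative `u*`. -/
def preciseRep (u : EuclideanSpace ℝ (Fin 2) → ℝ) (x : EuclideanSpace ℝ (Fin 2)) : ℝ :=
  sInf {t : ℝ | Tendsto (fun r : ℝ =>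
      volume (Metric.ball x r ∩ {y | t < u y}) / volume (Metric.ball x r))
    (nhdsWithin 0 (Set.Ioi 0)) (nhds 0)}

/-- The approximate discontinuity set `S_u ⊂ Ω`: points where no `c ∈ ℝ` satisfies
`lim_{r→0} ⨍_{B(x,r)} |u − c| = 0`. -/
def approxDiscSet (Ω : Set (EuclideanSpace ℝ (Fin 2))) (u : EuclideanSpace ℝ (Fin 2) → ℝ) :
    Set (EuclideanSpace ℝ (Fin 2)) :=
  {x ∈ Ω | ¬ ∃ c : ℝ, Tendsto (fun r : ℝ =>
      (∫ y in Metric.ball x r, |u y - c| ∂volume) / (volume (Metric.ball x r)).toReal)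
    (nhdsWithin 0 (Set.Ioi 0)) (nhds 0)}

section
open Set Topology

/-! ### Polar coordinates -/

/-- The Euclidean plane. -/
abbrev Plane := EuclideanSpace ℝ (Fin 2)

/-- The point with polar coordinates `(r, θ)`. -/
def pol (r θ : ℝ) : Plane := !₂[r * Real.cos θ, r * Real.sin θ]

/-- Change of the period interval. -/
lemma lintegral_period {f : ℝ → ℝ≥0∞} {T : ℝ} (hT : 0 < T) (hf : Function.Periodic f T) (a b : ℝ) :
    ∫⁻ θ in Ioc a (a + T), f θ = ∫⁻ θ in Ioc b (b + T), f θ := by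
  haveI : Fact (0 < T) := ⟨hT⟩
  refine (isAddFundamentalDomain_Ioc hT a).setLIntegral_eq (isAddFundamentalDomain_Ioc hT b) f ?_
  intro g x
  obtain ⟨g, hg⟩ := g
  obtain ⟨n, rfl⟩ := AddSubgroup.mem_zmultiples_iff.1 hg
  simp only [AddSubgroup.mk_vadd, vadd_eq_add]
  rw [add_comm]
  exact hf.zsmul n x

lemma lintegral_translate_period {f : ℝ → ℝ≥0∞} {T : ℝ} (hT : 0 < T)
    (hf : Function.Periodic f T) (a b t : ℝ) :
    ∫⁻ θ in Ioc a (a + T), f (θ + t) = ∫⁻ θ in Ioc b (b + T), f θ := by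
  have h := (measurePreserving_add_right (volume : Measure ℝ) t).setLIntegral_comp_emb
    (measurableEmbedding_addRight t) f (Ioc a (a+T))
  rw [h, image_add_const_Ioc, show a + T + t = (a + t) + T by ring]
  exact lintegral_period hT hf _ _

lemma pol_continuous : Continuous (fun p : ℝ × ℝ => pol p.1 p.2) := by
  unfold pol
  refine (PiLp.continuous_toLp 2 _).comp ?_
  refine continuous_pi fun i => ?_
  fin_cases i <;> simp <;> fun_prop

lemma pol_periodic (r : ℝ) : Function.Periodic (pol r) (2 * Real.pi) := by
  intro θ; simp [pol]

/-- Integration in polar coordinates, over any angular interval of length `2π`. -/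
lemma lintegral_polar {f : Plane → ℝ≥0∞} (hf : Measurable f) (a : ℝ) :
    ∫⁻ x, f x = ∫⁻ r in Ioi (0:ℝ), ENNReal.ofReal r *
      ∫⁻ θ in Ioc a (a + 2 * Real.pi), f (pol r θ) := by
  have h1 : ∫⁻ x, f x = ∫⁻ p : ℝ × ℝ, f (!₂[p.1, p.2]) := by
    have e1 := (EuclideanSpace.volume_preserving_symm_measurableEquiv_toLp (Fin 2)).symm
    have e2 := (volume_preserving_finTwoArrow ℝ).symm
    rw [← e1.lintegral_comp_emb (MeasurableEquiv.measurableEmbedding _),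
      ← e2.lintegral_comp_emb (MeasurableEquiv.measurableEmbedding _)]
    rfl
  rw [h1, ← lintegral_comp_polarCoord_symm]
  have ht : polarCoord.target = Ioi (0:ℝ) ×ˢ Ioo (-Real.pi) Real.pi := rfl
  rw [ht, Measure.volume_eq_prod, ← Measure.prod_restrict, lintegral_prod]
  · refine lintegral_congr fun r => ?_
    simp only [smul_eq_mul]
    rw [lintegral_const_mul' _ _ ENNReal.ofReal_ne_top]
    congr 1
    rw [setLIntegral_congr Ioo_ae_eq_Ioc]
    have := lintegral_period (f := fun θ => f (pol r θ)) Real.two_pi_pos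
      (fun θ => by simp only [pol_periodic r θ]) a (-Real.pi)
    rw [this, show -Real.pi + 2 * Real.pi = Real.pi by ring]
    rfl
  · refine Measurable.aemeasurable ?_
    refine (ENNReal.measurable_ofReal.comp measurable_fst).smul ?_
    exact hf.comp pol_continuous.measurable

lemma norm_pol (r θ : ℝ) : ‖pol r θ‖ = |r| := by
  rw [EuclideanSpace.norm_eq, ← Real.sqrt_sq_eq_abs]
  simp [pol, Fin.sum_univ_two]
  congr 1
  nlinarith [Real.sin_sq_add_cos_sq θ]

lemma dist_pol_sq (r s θ τ : ℝ) : dist (pol s τ) (pol r θ) ^ 2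
    = (s - r) ^ 2 + 2 * s * r * (1 - Real.cos (τ - θ)) := by
  rw [EuclideanSpace.dist_eq, Real.sq_sqrt (by positivity)]
  simp [pol, Fin.sum_univ_two, Real.dist_eq, Real.cos_sub]
  linear_combination s ^ 2 * Real.sin_sq_add_cos_sq τ + r ^ 2 * Real.sin_sq_add_cos_sq θ

lemma exists_pol {r : ℝ} (hr : 0 < r) {x : Plane} (hx : ‖x‖ = r) : ∃ θ, x = pol r θ := by
  refine ⟨Complex.arg ⟨x 0, x 1⟩, ?_⟩
  have hn : ‖(⟨x 0, x 1⟩ : ℂ)‖ = r := by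
    rw [Complex.norm_def, ← hx, EuclideanSpace.norm_eq]
    simp [Complex.normSq_apply, Fin.sum_univ_two, sq]
  ext i
  fin_cases i
  · have := Complex.norm_mul_cos_arg ⟨x 0, x 1⟩
    rw [hn] at this
    simp [pol, this]
  · have := Complex.norm_mul_sin_arg ⟨x 0, x 1⟩
    rw [hn] at this
    simp [pol, this]

/-! ### Essential variation of periodic functions -/

/-- Measurable `2π`-periodic functions integrable over a period. -/
structure PerL1 (g : ℝ → ℝ) : Prop where
  meas : Measurable g
  per : Function.Periodic g (2 * Real.pi)
  fin : ∫⁻ θ in Ioc 0 (2 * Real.pi), ‖g θ‖ₑ < ⊤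

/-- The `L¹` size, over one period, of the increment of `g` under translation by `h`. -/
def tinc (g : ℝ → ℝ) (h : ℝ) : ℝ≥0∞ := ∫⁻ θ in Ioc 0 (2 * Real.pi), ‖g (θ + h) - g θ‖ₑ

/-- The essential variation of `g` over one period, defined as the lower limit of the `L¹`
difference quotients with steps `1 / (n + 1)`. -/
def evar (g : ℝ → ℝ) : ℝ≥0∞ :=
  liminf (fun n : ℕ => ((n : ℝ≥0∞) + 1) * tinc g (1 / ((n : ℝ) + 1))) atTop

/-- The average of `g` over `[x, x + 1/(n+1)]`. -/
def avgR (g : ℝ → ℝ) (n : ℕ) (x : ℝ) : ℝ := ((n : ℝ) + 1) * ∫ t in x..(x + 1 / ((n : ℝ) + 1)), g t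

/-- Points at which the one-sided averages converge to the value of `g`. -/
def LebPt (g : ℝ → ℝ) (x : ℝ) : Prop := Tendsto (fun n => avgR g n x) atTop (𝓝 (g x))

lemma PerL1.intervalIntegrable {g : ℝ → ℝ} (hg : PerL1 g) (a b : ℝ) :
    IntervalIntegrable g volume a b := by
  refine hg.per.intervalIntegrable₀ Real.two_pi_pos.ne' ?_ a b
  rw [intervalIntegrable_iff_integrableOn_Ioc_of_le Real.two_pi_pos.le]
  exact ⟨hg.meas.aestronglyMeasurable, hg.fin⟩

lemma PerL1.locallyIntegrable {g : ℝ → ℝ} (hg : PerL1 g) : LocallyIntegrable g volume := by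
  intro x
  refine ⟨Ioo (x - 1) (x + 1), Ioo_mem_nhds (by linarith) (by linarith), ?_⟩
  have := hg.intervalIntegrable (x - 1) (x + 1)
  rw [intervalIntegrable_iff_integrableOn_Ioc_of_le (by linarith)] at this
  exact this.mono_set Ioo_subset_Ioc_self

lemma PerL1.ae_lebPt {g : ℝ → ℝ} (hg : PerL1 g) : ∀ᵐ x, LebPt g x := by
  filter_upwards [_root_.LocallyIntegrable.ae_hasDerivAt_integral hg.locallyIntegrable] with x hx
  have h := (hx 0).tendsto_slope_zero
  have h1 : Tendsto (fun n : ℕ => 1 / ((n : ℝ) + 1)) atTop (𝓝[≠] 0) := by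
    refine tendsto_nhdsWithin_iff.2 ⟨tendsto_one_div_add_atTop_nhds_zero_nat, ?_⟩
    exact Eventually.of_forall fun n => by
      have : (0:ℝ) < 1 / ((n:ℝ) + 1) := by positivity
      exact this.ne'
  refine (h.comp h1).congr fun n => ?_
  simp only [Function.comp, smul_eq_mul, avgR]
  rw [intervalIntegral.integral_interval_sub_left (hg.intervalIntegrable _ _)
    (hg.intervalIntegrable _ _)]
  simp

lemma avgR_continuous {g : ℝ → ℝ} (hg : PerL1 g) (n : ℕ) : Continuous (avgR g n) := by
  unfold avgR
  have h : Continuous fun x => ∫ t in (0:ℝ)..x, g t :=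
    intervalIntegral.continuous_primitive (fun a b => hg.intervalIntegrable a b) 0
  have h2 : (fun x => ∫ t in x..(x + 1 / ((n : ℝ) + 1)), g t) =
      fun x => (∫ t in (0:ℝ)..(x + 1 / ((n : ℝ) + 1)), g t) - ∫ t in (0:ℝ)..x, g t := by
    funext x
    rw [intervalIntegral.integral_interval_sub_left (hg.intervalIntegrable _ _)
      (hg.intervalIntegrable _ _)]
  have h3 : Continuous fun x => ∫ t in x..(x + 1 / ((n : ℝ) + 1)), g t := by
    rw [h2]
    exact (h.comp (by fun_prop)).sub h
  exact continuous_const.mul h3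

/-- The modulus of the difference quotient of `g` with step `1 / (n + 1)`. -/
def dq (g : ℝ → ℝ) (n : ℕ) (t : ℝ) : ℝ≥0∞ :=
  ((n : ℝ≥0∞) + 1) * ‖g (t + 1 / ((n : ℝ) + 1)) - g t‖ₑ

lemma dq_meas {g : ℝ → ℝ} (hg : PerL1 g) (n : ℕ) : Measurable (dq g n) := by
  unfold dq
  have := hg.meas
  fun_prop

lemma dq_periodic {g : ℝ → ℝ} (hg : PerL1 g) (n : ℕ) : Function.Periodic (dq g n) (2 * Real.pi) := by
  intro t
  simp only [dq]
  rw [hg.per t, show t + 2 * Real.pi + 1 / ((n:ℝ) + 1) = (t + 1 / ((n:ℝ) + 1)) + 2 * Real.pi by ring,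
    hg.per]

lemma lintegral_dq {g : ℝ → ℝ} (hg : PerL1 g) (n : ℕ) (a : ℝ) :
    ∫⁻ t in Ioc a (a + 2 * Real.pi), dq g n t
      = ((n : ℝ≥0∞) + 1) * tinc g (1 / ((n : ℝ) + 1)) := by
  rw [lintegral_period Real.two_pi_pos (dq_periodic hg n) a 0, zero_add]
  unfold dq tinc
  rw [lintegral_const_mul]
  have := hg.meas
  fun_prop

lemma edist_avgR_le {g : ℝ → ℝ} (hg : PerL1 g) (n : ℕ) {a b : ℝ} (hab : a ≤ b) :
    edist (avgR g n b) (avgR g n a) ≤ ∫⁻ t in Ioc a b, dq g n t := by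
  set δ := 1 / ((n : ℝ) + 1) with hδ
  have hi := hg.intervalIntegrable
  have key : avgR g n b - avgR g n a = ((n:ℝ) + 1) * ∫ t in a..b, (g (t + δ) - g t) := by
    unfold avgR
    rw [← mul_sub, intervalIntegral.integral_interval_sub_interval_comm (hi _ _) (hi _ _) (hi _ _)]
    congr 1
    rw [intervalIntegral.integral_sub]
    · rw [intervalIntegral.integral_comp_add_right g δ, intervalIntegral.integral_symm a b,
        intervalIntegral.integral_symm (a + δ) (b + δ)]
      ring
    · simpa using (hi (a + δ) (b + δ)).comp_add_right δ
    · exact hi _ _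
  rw [edist_eq_enorm_sub, key, enorm_mul, intervalIntegral.integral_of_le hab]
  unfold dq
  rw [lintegral_const_mul]
  · have h1 : ‖((n:ℝ) + 1)‖ₑ = (n:ℝ≥0∞) + 1 := by
      rw [Real.enorm_of_nonneg (by positivity), ENNReal.ofReal_add (by positivity) zero_le_one]
      simp
    rw [h1]
    gcongr
    exact enorm_integral_le_lintegral_enorm _
  · have := hg.meas
    fun_prop

lemma sum_Ioc_le {f : ℝ → ℝ≥0∞} (u : ℕ → ℝ) (hu : Monotone u) (N : ℕ) :
    ∑ i ∈ Finset.range N, ∫⁻ t in Ioc (u i) (u (i+1)), f t = ∫⁻ t in Ioc (u 0) (u N), f t := by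
  induction N with
  | zero => simp
  | succ k ih =>
    rw [Finset.sum_range_succ, ih, ← lintegral_union measurableSet_Ioc]
    · rw [Ioc_union_Ioc_eq_Ioc (hu (Nat.zero_le _)) (hu (Nat.le_succ _))]
    · rw [Set.disjoint_left]; rintro x ⟨_, h1⟩ ⟨h2, _⟩; exact absurd h1 (not_le.2 h2)

/-- The pointwise variation over the Lebesgue points in a period is at most `evar`. -/
lemma eVariationOn_le_evar {g : ℝ → ℝ} (hg : PerL1 g) (a : ℝ) :
    eVariationOn g ({x | LebPt g x} ∩ Icc a (a + 2 * Real.pi)) ≤ evar g := by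
  refine le_of_forall_lt fun v hv => ?_
  obtain ⟨v', hv1, hv2⟩ := exists_between hv
  have h := eVariationOn.lowerSemicontinuous_aux (F := avgR g) (p := atTop)
    (s := {x | LebPt g x} ∩ Icc a (a + 2 * Real.pi)) (f := g) (fun x hx => hx.1) hv2
  refine hv1.trans_le ?_
  refine le_liminf_of_le (by isBoundedDefault) ?_
  filter_upwards [h] with n hn
  refine hn.le.trans ?_
  rw [← lintegral_dq hg n a]
  refine iSup_le ?_
  rintro ⟨N, u, hu, hus⟩
  calc ∑ i ∈ Finset.range N, edist (avgR g n (u (i+1))) (avgR g n (u i))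
      ≤ ∑ i ∈ Finset.range N, ∫⁻ t in Ioc (u i) (u (i+1)), dq g n t :=
        Finset.sum_le_sum fun i _ => edist_avgR_le hg n (hu (Nat.le_succ i))
    _ = ∫⁻ t in Ioc (u 0) (u N), dq g n t := sum_Ioc_le u hu N
    _ ≤ _ := lintegral_mono_set (Ioc_subset_Ioc (hus 0).2.1 (hus N).2.2)

/-- The increment of `g` over the window `[s, s + h]`, measured through the intermediate point
`x` when `s ≤ x`. -/
def wind (g : ℝ → ℝ) (x h s : ℝ) : ℝ≥0∞ :=
  if s ≤ x then edist (g x) (g s) + edist (g (s + h)) (g x) else edist (g (s + h)) (g s)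

lemma lintegral_window {f : ℝ → ℝ≥0∞} (hf : Measurable f) (hp : Function.Periodic f (2 * Real.pi))
    (a h : ℝ) (hh : 0 < h) :
    ∫⁻ s in Ioc a (a + 2 * Real.pi), ∫⁻ t in Ioc s (s + h), f t
      = ENNReal.ofReal h * ∫⁻ t in Ioc a (a + 2 * Real.pi), f t := by
  have h1 : ∀ s, ∫⁻ t in Ioc s (s + h), f t = ∫⁻ t in Ioc 0 h, f (s + t) := by
    intro s
    have := (measurePreserving_add_left (volume : Measure ℝ) s).setLIntegral_comp_emb
      (measurableEmbedding_addLeft s) f (Ioc 0 h)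
    rw [this, image_const_add_Ioc, add_zero]
  simp_rw [h1]
  rw [lintegral_lintegral_swap]
  · simp_rw [lintegral_translate_period Real.two_pi_pos hp a a]
    simp [mul_comm]
  · exact (hf.comp (measurable_fst.add measurable_snd)).aemeasurable

/-- Windows of length `h`, one of which is subdivided at the Lebesgue point `x`. -/
lemma evar_window {g : ℝ → ℝ} (hg : PerL1 g) {x h : ℝ} (hx : LebPt g x) (hh : 0 < h) :
    ∫⁻ s in Ioc (x - h) (x - h + 2 * Real.pi), wind g x h s ≤ ENNReal.ofReal h * evar g := by
  have hlim : ∀ᵐ s, Tendsto (fun n => wind (avgR g n) x h s) atTop (𝓝 (wind g x h s)) := by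
    have h2 : ∀ᵐ s : ℝ, LebPt g (s + h) :=
      (measurePreserving_add_right (volume : Measure ℝ) h).quasiMeasurePreserving.ae hg.ae_lebPt
    filter_upwards [hg.ae_lebPt, h2] with s hs1 hs2
    unfold wind
    split_ifs
    · exact (hx.edist hs1).add (hs2.edist hx)
    · exact hs2.edist hs1
  have hmeas : ∀ n, Measurable (fun s => wind (avgR g n) x h s) := by
    intro n
    have hc := (avgR_continuous hg n).measurable
    unfold wind
    refine Measurable.ite measurableSet_Iic ?_ ?_
    · exact (measurable_const.edist hc).add ((hc.comp (measurable_id.add_const h)).edist measurable_const)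
    · exact (hc.comp (measurable_id.add_const h)).edist hc
  have hle : ∀ n, ∫⁻ s in Ioc (x - h) (x - h + 2 * Real.pi), wind (avgR g n) x h s
      ≤ ENNReal.ofReal h * (((n : ℝ≥0∞) + 1) * tinc g (1 / ((n : ℝ) + 1))) := by
    intro n
    rw [← lintegral_dq hg n (x - h), ← lintegral_window (dq_meas hg n) (dq_periodic hg n) _ h hh]
    refine setLIntegral_mono' measurableSet_Ioc fun s hs => ?_
    unfold wind
    split_ifs with hsx
    · have h3 : x ≤ s + h := by linarith [hs.1]
      refine (add_le_add (edist_avgR_le hg n hsx) (edist_avgR_le hg n h3)).trans ?_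
      rw [← lintegral_union measurableSet_Ioc, Ioc_union_Ioc_eq_Ioc hsx h3]
      rw [Set.disjoint_left]; rintro y ⟨_, h1⟩ ⟨h2, _⟩; exact absurd h1 (not_le.2 h2)
    · exact edist_avgR_le hg n (by linarith)
  calc ∫⁻ s in Ioc (x - h) (x - h + 2 * Real.pi), wind g x h s
      = ∫⁻ s in Ioc (x - h) (x - h + 2 * Real.pi),
          liminf (fun n => wind (avgR g n) x h s) atTop := by
        refine lintegral_congr_ae (ae_restrict_of_ae ?_)
        filter_upwards [hlim] with s hs using hs.liminf_eq.symm
    _ ≤ liminf (fun n => ∫⁻ s in Ioc (x - h) (x - h + 2 * Real.pi), wind (avgR g n) x h s) atTop :=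
        lintegral_liminf_le hmeas
    _ ≤ liminf (fun n : ℕ => ENNReal.ofReal h *
          (((n : ℝ≥0∞) + 1) * tinc g (1 / ((n : ℝ) + 1)))) atTop :=
        liminf_le_liminf (Eventually.of_forall hle)
    _ = _ := by
        rw [ENNReal.liminf_const_mul_of_ne_top ENNReal.ofReal_ne_top]; rfl

lemma tinc_eq {g : ℝ → ℝ} (hg : PerL1 g) (a h : ℝ) :
    tinc g h = ∫⁻ s in Ioc a (a + 2 * Real.pi), ‖g (s + h) - g s‖ₑ := by
  unfold tinc
  rw [lintegral_period (f := fun s => ‖g (s + h) - g s‖ₑ) Real.two_pi_pos _ a 0, zero_add]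
  intro s
  simp only
  rw [hg.per s, show s + 2 * Real.pi + h = (s + h) + 2 * Real.pi by ring, hg.per]

/-- Translations are controlled by the essential variation with constant one, for every step `h`
and not only for the steps `1 / (n + 1)` entering the definition. -/
lemma tinc_le {g : ℝ → ℝ} (hg : PerL1 g) {h : ℝ} (hh : 0 < h) :
    tinc g h ≤ ENNReal.ofReal h * evar g := by
  obtain ⟨x, hx⟩ := hg.ae_lebPt.exists
  refine le_trans ?_ (evar_window hg hx hh)
  rw [tinc_eq hg (x - h)]
  refine lintegral_mono fun s => ?_
  unfold wind
  rw [← edist_eq_enorm_sub]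
  split_ifs
  · exact (edist_triangle (g (s + h)) (g x) (g s)).trans_eq (add_comm _ _)
  · exact le_rfl

/-- `L¹` distance over a period. -/
def ldist (w g : ℝ → ℝ) : ℝ≥0∞ := ∫⁻ θ in Ioc 0 (2 * Real.pi), ‖w θ - g θ‖ₑ

lemma ldist_eq {w g : ℝ → ℝ} (hw : PerL1 w) (hg : PerL1 g) (a t : ℝ) :
    ∫⁻ s in Ioc a (a + 2 * Real.pi), ‖w (s + t) - g (s + t)‖ₑ = ldist w g := by
  unfold ldist
  rw [lintegral_translate_period (f := fun s => ‖w s - g s‖ₑ) Real.two_pi_pos _ a 0 t, zero_add]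
  intro s
  simp only
  rw [hw.per, hg.per]

/-- A point `c` farther than `ρ` from `m`, visited between the values `p` and `q`, costs twice the
overshoot when `p` and `q` are within `a` and `b` of values `ρ`-close to `m`. -/
lemma real_window {c p q m ρ a b p' q' : ℝ} (ha : |p' - m| ≤ ρ) (hb : |q' - m| ≤ ρ)
    (hp : |p - p'| = a) (hq : |q - q'| = b) :
    |q' - p'| + max (2 * (|c - m| - ρ)) 0 ≤ (|c - p| + |q - c|) + 3 * (a + b) := by
  have h0 : |q' - p'| ≤ |q - p| + a + b := by
    rw [← hp, ← hq]
    rcases abs_cases (q' - p') with h | h <;> rcases abs_cases (q - p) with h' | h' <;>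
    rcases abs_cases (p - p') with h1 | h1 <;> rcases abs_cases (q - q') with h2 | h2 <;> linarith
  have ha0 : 0 ≤ a := hp ▸ abs_nonneg _
  have hb0 : 0 ≤ b := hq ▸ abs_nonneg _
  have hpm : |p - m| ≤ ρ + a := by
    rw [← hp]; calc |p - m| = |(p - p') + (p' - m)| := by ring_nf
      _ ≤ _ := (abs_add_le _ _).trans (by linarith)
  have hqm : |q - m| ≤ ρ + b := by
    rw [← hq]; calc |q - m| = |(q - q') + (q' - m)| := by ring_nf
      _ ≤ _ := (abs_add_le _ _).trans (by linarith)
  rw [← le_sub_iff_add_le', max_le_iff]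
  have htri : |q - p| ≤ |c - p| + |q - c| := by
    calc |q - p| = |(c - p) + (q - c)| := by ring_nf
      _ ≤ _ := abs_add_le _ _
  constructor
  · have : |q - p| + 2 * (|c - m| - ρ) ≤ |c - p| + |q - c| + 2 * (a + b) := by
      rw [abs_le] at hpm hqm
      rcases abs_cases (q - p) with h | h <;> rcases abs_cases (c - m) with h' | h' <;>
      rcases abs_cases (c - p) with h1 | h1 <;> rcases abs_cases (q - c) with h2 | h2 <;> linarith
    linarith
  · linarith

/-- If `w` is `L¹`-close to `g` and has not much more variation, then near an arc on which `g`
stays within `ρ` of `m`, `w` almost does so as well. -/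
lemma evar_closeness {w g : ℝ → ℝ} (hw : PerL1 w) (hg : PerL1 g) {x h m ρ : ℝ} (hx : LebPt w x)
    (hh : 0 < h) (hpi : h ≤ 2 * Real.pi)
    (hgm : ∀ᵐ s, s ∈ Ioo (x - h) (x + h) → |g s - m| ≤ ρ) :
    tinc g h + ENNReal.ofReal h * ENNReal.ofReal (2 * (|w x - m| - ρ))
      ≤ ENNReal.ofReal h * evar w + 6 * ldist w g := by
  have hgm2 : ∀ᵐ s : ℝ, s + h ∈ Ioo (x - h) (x + h) → |g (s + h) - m| ≤ ρ :=
    (measurePreserving_add_right (volume : Measure ℝ) h).quasiMeasurePreserving.ae hgm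
  have hne : ∀ᵐ s : ℝ, s ≠ x := by simp [ae_iff]
  set I := Ioc (x - h) (x - h + 2 * Real.pi) with hI
  set κ := ENNReal.ofReal (2 * (|w x - m| - ρ)) with hκ
  have hwm := hw.meas
  have hgmm := hg.meas
  -- Pointwise comparison of windows; those containing `x` gain twice the overshoot of `w x`.
  have h1 : ∫⁻ s in I, (‖g (s + h) - g s‖ₑ + (Ioc (x - h) x).indicator (fun _ => κ) s)
      ≤ ∫⁻ s in I, (wind w x h s + 3 * (‖w (s + 0) - g (s + 0)‖ₑ + ‖w (s + h) - g (s + h)‖ₑ)) := by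
    refine lintegral_mono_ae ((ae_restrict_iff' measurableSet_Ioc).2 ?_)
    filter_upwards [hgm, hgm2, hne] with s hs1 hs2 hs3 hsI
    rw [add_zero]
    have h3 : (3 : ℝ≥0∞) = ENNReal.ofReal 3 := by simp
    by_cases hsx : s ≤ x
    · have hsx' : s < x := lt_of_le_of_ne hsx hs3
      have := real_window (c := w x) (hs1 ⟨hsI.1, by linarith⟩)
        (hs2 ⟨by linarith [hsI.1], by linarith⟩) (p := w s) (q := w (s + h)) rfl rfl
      rw [indicator_of_mem (show s ∈ Ioc (x - h) x from ⟨hsI.1, hsx⟩)]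
      simp only [wind, hsx, if_true, edist_eq_enorm_sub, Real.enorm_eq_ofReal_abs]
      have hκ2 : κ = ENNReal.ofReal (max (2 * (|w x - m| - ρ)) 0) := by
        rw [ENNReal.ofReal_max, ENNReal.ofReal_zero, max_eq_left (by simp)]
      rw [h3, hκ2, ← ENNReal.ofReal_add (abs_nonneg _) (le_max_right _ _),
        ← ENNReal.ofReal_add (abs_nonneg (w x - w s)) (abs_nonneg _),
        ← ENNReal.ofReal_add (abs_nonneg (w s - g s)) (abs_nonneg _),
        ← ENNReal.ofReal_mul (by norm_num), ← ENNReal.ofReal_add (by positivity) (by positivity)]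
      exact ENNReal.ofReal_le_ofReal this
    · rw [indicator_of_notMem (fun h => hsx h.2), add_zero]
      simp only [wind, hsx, if_false, edist_eq_enorm_sub, Real.enorm_eq_ofReal_abs]
      rw [h3, ← ENNReal.ofReal_add (abs_nonneg _) (abs_nonneg _),
        ← ENNReal.ofReal_mul (by norm_num), ← ENNReal.ofReal_add (by positivity) (by positivity)]
      refine ENNReal.ofReal_le_ofReal ?_
      rcases abs_cases (g (s + h) - g s) with h4 | h4 <;> rcases abs_cases (w (s + h) - w s) with h' | h' <;>
      rcases abs_cases (w s - g s) with h1 | h1 <;>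
      rcases abs_cases (w (s + h) - g (s + h)) with h2 | h2 <;> linarith
  rw [lintegral_add_left (by fun_prop), ← tinc_eq hg, lintegral_indicator_const measurableSet_Ioc,
    Measure.restrict_apply measurableSet_Ioc,
    inter_eq_left.2 (Ioc_subset_Ioc le_rfl (by linarith)), Real.volume_Ioc,
    lintegral_add_right _ (by fun_prop), lintegral_const_mul _ (by fun_prop),
    lintegral_add_left (by fun_prop), ldist_eq hw hg, ldist_eq hw hg] at h1
  rw [mul_comm (ENNReal.ofReal h) κ]
  convert! h1.trans (add_le_add_left (evar_window hw hx hh) _) using 2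
  · congr 2; ring
  · ring

lemma tinc_le_add {w g : ℝ → ℝ} (hw : PerL1 w) (hg : PerL1 g) (h : ℝ) :
    tinc g h ≤ tinc w h + 2 * ldist w g := by
  have hwm := hw.meas
  have hgm := hg.meas
  have h2 := ldist_eq hw hg 0 h
  have h3 := ldist_eq hw hg 0 0
  rw [two_mul]
  nth_rewrite 1 [← h2]
  rw [← h3]
  simp only [zero_add, add_zero]
  unfold tinc
  rw [← lintegral_add_left (by fun_prop), ← lintegral_add_left (by fun_prop)]
  refine lintegral_mono fun s => ?_
  simp only [Real.enorm_eq_ofReal_abs]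
  rw [← ENNReal.ofReal_add (abs_nonneg _) (abs_nonneg _),
    ← ENNReal.ofReal_add (abs_nonneg _) (by positivity)]
  refine ENNReal.ofReal_le_ofReal ?_
  rcases abs_cases (g (s + h) - g s) with h4 | h4 <;> rcases abs_cases (w (s + h) - w s) with h' | h' <;>
  rcases abs_cases (w s - g s) with h1 | h1 <;>
  rcases abs_cases (w (s + h) - g (s + h)) with h2 | h2 <;> linarith

/-! ### Approximation by test functions -/

/-- Bounded measurable fields are `L¹`-approximated by `C¹` compactly supported test fields
obeying the same bound. -/
lemma exists_test_approx {F : Type*} [NormedAddCommGroup F] [NormedSpace ℝ F]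
    (μ : Measure Plane) [IsFiniteMeasure μ]
    {Ω : Set Plane} (hΩ : IsOpen Ω) (hc : μ Ωᶜ = 0) {G : Plane → F}
    (hG : AEStronglyMeasurable G μ) (hb : ∀ᵐ x ∂μ, ‖G x‖ ≤ 1) {ε : ℝ} (hε : 0 < ε) :
    ∃ φ : Plane → F, ContDiff ℝ 1 φ ∧ HasCompactSupport φ ∧ tsupport φ ⊆ Ω ∧ (∀ x, ‖φ x‖ ≤ 1) ∧
      ∫ x, ‖G x - φ x‖ ∂μ ≤ ε := by
  have hGi : Integrable G μ := Integrable.of_bound hG 1 hb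
  set M := μ.real univ with hM
  have hM0 : 0 ≤ M := measureReal_nonneg
  set η := ε / (4 + 2 * M) with hη
  have hη0 : 0 < η := by positivity
  obtain ⟨f0, -, hf0, hf0c, hf0i⟩ := hGi.exists_hasCompactSupport_integral_sub_le hη0
  obtain ⟨K, hKΩ, hK, hKμ⟩ : ∃ K ⊆ Ω, IsCompact K ∧ μ.real Kᶜ ≤ η := by
    have hun : μ Ω = μ univ := by
      rw [← measure_add_measure_compl hΩ.measurableSet (μ := μ), hc, add_zero]
    by_cases hμ : μ Ω = 0
    · refine ⟨∅, empty_subset _, isCompact_empty, ?_⟩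
      rw [compl_empty, measureReal_def, ← hun, hμ]; simpa using hη0.le
    · have : μ Ω - ENNReal.ofReal η < μ Ω :=
        ENNReal.sub_lt_self (measure_ne_top _ _) hμ (by simpa using hη0)
      obtain ⟨K, h1, h2, h3⟩ := hΩ.exists_lt_isCompact this
      refine ⟨K, h1, h2, ?_⟩
      rw [measureReal_def]
      refine ENNReal.toReal_le_of_le_ofReal hη0.le ?_
      rw [measure_compl h2.measurableSet (measure_ne_top _ _), ← hun]
      exact tsub_le_iff_left.2 (tsub_le_iff_right.1 h3.le)
  obtain ⟨L, hL, hKL, hLΩ⟩ := exists_compact_between hK hΩ hKΩ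
  obtain ⟨χ, hχ1, hχ0, -, hχb⟩ := exists_continuous_one_zero_of_isCompact hK
    (isOpen_interior (s := L)).isClosed_compl (disjoint_compl_right_iff_subset.2 hKL)
  -- The retraction onto the unit ball restores the bound one for the continuous approximation.
  set p : F → F := fun y => (max 1 ‖y‖)⁻¹ • y with hp
  have hpc : Continuous p := by
    refine Continuous.smul (Continuous.inv₀ (by fun_prop) fun y => ?_) continuous_id
    positivity
  have hp1 : ∀ y, ‖p y‖ ≤ 1 := by
    intro y
    rw [hp, norm_smul, norm_inv, Real.norm_of_nonneg (by positivity)]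
    rw [inv_mul_le_iff₀ (by positivity), mul_one]
    exact le_max_right _ _
  have hpd : ∀ y z, ‖y‖ ≤ 1 → ‖y - p z‖ ≤ 2 * ‖y - z‖ := by
    intro y z hy
    rcases le_total ‖z‖ 1 with hz | hz
    · have : p z = z := by simp [hp, max_eq_left hz]
      rw [this]; linarith [norm_nonneg (y - z)]
    · have h1 : ‖z - p z‖ = ‖z‖ - 1 := by
        have hz0 : 0 < ‖z‖ := by linarith
        have : z - p z = (1 - ‖z‖⁻¹) • z := by simp [hp, max_eq_right hz, sub_smul]
        rw [this, norm_smul, Real.norm_of_nonneg (sub_nonneg.2 (inv_le_one_of_one_le₀ hz))]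
        field_simp
      have h2 : ‖z‖ ≤ ‖y‖ + ‖y - z‖ := by
        rw [norm_sub_rev]; simpa using norm_add_le y (z - y)
      calc ‖y - p z‖ = ‖(y - z) + (z - p z)‖ := by congr 1; abel
        _ ≤ ‖y - z‖ + ‖z - p z‖ := norm_add_le _ _
        _ ≤ _ := by linarith
  set f1 : Plane → F := fun x => χ x • p (f0 x) with hf1
  have hf1c : Continuous f1 := χ.continuous.smul (hpc.comp hf0c)
  have hf1b : ∀ x, ‖f1 x‖ ≤ 1 := by
    intro x
    rw [hf1, norm_smul, Real.norm_of_nonneg (hχb x).1]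
    exact mul_le_one₀ (hχb x).2 (norm_nonneg _) (hp1 _)
  have hf1s : Function.support f1 ⊆ L := by
    intro x hx
    by_contra hxL
    exact hx (by simp [hf1, hχ0 (show x ∈ (interior L)ᶜ from fun h => hxL (interior_subset h))])
  obtain ⟨g, hgs, hgd, hgsupp⟩ := hf1c.exists_contDiff_approx (ε := fun _ => η) 1 continuous_const
    fun _ => hη0
  have hgL : Function.support g ⊆ L := hgsupp.trans hf1s
  have hgn : ∀ x, ‖g x‖ ≤ 1 + η := by
    intro x
    have h1 := hgd x
    rw [dist_eq_norm] at h1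
    calc ‖g x‖ = ‖(g x - f1 x) + f1 x‖ := by congr 1; abel
      _ ≤ _ := norm_add_le _ _
      _ ≤ _ := by linarith [hf1b x]
  -- Smoothing raises the bound to `1 + η`; rescaling restores the bound one.
  set φ : Plane → F := fun x => (1 + η)⁻¹ • g x with hφ
  have hφL : Function.support φ ⊆ L := fun x hx => hgL fun h => hx (by simp [hφ, h])
  have hts : tsupport φ ⊆ L := closure_minimal hφL hL.isClosed
  have hφ1 : ∀ x, ‖φ x‖ ≤ 1 := by
    intro x
    rw [hφ, norm_smul, norm_inv, Real.norm_of_nonneg (by positivity), inv_mul_le_iff₀ (by positivity),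
      mul_one]
    exact hgn x
  refine ⟨φ, (contDiff_const.smul hgs : _), hL.of_isClosed_subset (isClosed_tsupport _) hts, hts.trans hLΩ,
    hφ1, ?_⟩
  have hφc : Continuous φ := continuous_const.smul hgs.continuous
  have hfφ : ∀ x, ‖f1 x - φ x‖ ≤ 2 * η := by
    intro x
    have h1 := hgd x
    rw [dist_eq_norm'] at h1
    have h2 : ‖g x - φ x‖ ≤ η := by
      have : g x - φ x = η • φ x := by
        have : g x = (1 + η) • φ x := by
          rw [hφ, smul_smul, mul_inv_cancel₀ (by positivity), one_smul]
        rw [this, add_smul, one_smul]; abel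
      rw [this, norm_smul, Real.norm_of_nonneg hη0.le]
      exact mul_le_of_le_one_right hη0.le (hφ1 x)
    calc ‖f1 x - φ x‖ = ‖(f1 x - g x) + (g x - φ x)‖ := by congr 1; abel
      _ ≤ _ := norm_add_le _ _
      _ ≤ _ := by linarith
  have hpt : ∀ᵐ x ∂μ, ‖G x - φ x‖ ≤ 2 * ‖G x - f0 x‖ + (Kᶜ.indicator (fun _ => (2:ℝ)) x + 2 * η) := by
    filter_upwards [hb] with x hx
    have h1 : ‖G x - φ x‖ ≤ ‖G x - f1 x‖ + 2 * η := by
      calc ‖G x - φ x‖ = ‖(G x - f1 x) + (f1 x - φ x)‖ := by congr 1; abel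
        _ ≤ _ := norm_add_le _ _
        _ ≤ _ := by linarith [hfφ x]
    have h2 : ‖G x - f1 x‖ ≤ 2 * ‖G x - f0 x‖ + Kᶜ.indicator (fun _ => (2:ℝ)) x := by
      by_cases hxK : x ∈ K
      · have : f1 x = p (f0 x) := by simp [hf1, hχ1 hxK]
        rw [this, indicator_of_notMem (by simpa using hxK), add_zero]
        exact hpd _ _ hx
      · rw [indicator_of_mem hxK]
        have := norm_sub_le (G x) (f1 x)
        linarith [hf1b x, norm_nonneg (G x - f0 x)]
    linarith
  have hi1 : Integrable (fun x => 2 * ‖G x - f0 x‖) μ := (hGi.sub hf0i).norm.const_mul 2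
  have hi2 : Integrable (Kᶜ.indicator (fun _ => (2:ℝ))) μ :=
    (integrable_const _).indicator hK.measurableSet.compl
  have hi3 : Integrable (fun x => Kᶜ.indicator (fun _ => (2:ℝ)) x + 2 * η) μ :=
    hi2.add (integrable_const _)
  calc ∫ x, ‖G x - φ x‖ ∂μ ≤ ∫ x, (2 * ‖G x - f0 x‖ + (Kᶜ.indicator (fun _ => (2:ℝ)) x + 2 * η)) ∂μ :=
        integral_mono_of_nonneg (Eventually.of_forall fun _ => norm_nonneg _)
          (hi1.add hi3) hpt
    _ = 2 * ∫ x, ‖G x - f0 x‖ ∂μ + (μ.real Kᶜ * 2 + M * (2 * η)) := by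
        rw [integral_add hi1 hi3, integral_add hi2 (integrable_const _),
          integral_const_mul, integral_indicator hK.measurableSet.compl]
        simp [hM]
    _ ≤ 2 * η + (η * 2 + M * (2 * η)) := by gcongr
    _ = ε := by rw [hη]; field_simp; ring

/-- Duality: an integrable density that pairs to at most `C` with all test functions bounded
by one has `L¹` norm at most `C`. -/
lemma lintegral_le_of_test (m : Measure Plane) {Ω : Set Plane} (hΩ : IsOpen Ω) {D : Plane → ℝ}
    (hD : Measurable D) (hDi : Integrable D m) (hc : ∀ᵐ x ∂m, x ∉ Ω → D x = 0) {C : ℝ}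
    (h : ∀ φ : Plane → ℝ, ContDiff ℝ 1 φ → HasCompactSupport φ → tsupport φ ⊆ Ω →
      (∀ x, |φ x| ≤ 1) → ∫ x, D x * φ x ∂m ≤ C) :
    ∫⁻ x, ‖D x‖ₑ ∂m ≤ ENNReal.ofReal C := by
  set μ := m.withDensity (fun x => ‖D x‖ₑ) with hμ
  have : IsFiniteMeasure μ := isFiniteMeasure_withDensity hDi.2.ne
  have hmass : ∫⁻ x, ‖D x‖ₑ ∂m = μ univ := by rw [hμ, withDensity_apply _ MeasurableSet.univ]; simp
  -- The sign of `D` (zero where `D` vanishes), to be approximated by test functions in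
  -- `L¹(|D| m)`.
  set G : Plane → ℝ := fun x => D x / |D x| with hG
  have hGm : Measurable G := hD.div (continuous_abs.measurable.comp hD)
  have hG1 : ∀ x, |G x| ≤ 1 := by
    intro x
    rw [hG, abs_div, abs_abs]
    exact div_self_le_one _
  have hGG : ∀ᵐ x ∂μ, G x * G x = 1 := by
    rw [hμ, ae_withDensity_iff hD.enorm]
    refine Eventually.of_forall fun x hx => ?_
    have : D x ≠ 0 := by simpa using hx
    have h2 : |D x| ≠ 0 := abs_ne_zero.2 this
    simp only [hG]
    rw [div_mul_div_comm, ← abs_mul_abs_self (D x), div_self (mul_ne_zero h2 h2)]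
  have hμΩ : μ Ωᶜ = 0 := by
    rw [hμ, withDensity_apply _ hΩ.measurableSet.compl]
    rw [setLIntegral_eq_zero_iff hΩ.measurableSet.compl hD.enorm]
    filter_upwards [hc] with x hx hxΩ
    simp [hx hxΩ]
  rw [hmass, ← ENNReal.ofReal_toReal (measure_ne_top μ univ)]
  refine ENNReal.ofReal_le_ofReal (le_of_forall_pos_le_add fun ε hε => ?_)
  obtain ⟨φ, h1, h2, h3, h4, h5⟩ := exists_test_approx μ hΩ hμΩ hGm.aestronglyMeasurable
    (Eventually.of_forall hG1) hε
  have hφc := h1.continuous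
  have hi1 : Integrable (fun x => G x * φ x) μ := by
    refine Integrable.of_bound (hGm.mul hφc.measurable).aestronglyMeasurable 1
      (Eventually.of_forall fun x => ?_)
    rw [norm_mul]
    exact mul_le_one₀ (hG1 x) (norm_nonneg _) (h4 x)
  have hi2 : Integrable (fun x => ‖G x - φ x‖) μ := by
    refine Integrable.of_bound (hGm.sub hφc.measurable).norm.aestronglyMeasurable 2
      (Eventually.of_forall fun x => ?_)
    rw [norm_norm]
    have := norm_sub_le (G x) (φ x)
    have := h4 x
    have := hG1 x
    rw [← Real.norm_eq_abs] at this
    linarith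
  have heq : ∫ x, G x * φ x ∂μ = ∫ x, D x * φ x ∂m := by
    rw [hμ, integral_withDensity_eq_integral_toReal_smul hD.enorm (by simp)]
    refine integral_congr_ae (Eventually.of_forall fun x => ?_)
    simp only [toReal_enorm, smul_eq_mul, hG, Real.norm_eq_abs]
    by_cases hx : D x = 0
    · simp [hx]
    · have h2 : |D x| ≠ 0 := abs_ne_zero.2 hx
      field_simp
  calc (μ univ).toReal = ∫ _, (1:ℝ) ∂μ := by simp [measureReal_def]
    _ ≤ ∫ x, (G x * φ x + ‖G x - φ x‖) ∂μ := by
        refine integral_mono_ae (integrable_const _) (hi1.add hi2) ?_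
        filter_upwards [hGG] with x hx
        have h6 : G x * (G x - φ x) ≤ ‖G x - φ x‖ := by
          refine (le_abs_self _).trans ?_
          rw [abs_mul, Real.norm_eq_abs]
          exact mul_le_of_le_one_left (abs_nonneg _) (hG1 x)
        have : G x * φ x + ‖G x - φ x‖ ≥ 1 := by nlinarith
        exact this
    _ = ∫ x, D x * φ x ∂m + ∫ x, ‖G x - φ x‖ ∂μ := by rw [integral_add hi1 hi2, heq]
    _ ≤ C + ε := add_le_add (h φ h1 h2 h3 h4) h5

/-! ### BV functions on the disc and integration by parts -/

/-- A `BV` function on the disc of radius `R`, represented by a Borel function on the plane that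
vanishes off the disc. -/
structure NBV (R : ℝ) (u : Plane → ℝ) (ν : Measure Plane) (σ : Plane → Plane) : Prop where
  meas : Measurable u
  int : Integrable u
  zero : ∀ x, x ∉ Metric.ball (0 : Plane) R → u x = 0
  bv : IsBVScalarOn (Metric.ball (0 : Plane) R) u ν σ

/-- Rotation by a right angle. -/
def Jr : Plane →L[ℝ] Plane :=
  LinearMap.toContinuousLinearMap
    { toFun := fun x => !₂[- x 1, x 0]
      map_add' := by intro x y; ext i; fin_cases i <;> simp; ring
      map_smul' := by intro c x; ext i; fin_cases i <;> simp }

lemma Jr_apply (x : Plane) : Jr x = !₂[- x 1, x 0] := rfl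

lemma Jr_Jr (x : Plane) : Jr (Jr x) = -x := by
  ext i; fin_cases i <;> simp [Jr_apply]

lemma inner_plane (x y : Plane) : ⟪x, y⟫ = x 0 * y 0 + x 1 * y 1 := by
  simp [PiLp.inner_apply, Fin.sum_univ_two, mul_comm]

lemma norm_Jr (x : Plane) : ‖Jr x‖ = ‖x‖ := by
  rw [EuclideanSpace.norm_eq, EuclideanSpace.norm_eq]
  congr 1
  simp [Fin.sum_univ_two, Jr_apply, add_comm]

/-- Rotation by the angle `t`. -/
def rot (t : ℝ) : Plane →L[ℝ] Plane := Real.cos t • ContinuousLinearMap.id ℝ Plane + Real.sin t • Jr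

lemma rot_apply (t : ℝ) (x : Plane) : rot t x = Real.cos t • x + Real.sin t • Jr x := rfl

lemma rot_pol (t r θ : ℝ) : rot t (pol r θ) = pol r (θ + t) := by
  ext i; fin_cases i <;> simp [rot_apply, Jr_apply, pol, Real.cos_add, Real.sin_add] <;> ring

lemma rot_Jr (t : ℝ) (x : Plane) : rot t (Jr x) = Jr (rot t x) := by
  simp [rot_apply]

lemma rot_rot (s t : ℝ) (x : Plane) : rot s (rot t x) = rot (s + t) x := by
  simp only [rot_apply, map_add, map_smul, Jr_Jr, Real.cos_add, Real.sin_add]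
  module

lemma rot_neg_rot (t : ℝ) (x : Plane) : rot (-t) (rot t x) = x := by
  rw [rot_rot]; simp [rot_apply]

lemma norm_rot (t : ℝ) (x : Plane) : ‖rot t x‖ = ‖x‖ := by
  have h : ‖rot t x‖ ^ 2 = ‖x‖ ^ 2 := by
    rw [EuclideanSpace.norm_sq_eq, EuclideanSpace.norm_sq_eq]
    simp only [Fin.sum_univ_two, rot_apply, Jr_apply, Real.norm_eq_abs, sq_abs]
    simp
    linear_combination (x 0 ^ 2 + x 1 ^ 2) * Real.sin_sq_add_cos_sq t
  exact (sq_eq_sq₀ (norm_nonneg _) (norm_nonneg _)).1 h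

lemma hasDerivAt_rot (t : ℝ) (x : Plane) : HasDerivAt (fun s => rot s x) (Jr (rot t x)) t := by
  have h := ((Real.hasDerivAt_cos t).smul_const x).add ((Real.hasDerivAt_sin t).smul_const (Jr x))
  refine h.congr_deriv ?_
  simp only [rot_apply, map_add, map_smul, Jr_Jr]
  module

lemma lintegral_rot (t : ℝ) {f : Plane → ℝ≥0∞} (hf : Measurable f) :
    ∫⁻ x, f (rot t x) = ∫⁻ x, f x := by
  rw [lintegral_polar hf 0, lintegral_polar (f := fun x => f (rot t x)) (hf.comp (rot t).continuous.measurable) 0]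
  refine lintegral_congr fun r => ?_
  congr 1
  simp only [rot_pol]
  exact lintegral_translate_period (f := fun θ => f (pol r θ)) Real.two_pi_pos
    (fun θ => by simp only [pol_periodic r θ]) 0 0 t

lemma measurePreserving_rot (t : ℝ) : MeasurePreserving (rot t) := by
  refine ⟨(rot t).continuous.measurable, Measure.ext fun s hs => ?_⟩
  rw [Measure.map_apply (rot t).continuous.measurable hs, ← lintegral_indicator_one hs,
    ← lintegral_rot t (measurable_one.indicator hs),
    ← lintegral_indicator_one ((rot t).continuous.measurable hs)]
  rfl

lemma integral_rot (t : ℝ) {f : Plane → ℝ} (hf : Measurable f) :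
    ∫ x, f (rot t x) = ∫ x, f x := by
  conv_rhs => rw [← (measurePreserving_rot t).map_eq]
  rw [integral_map (rot t).continuous.measurable.aemeasurable hf.aestronglyMeasurable]

lemma NBV.parts {R : ℝ} {u : Plane → ℝ} {ν : Measure Plane} {σ : Plane → Plane}
    (h : NBV R u ν σ) {φ : Plane → ℝ} (h1 : ContDiff ℝ 1 φ) (h2 : HasCompactSupport φ)
    (h3 : tsupport φ ⊆ Metric.ball 0 R) (l : Fin 2) :
    ∫ x, u x * fderiv ℝ φ x (EuclideanSpace.single l (1:ℝ)) = - ∫ x, φ x * σ x l ∂ν := by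
  rw [← h.bv.parts φ h1 h2 h3 l]
  refine (setIntegral_eq_integral_of_forall_compl_eq_zero fun x hx => ?_).symm
  rw [h.zero x hx, zero_mul]

lemma NBV.ae_abs_le {R : ℝ} {u : Plane → ℝ} {ν : Measure Plane} {σ : Plane → Plane}
    (h : NBV R u ν σ) : ∀ᵐ x ∂ν, ∀ l, |σ x l| ≤ 1 := by
  filter_upwards [h.bv.unit] with x hx l
  rw [← hx]
  exact PiLp.norm_apply_le (σ x) l

lemma NBV.ae_mem {R : ℝ} {u : Plane → ℝ} {ν : Measure Plane} {σ : Plane → Plane}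
    (h : NBV R u ν σ) : ∀ᵐ x ∂ν, x ∈ Metric.ball (0:Plane) R := by
  have := h.bv.concentrated
  rwa [ae_iff]

lemma measurable_coord {σ : Plane → Plane} (h : Measurable σ) (l : Fin 2) :
    Measurable fun x => σ x l := by
  have : Continuous fun y : Plane => y l := by fun_prop
  exact this.measurable.comp h

lemma NBV.integrable_mul {R : ℝ} {u : Plane → ℝ} {ν : Measure Plane} {σ : Plane → Plane}
    (h : NBV R u ν σ) {φ : Plane → ℝ} (h1 : Continuous φ) (h2 : HasCompactSupport φ) (l : Fin 2) :
    Integrable (fun x => φ x * σ x l) ν := by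
  have : IsFiniteMeasure ν := ⟨h.bv.finite⟩
  obtain ⟨C, hC⟩ := h2.exists_bound_of_continuous h1
  refine Integrable.of_bound (h1.measurable.mul (measurable_coord h.bv.meas l)).aestronglyMeasurable C ?_
  filter_upwards [h.ae_abs_le] with x hx
  rw [norm_mul]
  exact (mul_le_of_le_one_right (norm_nonneg _) (hx l)).trans (hC x)

lemma NBV.integrable_u_mul {R : ℝ} {u : Plane → ℝ} {ν : Measure Plane} {σ : Plane → Plane}
    (h : NBV R u ν σ) {φ : Plane → ℝ} (h1 : Continuous φ) (h2 : HasCompactSupport φ) :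
    Integrable (fun x => u x * φ x) := by
  obtain ⟨C, hC⟩ := h2.exists_bound_of_continuous h1
  exact h.int.mul_bdd h1.aestronglyMeasurable (c := C) (Eventually.of_forall hC)

lemma compactSupport_fderiv_apply {φ : Plane → ℝ} (h2 : HasCompactSupport φ)
    (v : Plane → Plane) : HasCompactSupport fun x => fderiv ℝ φ x (v x) := by
  refine (h2.fderiv (𝕜 := ℝ)).mono fun x hx => ?_
  intro h0
  exact hx (by simp [h0])

lemma continuous_fderiv_apply' {φ : Plane → ℝ} (h1 : ContDiff ℝ 1 φ)
    {v : Plane → Plane} (hv : Continuous v) : Continuous fun x => fderiv ℝ φ x (v x) :=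
  (h1.continuous_fderiv one_ne_zero).clm_apply hv

/-- Integration by parts against a test function times a linear function. -/
lemma NBV.parts_mul {R : ℝ} {u : Plane → ℝ} {ν : Measure Plane} {σ : Plane → Plane}
    (h : NBV R u ν σ) {φ : Plane → ℝ} (h1 : ContDiff ℝ 1 φ) (h2 : HasCompactSupport φ)
    (h3 : tsupport φ ⊆ Metric.ball 0 R) (l : Fin 2) (L : Plane →L[ℝ] ℝ) :
    ∫ x, u x * (fderiv ℝ φ x (EuclideanSpace.single l (1:ℝ)) * L x
        + φ x * L (EuclideanSpace.single l (1:ℝ)))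
      = - ∫ x, (φ x * L x) * σ x l ∂ν := by
  rw [← h.parts (h1.mul L.contDiff) h2.mul_right ((tsupport_mul_subset_left).trans h3) l]
  congr 1 with x
  have hd : HasFDerivAt (fun y => φ y * L y) (φ x • L + L x • fderiv ℝ φ x) x :=
    ((h1.differentiable one_ne_zero x).hasFDerivAt).mul L.hasFDerivAt
  rw [hd.fderiv]
  simp
  ring_nf
  simp

lemma fderiv_plane (L : Plane →L[ℝ] ℝ) (v : Plane) :
    L v = L (EuclideanSpace.single 0 (1:ℝ)) * v 0 + L (EuclideanSpace.single 1 (1:ℝ)) * v 1 := by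
  have : v = v 0 • EuclideanSpace.single 0 (1:ℝ) + v 1 • EuclideanSpace.single 1 (1:ℝ) := by
    ext i; fin_cases i <;> simp
  conv_lhs => rw [this]
  simp [mul_comm]

/-- Integration by parts against the angular field `φ Jx`. -/
lemma NBV.parts_J {R : ℝ} {u : Plane → ℝ} {ν : Measure Plane} {σ : Plane → Plane}
    (h : NBV R u ν σ) {φ : Plane → ℝ} (h1 : ContDiff ℝ 1 φ) (h2 : HasCompactSupport φ)
    (h3 : tsupport φ ⊆ Metric.ball 0 R) :
    ∫ x, u x * fderiv ℝ φ x (Jr x) = - ∫ x, ⟪Jr x, σ x⟫ * φ x ∂ν := by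
  have e0 := h.parts_mul h1 h2 h3 0 (-(EuclideanSpace.proj 1 : Plane →L[ℝ] ℝ))
  have e1 := h.parts_mul h1 h2 h3 1 (EuclideanSpace.proj 0 : Plane →L[ℝ] ℝ)
  simp at e0 e1
  have i0 : Integrable (fun x : Plane => φ x * x 1 * σ x 0) ν :=
    h.integrable_mul (h1.continuous.mul (by fun_prop)) h2.mul_right 0
  have i1 : Integrable (fun x : Plane => φ x * x 0 * σ x 1) ν :=
    h.integrable_mul (h1.continuous.mul (by fun_prop)) h2.mul_right 1
  have j0 : Integrable (fun x : Plane => u x * (fderiv ℝ φ x (EuclideanSpace.single 0 1) * x 1)) :=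
    h.integrable_u_mul ((continuous_fderiv_apply' h1 continuous_const).mul (by fun_prop))
      (compactSupport_fderiv_apply h2 _).mul_right
  have j1 : Integrable (fun x : Plane => u x * (fderiv ℝ φ x (EuclideanSpace.single 1 1) * x 0)) :=
    h.integrable_u_mul ((continuous_fderiv_apply' h1 continuous_const).mul (by fun_prop))
      (compactSupport_fderiv_apply h2 _).mul_right
  rw [integral_neg, integral_neg] at e0
  calc ∫ x, u x * fderiv ℝ φ x (Jr x)
      = ∫ x, (u x * (fderiv ℝ φ x (EuclideanSpace.single 1 1) * x 0)
          - u x * (fderiv ℝ φ x (EuclideanSpace.single 0 1) * x 1)) := by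
        congr 1 with x
        rw [fderiv_plane]; simp [Jr_apply]; ring
    _ = - ∫ x, (φ x * x 0 * σ x 1 - φ x * x 1 * σ x 0) ∂ν := by
        rw [integral_sub j1 j0, integral_sub i1 i0, e1]
        linarith
    _ = _ := by
        congr 2 with x
        rw [inner_plane]; simp [Jr_apply]; ring

/-- Integration by parts against the radial field `φ x`. -/
lemma NBV.parts_rad {R : ℝ} {u : Plane → ℝ} {ν : Measure Plane} {σ : Plane → Plane}
    (h : NBV R u ν σ) {φ : Plane → ℝ} (h1 : ContDiff ℝ 1 φ) (h2 : HasCompactSupport φ)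
    (h3 : tsupport φ ⊆ Metric.ball 0 R) :
    ∫ x, u x * (fderiv ℝ φ x x + 2 * φ x) = - ∫ x, ⟪x, σ x⟫ * φ x ∂ν := by
  have e0 := h.parts_mul h1 h2 h3 0 (EuclideanSpace.proj 0 : Plane →L[ℝ] ℝ)
  have e1 := h.parts_mul h1 h2 h3 1 (EuclideanSpace.proj 1 : Plane →L[ℝ] ℝ)
  simp at e0 e1
  have i0 : Integrable (fun x : Plane => φ x * x 0 * σ x 0) ν :=
    h.integrable_mul (h1.continuous.mul (by fun_prop)) h2.mul_right 0
  have i1 : Integrable (fun x : Plane => φ x * x 1 * σ x 1) ν :=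
    h.integrable_mul (h1.continuous.mul (by fun_prop)) h2.mul_right 1
  have j0 : Integrable (fun x : Plane => u x * (fderiv ℝ φ x (EuclideanSpace.single 0 1) * x 0 + φ x)) :=
    h.integrable_u_mul (((continuous_fderiv_apply' h1 continuous_const).mul (by fun_prop)).add h1.continuous)
      ((compactSupport_fderiv_apply h2 _).mul_right.add h2)
  have j1 : Integrable (fun x : Plane => u x * (fderiv ℝ φ x (EuclideanSpace.single 1 1) * x 1 + φ x)) :=
    h.integrable_u_mul (((continuous_fderiv_apply' h1 continuous_const).mul (by fun_prop)).add h1.continuous)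
      ((compactSupport_fderiv_apply h2 _).mul_right.add h2)
  calc ∫ x, u x * (fderiv ℝ φ x x + 2 * φ x)
      = ∫ x, (u x * (fderiv ℝ φ x (EuclideanSpace.single 0 1) * x 0 + φ x)
          + u x * (fderiv ℝ φ x (EuclideanSpace.single 1 1) * x 1 + φ x)) := by
        congr 1 with x
        rw [fderiv_plane]; ring
    _ = - ∫ x, (φ x * x 0 * σ x 0 + φ x * x 1 * σ x 1) ∂ν := by
        rw [integral_add j0 j1, integral_add i0 i1, e0, e1]
        ring
    _ = _ := by
        congr 2 with x
        rw [inner_plane]; ring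

/-! ### Slices and the angular mass -/

/-- The restriction of `u` to the circle of radius `r`, as a periodic function of the angle. -/
def sl (u : Plane → ℝ) (r θ : ℝ) : ℝ := u (pol r θ)

lemma sl_meas2 {u : Plane → ℝ} (hu : Measurable u) : Measurable fun p : ℝ × ℝ => sl u p.1 p.2 :=
  hu.comp pol_continuous.measurable

lemma sl_meas {u : Plane → ℝ} (hu : Measurable u) (r : ℝ) : Measurable (sl u r) :=
  (sl_meas2 hu).comp measurable_prodMk_left

lemma sl_per (u : Plane → ℝ) (r : ℝ) : Function.Periodic (sl u r) (2 * Real.pi) := fun θ => by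
  simp only [sl, pol_periodic r θ]

lemma ae_perL1 {u : Plane → ℝ} (hu : Measurable u) (hi : Integrable u) :
    ∀ᵐ r ∂volume.restrict (Ioi (0:ℝ)), PerL1 (sl u r) := by
  have h1 := hi.2
  have hm : Measurable fun r : ℝ => ∫⁻ θ in Ioc 0 (0 + 2 * Real.pi), ‖u (pol r θ)‖ₑ :=
    Measurable.lintegral_prod_right' (f := fun p : ℝ × ℝ => ‖u (pol p.1 p.2)‖ₑ) (sl_meas2 hu).enorm
  rw [HasFiniteIntegral, lintegral_polar hu.enorm 0] at h1
  have h2 := ae_lt_top (by fun_prop) h1.ne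
  filter_upwards [h2, ae_restrict_mem measurableSet_Ioi] with r hr hr0
  refine ⟨sl_meas hu r, sl_per u r, ?_⟩
  rw [zero_add] at hr
  by_contra hcon
  rw [not_lt_top_iff] at hcon
  unfold sl at hcon
  rw [hcon, ENNReal.mul_top (by simpa using hr0)] at hr
  exact lt_irrefl _ hr

lemma measurable_tinc {u : Plane → ℝ} (hu : Measurable u) (h : ℝ) :
    Measurable fun r => tinc (sl u r) h := by
  refine Measurable.lintegral_prod_right' (f := fun p : ℝ × ℝ => ‖sl u p.1 (p.2 + h) - sl u p.1 p.2‖ₑ) ?_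
  have h1 := sl_meas2 hu
  exact ((h1.comp (measurable_fst.prodMk (measurable_snd.add_const h))).sub h1).enorm

lemma measurable_evar {u : Plane → ℝ} (hu : Measurable u) : Measurable fun r => evar (sl u r) :=
  Measurable.liminf fun _ => (measurable_tinc hu _).const_mul _

lemma measurable_ldist {u v : Plane → ℝ} (hu : Measurable u) (hv : Measurable v) :
    Measurable fun r => ldist (sl u r) (sl v r) :=
  Measurable.lintegral_prod_right' (f := fun p : ℝ × ℝ => ‖sl u p.1 p.2 - sl v p.1 p.2‖ₑ)
    ((sl_meas2 hu).sub (sl_meas2 hv)).enorm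

lemma measurable_ldist_const {u : Plane → ℝ} (hu : Measurable u) {g : ℝ → ℝ} (hg : Measurable g) :
    Measurable fun r => ldist (sl u r) g :=
  Measurable.lintegral_prod_right' (f := fun p : ℝ × ℝ => ‖sl u p.1 p.2 - g p.2‖ₑ)
    ((sl_meas2 hu).sub (hg.comp measurable_snd)).enorm

lemma lintegral_ldist {u v : Plane → ℝ} (hu : Measurable u) (hv : Measurable v) :
    ∫⁻ x, ‖u x - v x‖ₑ = ∫⁻ r in Ioi 0, ENNReal.ofReal r * ldist (sl u r) (sl v r) := by
  rw [lintegral_polar (f := fun x => ‖u x - v x‖ₑ) (hu.sub hv).enorm 0, zero_add]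
  rfl

lemma lintegral_inc {u : Plane → ℝ} (hu : Measurable u) (h : ℝ) :
    ∫⁻ x, ‖u (rot h x) - u x‖ₑ = ∫⁻ r in Ioi 0, ENNReal.ofReal r * tinc (sl u r) h := by
  rw [lintegral_polar (f := fun x => ‖u (rot h x) - u x‖ₑ)
    ((hu.comp (rot h).continuous.measurable).sub hu).enorm 0, zero_add]
  simp only [rot_pol]
  rfl

/-- The total mass of the angular part of the derivative. -/
def angMass (ν : Measure Plane) (σ : Plane → Plane) : ℝ≥0∞ := ∫⁻ x, ‖⟪Jr x, σ x⟫‖ₑ ∂ν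

section
variable {R : ℝ} {u : Plane → ℝ} {ν : Measure Plane} {σ : Plane → Plane}

lemma NBV.abs_inner_le (h : NBV R u ν σ) : ∀ᵐ x ∂ν, ‖⟪Jr x, σ x⟫‖ ≤ R := by
  filter_upwards [h.bv.unit, h.ae_mem] with x hx hxR
  refine (norm_inner_le_norm _ _).trans ?_
  rw [hx, norm_Jr, mul_one]
  exact (mem_ball_zero_iff.1 hxR).le

lemma measurable_ang (hσ : Measurable σ) : Measurable fun x => ⟪Jr x, σ x⟫ :=
  Jr.continuous.measurable.inner hσ

lemma NBV.integrable_ang (h : NBV R u ν σ) : Integrable (fun x => ⟪Jr x, σ x⟫) ν := by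
  have : IsFiniteMeasure ν := ⟨h.bv.finite⟩
  exact Integrable.of_bound (measurable_ang h.bv.meas).aestronglyMeasurable R h.abs_inner_le

lemma NBV.angMass_lt_top (h : NBV R u ν σ) : angMass ν σ < ⊤ := h.integrable_ang.2

lemma tsupport_rot_subset {φ : Plane → ℝ} (h3 : tsupport φ ⊆ Metric.ball 0 R) (t : ℝ) :
    tsupport (fun x => φ (rot t x)) ⊆ Metric.ball 0 R := by
  refine (tsupport_comp_subset_preimage φ (rot t).continuous).trans fun x hx => ?_
  have := h3 hx
  rw [mem_ball_zero_iff, norm_rot] at this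
  exact mem_ball_zero_iff.2 this

lemma hasCompactSupport_rot {φ : Plane → ℝ} (h3 : tsupport φ ⊆ Metric.ball 0 R) (t : ℝ) :
    HasCompactSupport (fun x => φ (rot t x)) :=
  HasCompactSupport.of_support_subset_isCompact (isCompact_closedBall (0:Plane) R)
    ((subset_tsupport _).trans ((tsupport_rot_subset h3 t).trans Metric.ball_subset_closedBall))

/-- The derivative, in the angle, of the pairing of `u` with a rotated test function is the
pairing of that test function with the angular derivative of `u`. -/
lemma NBV.hasDerivAt_rot (h : NBV R u ν σ) {φ : Plane → ℝ} (h1 : ContDiff ℝ 1 φ)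
    (h2 : HasCompactSupport φ) (h3 : tsupport φ ⊆ Metric.ball 0 R) (t : ℝ) :
    HasDerivAt (fun t => ∫ x, u x * φ (rot (-t) x))
      (∫ x, ⟪Jr x, σ x⟫ * φ (rot (-t) x) ∂ν) t := by
  obtain ⟨C, hC⟩ := (compactSupport_fderiv_apply h2 Jr).exists_bound_of_continuous
    (continuous_fderiv_apply' h1 Jr.continuous)
  have hd : ∀ x t, HasDerivAt (fun t => u x * φ (rot (-t) x))
      (u x * (-(fderiv ℝ φ (rot (-t) x) (Jr (rot (-t) x))))) t := by
    intro x t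
    refine HasDerivAt.const_mul _ ?_
    have e1 : HasDerivAt (fun t => rot (-t) x) (-(Jr (rot (-t) x))) t := by
      have := (_root_.hasDerivAt_rot (-t) x).scomp t (hasDerivAt_neg t)
      refine (this.congr_deriv ?_ : _)
      simp
    have e2 := ((h1.differentiable one_ne_zero (rot (-t) x)).hasFDerivAt).comp_hasDerivAt t e1
    refine (e2.congr_deriv ?_ : _)
    simp
  have hm : ∀ t, AEStronglyMeasurable (fun x => u x * φ (rot (-t) x)) volume := fun t =>
    (h.meas.mul (h1.continuous.comp (rot (-t)).continuous).measurable).aestronglyMeasurable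
  have key := (hasDerivAt_integral_of_dominated_loc_of_deriv_le (μ := (volume : Measure Plane))
    (F := fun t x => u x * φ (rot (-t) x)) (x₀ := t) (s := univ)
    (F' := fun t x => u x * (-(fderiv ℝ φ (rot (-t) x) (Jr (rot (-t) x)))))
    (bound := fun x => |u x| * C) univ_mem (Eventually.of_forall hm)
    (h.integrable_u_mul (h1.continuous.comp (rot (-t)).continuous) (hasCompactSupport_rot h3 _)) ?_ ?_
    (h.int.abs.mul_const C) (Eventually.of_forall fun x t _ => hd x t)).2
  · refine key.congr_deriv ?_
    have hp := h.parts_J (φ := fun x => φ (rot (-t) x)) (h1.comp (rot (-t)).contDiff)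
      (hasCompactSupport_rot h3 _) (tsupport_rot_subset h3 _)
    rw [← neg_eq_iff_eq_neg] at hp
    rw [← hp, ← integral_neg]
    congr 1 with x
    have e2 := ((h1.differentiable one_ne_zero (rot (-t) x)).hasFDerivAt).comp x
      (rot (-t)).hasFDerivAt
    have e3 : fderiv ℝ (fun x => φ (rot (-t) x)) x = (fderiv ℝ φ (rot (-t) x)).comp (rot (-t)) :=
      e2.fderiv
    rw [e3, ContinuousLinearMap.comp_apply, rot_Jr]
    ring
  · exact (h.meas.mul ((continuous_fderiv_apply' h1 Jr.continuous).comp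
      (rot (-t)).continuous).neg.measurable).aestronglyMeasurable
  · refine Eventually.of_forall fun x t _ => ?_
    rw [norm_mul, norm_neg, Real.norm_eq_abs]
    exact mul_le_mul_of_nonneg_left (hC _) (abs_nonneg _)

/-- Moving the rotation from `u` to the test function. -/
lemma NBV.rot_sub (h : NBV R u ν σ) {φ : Plane → ℝ} (h1 : ContDiff ℝ 1 φ)
    (h2 : HasCompactSupport φ) (h3 : tsupport φ ⊆ Metric.ball 0 R) (t : ℝ) :
    ∫ x, (u (rot t x) - u x) * φ x
      = (∫ x, u x * φ (rot (-t) x)) - ∫ x, u x * φ (rot (-0) x) := by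
  have e1 : ∫ x, u x * φ (rot (-t) x) = ∫ x, u (rot t x) * φ x := by
    have := integral_rot t (f := fun x => u x * φ (rot (-t) x))
      (h.meas.mul (h1.continuous.comp (rot (-t)).continuous).measurable)
    rw [← this]
    simp only [rot_neg_rot]
  have e0 : ∀ x, rot (-0) x = x := fun x => by simp [rot_apply]
  simp only [e0]
  have hi : Integrable fun x => u (rot t x) * φ x := by
    obtain ⟨C, hC⟩ := h2.exists_bound_of_continuous h1.continuous
    exact ((measurePreserving_rot t).integrable_comp_of_integrable h.int).mul_bdd
      h1.continuous.aestronglyMeasurable (c := C) (Eventually.of_forall hC)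
  rw [e1, ← integral_sub hi (h.integrable_u_mul h1.continuous h2)]
  congr 1 with x
  ring

/-- Rotating `u` by the angle `t` changes it in `L¹` by at most `t` times the angular mass. -/
lemma NBV.lintegral_rot_le (h : NBV R u ν σ) {t : ℝ} (ht : 0 < t) :
    ∫⁻ x, ‖u (rot t x) - u x‖ₑ ≤ ENNReal.ofReal t * angMass ν σ := by
  have : IsFiniteMeasure ν := ⟨h.bv.finite⟩
  set M := (angMass ν σ).toReal with hM
  have hMe : ∫ x, ‖⟪Jr x, σ x⟫‖ ∂ν = M := by
    rw [integral_norm_eq_lintegral_enorm (measurable_ang h.bv.meas).aestronglyMeasurable]; rfl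
  rw [← ENNReal.ofReal_toReal h.angMass_lt_top.ne, ← ENNReal.ofReal_mul ht.le]
  refine lintegral_le_of_test volume (Metric.isOpen_ball (x := (0:Plane)) (ε := R))
    ((h.meas.comp (rot t).continuous.measurable).sub h.meas)
    (((measurePreserving_rot t).integrable_comp_of_integrable h.int).sub h.int)
    (Eventually.of_forall fun x hx => ?_) ?_
  · have : rot t x ∉ Metric.ball (0:Plane) R := by
      rw [mem_ball_zero_iff] at hx ⊢
      rwa [norm_rot]
    simp [h.zero x hx, h.zero _ this]
  · intro φ h1 h2 h3 h4
    simp only [Pi.sub_apply, Function.comp]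
    rw [h.rot_sub h1 h2 h3]
    refine (le_abs_self _).trans ?_
    have := (convex_univ (𝕜 := ℝ) (E := ℝ)).norm_image_sub_le_of_norm_hasDerivWithin_le (x := 0) (y := t)
      (C := M) (fun s _ => (h.hasDerivAt_rot h1 h2 h3 s).hasDerivWithinAt) (fun s _ => ?_)
      (mem_univ _) (mem_univ _)
    · rw [sub_zero, Real.norm_of_nonneg ht.le, mul_comm M] at this
      exact this
    · rw [← hMe]
      refine norm_integral_le_of_norm_le h.integrable_ang.norm (Eventually.of_forall fun x => ?_)
      rw [norm_mul]
      exact mul_le_of_le_one_right (norm_nonneg _) (h4 _)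

lemma NBV.lintegral_evar_le (h : NBV R u ν σ) :
    ∫⁻ r in Ioi 0, ENNReal.ofReal r * evar (sl u r) ≤ angMass ν σ := by
  have e1 : ∀ r : ℝ, ENNReal.ofReal r * evar (sl u r) = liminf (fun n : ℕ => ENNReal.ofReal r *
      (((n : ℝ≥0∞) + 1) * tinc (sl u r) (1 / ((n : ℝ) + 1)))) atTop := fun r => by
    rw [ENNReal.liminf_const_mul_of_ne_top ENNReal.ofReal_ne_top]; rfl
  simp_rw [e1]
  refine (lintegral_liminf_le fun n => ?_).trans ?_
  · have := measurable_tinc h.meas (1 / ((n : ℝ) + 1))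
    fun_prop
  · refine liminf_le_of_frequently_le' (Frequently.of_forall fun n => ?_)
    have hm := measurable_tinc h.meas (1 / ((n : ℝ) + 1))
    have hn : (0:ℝ) < (n:ℝ) + 1 := by positivity
    have e2 := h.lintegral_rot_le (t := 1 / ((n : ℝ) + 1)) (by positivity)
    rw [lintegral_inc h.meas] at e2
    have e3 : (n : ℝ≥0∞) + 1 = ENNReal.ofReal ((n:ℝ) + 1) := by
      rw [ENNReal.ofReal_add (by positivity) zero_le_one]; simp
    calc _ = ((n : ℝ≥0∞) + 1) * ∫⁻ r in Ioi 0, ENNReal.ofReal r * tinc (sl u r) (1 / ((n : ℝ) + 1)) := by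
          rw [← lintegral_const_mul _ (by fun_prop)]
          refine lintegral_congr fun r => ?_
          ring
      _ ≤ ((n : ℝ≥0∞) + 1) * (ENNReal.ofReal (1 / ((n : ℝ) + 1)) * angMass ν σ) := by gcongr
      _ = angMass ν σ := by
          rw [← mul_assoc, e3, ← ENNReal.ofReal_mul hn.le, mul_one_div_cancel hn.ne']
          simp

/-- The angular derivative is the derivative of rotations at angle zero, and the `L¹` increments
under rotation are controlled slice by slice. -/
lemma NBV.angMass_le (h : NBV R u ν σ) :
    angMass ν σ ≤ ∫⁻ r in Ioi 0, ENNReal.ofReal r * evar (sl u r) := by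
  set E := ∫⁻ r in Ioi 0, ENNReal.ofReal r * evar (sl u r) with hE
  have hEt : E < ⊤ := h.lintegral_evar_le.trans_lt h.angMass_lt_top
  have hinc : ∀ t, 0 < t → ∫⁻ x, ‖u (rot t x) - u x‖ₑ ≤ ENNReal.ofReal t * E := by
    intro t ht
    rw [lintegral_inc h.meas, hE, ← lintegral_const_mul']
    · refine lintegral_mono_ae ?_
      filter_upwards [ae_perL1 h.meas h.int] with r hr
      calc _ ≤ ENNReal.ofReal r * (ENNReal.ofReal t * evar (sl u r)) := by gcongr; exact tinc_le hr ht
        _ = _ := by ring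
    · exact ENNReal.ofReal_ne_top
  rw [← ENNReal.ofReal_toReal hEt.ne]
  refine lintegral_le_of_test ν (Metric.isOpen_ball (x := (0:Plane)) (ε := R))
    (measurable_ang h.bv.meas) h.integrable_ang ?_ ?_
  · filter_upwards [h.ae_mem] with x hx hx2 using absurd hx hx2
  · intro φ h1 h2 h3 h4
    have hd := h.hasDerivAt_rot h1 h2 h3 0
    have e0 : ∀ x, rot (-0) x = x := fun x => by simp [rot_apply]
    have hs := hd.tendsto_slope_zero_right
    refine le_of_tendsto (a := ∫ x, ⟪Jr x, σ x⟫ * φ x ∂ν) (b := E.toReal) (by simpa only [e0] using hs) ?_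
    filter_upwards [self_mem_nhdsWithin] with t ht
    have ht : 0 < t := ht
    simp only [zero_add, smul_eq_mul]
    rw [inv_mul_le_iff₀ ht]
    have := h.rot_sub h1 h2 h3 t
    simp only [e0] at this
    rw [← this]
    refine (le_abs_self _).trans ?_
    rw [← Real.norm_eq_abs]
    refine (norm_integral_le_integral_norm _).trans ?_
    have hdi : Integrable fun x => u (rot t x) - u x :=
      ((measurePreserving_rot t).integrable_comp_of_integrable h.int).sub h.int
    calc ∫ x, ‖(u (rot t x) - u x) * φ x‖ ≤ ∫ x, ‖u (rot t x) - u x‖ := by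
          refine integral_mono_of_nonneg (Eventually.of_forall fun _ => norm_nonneg _) hdi.norm
            (Eventually.of_forall fun x => ?_)
          simp only [norm_mul]
          exact mul_le_of_le_one_right (norm_nonneg _) (h4 x)
      _ = (∫⁻ x, ‖u (rot t x) - u x‖ₑ).toReal := integral_norm_eq_lintegral_enorm hdi.1
      _ ≤ (ENNReal.ofReal t * E).toReal :=
          ENNReal.toReal_mono (ENNReal.mul_ne_top ENNReal.ofReal_ne_top hEt.ne) (hinc t ht)
      _ = t * E.toReal := by rw [ENNReal.toReal_mul, ENNReal.toReal_ofReal ht.le]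

/-- Polar formula: the angular mass of the derivative is the integral of the variations of the
slices. -/
lemma NBV.lintegral_evar (h : NBV R u ν σ) :
    ∫⁻ r in Ioi 0, ENNReal.ofReal r * evar (sl u r) = angMass ν σ :=
  le_antisymm h.lintegral_evar_le h.angMass_le

end

/-! ### Strict convergence and the angular mass -/

section
variable {R : ℝ} {u : Plane → ℝ} {ν : Measure Plane} {σ : Plane → Plane}
  {ui : ℕ → Plane → ℝ} {νi : ℕ → Measure Plane} {σi : ℕ → Plane → Plane}

lemma tendsto_test_scalar (hi : ∀ i, NBV R (ui i) (νi i) (σi i)) (h : NBV R u ν σ)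
    (hL : Tendsto (fun i => ∫⁻ x, ‖ui i x - u x‖ₑ) atTop (𝓝 0))
    {φ : Plane → ℝ} (h1 : ContDiff ℝ 1 φ) (h2 : HasCompactSupport φ)
    (h3 : tsupport φ ⊆ Metric.ball 0 R) (l : Fin 2) :
    Tendsto (fun i => ∫ x, φ x * σi i x l ∂νi i) atTop (𝓝 (∫ x, φ x * σ x l ∂ν)) := by
  have e : ∀ i, ∫ x, φ x * σi i x l ∂νi i
      = - ∫ x, ui i x * fderiv ℝ φ x (EuclideanSpace.single l (1:ℝ)) := fun i => by
    rw [(hi i).parts h1 h2 h3 l, neg_neg]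
  have e' : ∫ x, φ x * σ x l ∂ν = - ∫ x, u x * fderiv ℝ φ x (EuclideanSpace.single l (1:ℝ)) := by
    rw [h.parts h1 h2 h3 l, neg_neg]
  simp_rw [e, e']
  refine Tendsto.neg ?_
  have hc := continuous_fderiv_apply' h1 (v := fun _ => EuclideanSpace.single l (1:ℝ)) continuous_const
  have hs := compactSupport_fderiv_apply h2 (fun _ => EuclideanSpace.single l (1:ℝ))
  obtain ⟨C, hC⟩ := hs.exists_bound_of_continuous hc
  refine tendsto_integral_of_L1 _ (h.integrable_u_mul hc hs).1
    (Eventually.of_forall fun i => (hi i).integrable_u_mul hc hs) ?_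
  have hlim := ENNReal.Tendsto.const_mul (a := ENNReal.ofReal C) hL (Or.inr ENNReal.ofReal_ne_top)
  rw [mul_zero] at hlim
  refine tendsto_of_tendsto_of_tendsto_of_le_of_le tendsto_const_nhds hlim (fun _ => zero_le) fun i => ?_
  rw [← lintegral_const_mul' _ _ ENNReal.ofReal_ne_top]
  refine lintegral_mono fun x => ?_
  rw [← sub_mul, enorm_mul, mul_comm]
  gcongr
  rw [← ofReal_norm]
  exact ENNReal.ofReal_le_ofReal (hC x)

lemma NBV.integrable_inner (h : NBV R u ν σ) {φ : Plane → Plane} (h1 : Continuous φ)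
    (h2 : HasCompactSupport φ) : Integrable (fun x => ⟪φ x, σ x⟫) ν := by
  have c0 : ∀ l, Integrable (fun x => φ x l * σ x l) ν := fun l =>
    h.integrable_mul (φ := fun x => φ x l) (by fun_prop) (h2.comp_left (g := fun y : Plane => y l) rfl) l
  refine ((c0 0).add (c0 1)).congr (Eventually.of_forall fun x => ?_)
  simp [inner_plane]

/-- Weak convergence of the derivatives, tested against `C¹` fields. -/
lemma tendsto_test (hi : ∀ i, NBV R (ui i) (νi i) (σi i)) (h : NBV R u ν σ)
    (hL : Tendsto (fun i => ∫⁻ x, ‖ui i x - u x‖ₑ) atTop (𝓝 0))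
    {φ : Plane → Plane} (h1 : ContDiff ℝ 1 φ) (h2 : HasCompactSupport φ)
    (h3 : tsupport φ ⊆ Metric.ball 0 R) :
    Tendsto (fun i => ∫ x, ⟪φ x, σi i x⟫ ∂νi i) atTop (𝓝 (∫ x, ⟪φ x, σ x⟫ ∂ν)) := by
  have c1 : ∀ l, ContDiff ℝ 1 fun x => φ x l := fun l => by
    exact (EuclideanSpace.proj l : Plane →L[ℝ] ℝ).contDiff.comp h1
  have c2 : ∀ l, HasCompactSupport fun x => φ x l := fun l =>
    h2.comp_left (g := fun y : Plane => y l) rfl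
  have c3 : ∀ l, tsupport (fun x => φ x l) ⊆ Metric.ball 0 R := fun l => by
    refine (closure_mono ?_).trans h3
    intro x hx h0
    exact hx (by simp [h0])
  have e : ∀ {v : Plane → ℝ} {μ : Measure Plane} {τ : Plane → Plane}, NBV R v μ τ →
      ∫ x, ⟪φ x, τ x⟫ ∂μ = ∫ x, φ x 0 * τ x 0 ∂μ + ∫ x, φ x 1 * τ x 1 ∂μ := by
    intro v μ τ hv
    rw [← integral_add (hv.integrable_mul (c1 0).continuous (c2 0) 0)
      (hv.integrable_mul (c1 1).continuous (c2 1) 1)]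
    simp_rw [inner_plane]
  rw [e h]
  simp_rw [fun i => e (hi i)]
  exact (tendsto_test_scalar hi h hL (c1 0) (c2 0) (c3 0) 0).add
    (tendsto_test_scalar hi h hL (c1 1) (c2 1) (c3 1) 1)

lemma ang_diff {x : Plane} (hx : x ∈ Metric.ball (0:Plane) R) (y p : Plane) :
    |⟪Jr x, y⟫| ≤ |⟪Jr x, p⟫| + R * ‖y - p‖ ∧ |⟪Jr x, p⟫| ≤ |⟪Jr x, y⟫| + R * ‖y - p‖ := by
  have hxR := (mem_ball_zero_iff.1 hx).le
  have e1 : |⟪Jr x, y⟫ - ⟪Jr x, p⟫| ≤ R * ‖y - p‖ := by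
    rw [← inner_sub_right]
    refine (abs_real_inner_le_norm _ _).trans ?_
    rw [norm_Jr]
    gcongr
  have e2 := abs_sub_abs_le_abs_sub ⟪Jr x, y⟫ ⟪Jr x, p⟫
  have e3 := abs_sub_abs_le_abs_sub ⟪Jr x, p⟫ ⟪Jr x, y⟫
  rw [abs_sub_comm] at e3
  constructor <;> linarith

/-- For a unit vector `y`, `|⟪Jx, y⟫|` is bounded by a linear function of `y` plus a multiple of
`1 - ⟪p, y⟫`, which controls the distance from `y` to `p`. -/
lemma ang_pointwise (hR : 0 < R) {x y p : Plane} {g η : ℝ} (hx : x ∈ Metric.ball (0:Plane) R)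
    (hy : ‖y‖ = 1) (hp : ‖p‖ ≤ 1) (hη : 0 < η) (hg : |⟪Jr x, p⟫| ≤ g) (hg2 : g ≤ η + R) :
    |⟪Jr x, y⟫| ≤ ⟪g • p, y⟫ + (η + R + 2 * R / η) * (1 - ⟪p, y⟫) + R * η := by
  have e2 := (ang_diff hx y p).1
  rw [inner_smul_left]
  simp only [conj_trivial]
  have hsq : ‖y - p‖ ^ 2 = 1 - 2 * ⟪p, y⟫ + ‖p‖ ^ 2 := by
    rw [norm_sub_sq_real, hy, real_inner_comm]; ring
  have hn := norm_nonneg (y - p)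
  have hn2 := norm_nonneg p
  generalize ⟪p, y⟫ = b at *
  generalize ‖y - p‖ = t at *
  generalize ‖p‖ = q at *
  generalize |⟪Jr x, y⟫| = A at *
  generalize |⟪Jr x, p⟫| = B at *
  have e3 : t ^ 2 ≤ 2 * (1 - b) := by nlinarith
  have e4 : t ≤ η + t ^ 2 / η := by
    rw [← sub_le_iff_le_add', le_div_iff₀ hη]
    nlinarith [sq_nonneg (t - η)]
  have e5 : t ^ 2 / η ≤ 2 / η * (1 - b) := by
    rw [div_mul_eq_mul_div]
    gcongr
  have e6 : 0 ≤ 1 - b := by nlinarith [sq_nonneg t]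
  have e8 : g * (1 - b) ≤ (η + R) * (1 - b) := mul_le_mul_of_nonneg_right hg2 e6
  have e9 : R * t ≤ R * (η + 2 / η * (1 - b)) := mul_le_mul_of_nonneg_left (by linarith) hR.le
  have e10 : (η + R + 2 * R / η) * (1 - b) = (η + R) * (1 - b) + R * (2 / η * (1 - b)) := by ring
  rw [e10]
  linarith

lemma smul_cs {φ : Plane → Plane} {g : Plane → ℝ} (h : HasCompactSupport φ) :
    HasCompactSupport (fun x => g x • φ x) :=
  h.mono fun x hx h0 => hx (by simp [h0])

/-- The angular mass compared with quantities that pass to the limit under strict convergence. -/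
lemma NBV.ang_bound (h : NBV R u ν σ) (hR : 0 < R) {φ : Plane → Plane} {g : Plane → ℝ} {η : ℝ}
    (hη : 0 < η) (h1 : ContDiff ℝ 1 φ) (h2 : HasCompactSupport φ) (h4 : ∀ x, ‖φ x‖ ≤ 1)
    (hgc : ContDiff ℝ 1 g) (hga : ∀ x, |⟪Jr x, φ x⟫| ≤ g x)
    (hgb : ∀ x, g x ≤ η + |⟪Jr x, φ x⟫|) :
    ∫ x, ‖⟪Jr x, σ x⟫‖ ∂ν ≤ ∫ x, ⟪g x • φ x, σ x⟫ ∂ν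
      + (η + R + 2 * R / η) * (ν.real univ - ∫ x, ⟪φ x, σ x⟫ ∂ν) + R * η * ν.real univ := by
  have : IsFiniteMeasure ν := ⟨h.bv.finite⟩
  generalize hK : η + R + 2 * R / η = K
  have j1 : Integrable (fun x => ⟪g x • φ x, σ x⟫) ν :=
    h.integrable_inner (φ := fun x => g x • φ x) (hgc.smul h1).continuous (smul_cs h2)
  have j2 := h.integrable_inner h1.continuous h2
  have j3 : Integrable (fun x => K * (1 - ⟪φ x, σ x⟫)) ν :=
    ((integrable_const 1).sub j2).const_mul K
  have j4 : Integrable (fun x => ⟪g x • φ x, σ x⟫ + K * (1 - ⟪φ x, σ x⟫)) ν := j1.add j3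
  have e1 : ∫ x, ⟪g x • φ x, σ x⟫ ∂ν
    + K * (ν.real univ - ∫ x, ⟪φ x, σ x⟫ ∂ν) + R * η * ν.real univ
    = ∫ x, (⟪g x • φ x, σ x⟫ + K * (1 - ⟪φ x, σ x⟫) + R * η) ∂ν := by
    rw [integral_add j4 (integrable_const _), integral_add j1 j3,
      integral_const_mul, integral_sub (integrable_const _) j2]
    simp only [integral_const, smul_eq_mul]; ring
  rw [e1]
  refine integral_mono_ae h.integrable_ang.norm (j4.add (integrable_const _)) ?_
  filter_upwards [h.bv.unit, h.ae_mem] with x hx hxR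
  have hJφ : |⟪Jr x, φ x⟫| ≤ R := by
    refine (abs_real_inner_le_norm _ _).trans ?_
    rw [norm_Jr]
    have := mem_ball_zero_iff.1 hxR
    nlinarith [h4 x, norm_nonneg x, norm_nonneg (φ x)]
  rw [← hK]
  exact ang_pointwise hR hxR hx (h4 x) hη (hga x) ((hgb x).trans (by linarith))

/-- For the limit function, the quantities of `NBV.ang_bound` are close to the angular mass when
`φ` is close to `σ`. -/
lemma NBV.ang_limit (h : NBV R u ν σ) (hR : 0 < R) {φ : Plane → Plane} {g : Plane → ℝ} {η δ : ℝ}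
    (h1 : ContDiff ℝ 1 φ) (h2 : HasCompactSupport φ) (h4 : ∀ x, ‖φ x‖ ≤ 1)
    (h5 : ∫ x, ‖σ x - φ x‖ ∂ν ≤ δ)
    (hgc : ContDiff ℝ 1 g) (hga : ∀ x, |⟪Jr x, φ x⟫| ≤ g x)
    (hgb : ∀ x, g x ≤ η + |⟪Jr x, φ x⟫|) :
    ∫ x, ⟪g x • φ x, σ x⟫ ∂ν ≤ ∫ x, ‖⟪Jr x, σ x⟫‖ ∂ν + R * δ + η * ν.real univ ∧
      ν.real univ - ∫ x, ⟪φ x, σ x⟫ ∂ν ≤ δ := by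
  have : IsFiniteMeasure ν := ⟨h.bv.finite⟩
  have j1 : Integrable (fun x => ⟪g x • φ x, σ x⟫) ν :=
    h.integrable_inner (φ := fun x => g x • φ x) (hgc.smul h1).continuous (smul_cs h2)
  have j2 := h.integrable_inner h1.continuous h2
  have jd : Integrable (fun x => ‖σ x - φ x‖) ν := by
    refine Integrable.of_bound (h.bv.meas.sub h1.continuous.measurable).norm.aestronglyMeasurable 2 ?_
    filter_upwards [h.bv.unit] with x hx
    rw [norm_norm]
    have := norm_sub_le (σ x) (φ x)
    linarith [h4 x]
  constructor
  · have ja : Integrable (fun x => ‖⟪Jr x, σ x⟫‖ + R * ‖σ x - φ x‖) ν :=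
      h.integrable_ang.norm.add (jd.const_mul R)
    calc ∫ x, ⟪g x • φ x, σ x⟫ ∂ν ≤ ∫ x, (‖⟪Jr x, σ x⟫‖ + R * ‖σ x - φ x‖ + η) ∂ν := by
          refine integral_mono_ae j1 (ja.add (integrable_const _)) ?_
          filter_upwards [h.bv.unit, h.ae_mem] with x hx hxR
          have e2 := (ang_diff hxR (σ x) (φ x)).2
          have e3 : ⟪φ x, σ x⟫ ≤ 1 := by
            refine (real_inner_le_norm _ _).trans ?_
            rw [hx, mul_one]; exact h4 x
          rw [inner_smul_left, Real.norm_eq_abs]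
          simp only [conj_trivial]
          have := mul_le_mul_of_nonneg_left e3 ((abs_nonneg _).trans (hga x))
          linarith [hgb x]
      _ = ∫ x, ‖⟪Jr x, σ x⟫‖ ∂ν + R * ∫ x, ‖σ x - φ x‖ ∂ν + η * ν.real univ := by
          rw [integral_add ja (integrable_const _),
            integral_add h.integrable_ang.norm (jd.const_mul R), integral_const_mul]
          simp only [integral_const, smul_eq_mul, mul_comm]
      _ ≤ _ := by gcongr
  · have : ν.real univ - ∫ x, ⟪φ x, σ x⟫ ∂ν = ∫ x, (1 - ⟪φ x, σ x⟫) ∂ν := by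
      rw [integral_sub (integrable_const _) j2]; simp
    rw [this]
    refine le_trans (integral_mono_ae ((integrable_const _).sub j2) jd ?_) h5
    filter_upwards [h.bv.unit] with x hx
    have e1 : (1:ℝ) - ⟪φ x, σ x⟫ = ⟪σ x - φ x, σ x⟫ := by
      rw [inner_sub_left, real_inner_self_eq_norm_sq, hx]; norm_num
    rw [e1]
    refine (real_inner_le_norm _ _).trans ?_
    rw [hx, mul_one]

/-- Under strict convergence the angular masses do not exceed the angular mass of the limit
asymptotically (the Reshetnyak continuity theorem for the integrand `|⟪Jx, ·⟫|`). -/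
lemma angMass_limsup (hR : 0 < R) (hi : ∀ i, NBV R (ui i) (νi i) (σi i)) (h : NBV R u ν σ)
    (hL : Tendsto (fun i => ∫⁻ x, ‖ui i x - u x‖ₑ) atTop (𝓝 0))
    (hν : Tendsto (fun i => (νi i).real univ) atTop (𝓝 (ν.real univ))) {ε : ℝ} (hε : 0 < ε) :
    ∀ᶠ i in atTop, ∫ x, ‖⟪Jr x, σi i x⟫‖ ∂νi i ≤ ∫ x, ‖⟪Jr x, σ x⟫‖ ∂ν + ε := by
  have hfin : IsFiniteMeasure ν := ⟨h.bv.finite⟩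
  have hN0 : 0 ≤ ν.real univ := measureReal_nonneg
  obtain ⟨η, hη⟩ : ∃ η, η = ε / (4 * (1 + ν.real univ) * (1 + R)) := ⟨_, rfl⟩
  have hη0 : 0 < η := by rw [hη]; positivity
  obtain ⟨K, hK⟩ : ∃ K, K = η + R + 2 * R / η := ⟨_, rfl⟩
  have hK0 : 0 < K := by rw [hK]; positivity
  obtain ⟨δ, hδ⟩ : ∃ δ, δ = ε / (4 * (R + K)) := ⟨_, rfl⟩
  have hδ0 : 0 < δ := by rw [hδ]; positivity
  obtain ⟨φ, h1, h2, h3, h4, h5⟩ := exists_test_approx ν (Metric.isOpen_ball (x := (0:Plane)) (ε := R))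
    h.bv.concentrated h.bv.meas.aestronglyMeasurable
    (by filter_upwards [h.bv.unit] with x hx using hx.le) hδ0
  -- A smooth majorant of the angular component of `φ`, exceeding it by at most `η`.
  obtain ⟨g, hgc, hga, hgb⟩ : ∃ g : Plane → ℝ, ContDiff ℝ 1 g ∧ (∀ x, |⟪Jr x, φ x⟫| ≤ g x) ∧
      ∀ x, g x ≤ η + |⟪Jr x, φ x⟫| := by
    refine ⟨fun x => Real.sqrt (η ^ 2 + ⟪Jr x, φ x⟫ ^ 2), ?_, fun x => Real.abs_le_sqrt (by nlinarith),
      fun x => ?_⟩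
    · refine ContDiff.sqrt ?_ fun x => by positivity
      exact contDiff_const.add ((Jr.contDiff.inner ℝ h1).pow 2)
    · refine Real.sqrt_le_iff.2 ⟨by positivity, ?_⟩
      have := abs_nonneg ⟪Jr x, φ x⟫
      rw [← sq_abs ⟪Jr x, φ x⟫]
      nlinarith
  have hgφ3 : tsupport (fun x => g x • φ x) ⊆ Metric.ball 0 R := by
    refine (closure_mono ?_).trans h3
    intro x hx h0
    exact hx (by simp [h0])
  have hlim := ((tendsto_test hi h hL (φ := fun x => g x • φ x) (hgc.smul h1) (smul_cs h2) hgφ3).add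
      ((hν.sub (tendsto_test hi h hL h1 h2 h3)).const_mul K)).add (hν.const_mul (R * η))
  obtain ⟨f1, f2⟩ := h.ang_limit hR h1 h2 h4 h5 hgc hga hgb
  have f3 : ∫ x, ⟪g x • φ x, σ x⟫ ∂ν + K * (ν.real univ - ∫ x, ⟪φ x, σ x⟫ ∂ν) + R * η * ν.real univ
      < ∫ x, ‖⟪Jr x, σ x⟫‖ ∂ν + ε := by
    have g1 : (R + K) * δ = ε / 4 := by rw [hδ]; field_simp
    have g2 : η * (1 + ν.real univ) * (1 + R) = ε / 4 := by rw [hη]; field_simp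
    have g3 := mul_le_mul_of_nonneg_left f2 hK0.le
    have g4 := mul_pos hη0 hR
    generalize ν.real univ = N at *
    linarith
  filter_upwards [hlim.eventually_lt_const f3] with i hi2
  have := (hi i).ang_bound hR hη0 h1 h2 h4 hgc hga hgb
  rw [← hK] at this
  exact this.trans hi2.le

end

/-! ### Dilations -/

section
variable {R : ℝ} {u : Plane → ℝ} {ν : Measure Plane} {σ : Plane → Plane}

lemma tsupport_dil_subset {φ : Plane → ℝ} {c₀ c : ℝ} (hc₀ : 0 < c₀) (hc : c₀ ≤ c)
    (h3 : tsupport φ ⊆ Metric.ball 0 (c₀ * R)) :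
    tsupport (fun x => c ^ 2 * φ (c • x)) ⊆ Metric.ball 0 R := by
  have h := tsupport_comp_subset_preimage φ (continuous_const_smul c : Continuous fun x : Plane => c • x)
  refine (tsupport_mul_subset_right.trans h).trans fun x hx => ?_
  have := h3 hx
  rw [mem_ball_zero_iff, norm_smul, Real.norm_of_nonneg (hc₀.le.trans hc)] at this
  rw [mem_ball_zero_iff]
  have := mul_le_mul_of_nonneg_right hc (norm_nonneg x)
  nlinarith

lemma hasCompactSupport_dil {φ : Plane → ℝ} {c₀ c : ℝ} (hc₀ : 0 < c₀) (hc : c₀ ≤ c)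
    (h3 : tsupport φ ⊆ Metric.ball 0 (c₀ * R)) :
    HasCompactSupport (fun x => c ^ 2 * φ (c • x)) :=
  HasCompactSupport.of_support_subset_isCompact (isCompact_closedBall (0:Plane) R)
    ((subset_tsupport _).trans ((tsupport_dil_subset hc₀ hc h3).trans Metric.ball_subset_closedBall))

lemma contDiff_dil {φ : Plane → ℝ} (h1 : ContDiff ℝ 1 φ) (c : ℝ) :
    ContDiff ℝ 1 fun x => c ^ 2 * φ (c • x) :=
  contDiff_const.mul (h1.comp (contDiff_const_smul c))

/-- The derivative, in the factor, of the pairing of `u` with a dilated test function is given by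
the radial derivative of `u`. -/
lemma NBV.hasDerivAt_dil (h : NBV R u ν σ) {φ : Plane → ℝ} (h1 : ContDiff ℝ 1 φ)
    (h2 : HasCompactSupport φ) {c₀ c : ℝ} (hc₀ : 0 < c₀) (hc : c₀ ≤ c) (hc1 : c ≤ 1)
    (h3 : tsupport φ ⊆ Metric.ball 0 (c₀ * R)) :
    HasDerivAt (fun c => ∫ x, u x * (c ^ 2 * φ (c • x)))
      (- ∫ x, c * (⟪x, σ x⟫ * φ (c • x)) ∂ν) c := by
  have hcp : 0 < c := hc₀.trans_le hc
  set L : Plane → ℝ := fun y => fderiv ℝ φ y y + 2 * φ y with hL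
  have hLc : Continuous L := (continuous_fderiv_apply' h1 continuous_id).add
    (continuous_const.mul h1.continuous)
  have hLs : HasCompactSupport L := (compactSupport_fderiv_apply h2 id).add
    (HasCompactSupport.mul_left h2)
  obtain ⟨C, hC⟩ := hLs.exists_bound_of_continuous hLc
  have hd : ∀ x c, HasDerivAt (fun c => u x * (c ^ 2 * φ (c • x))) (u x * (c * L (c • x))) c := by
    intro x c
    refine HasDerivAt.const_mul _ ?_
    have e1 : HasDerivAt (fun c : ℝ => c • x) x c := by
      simpa using (hasDerivAt_id c).smul_const x
    have e2 := ((h1.differentiable one_ne_zero (c • x)).hasFDerivAt).comp_hasDerivAt c e1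
    refine (((hasDerivAt_pow 2 c).mul e2).congr_deriv ?_ : _)
    simp [hL]
    ring
  have hm : ∀ c : ℝ, AEStronglyMeasurable (fun x => u x * (c ^ 2 * φ (c • x))) volume := fun t =>
    (h.meas.mul (contDiff_dil h1 t).continuous.measurable).aestronglyMeasurable
  have key := (hasDerivAt_integral_of_dominated_loc_of_deriv_le (μ := (volume : Measure Plane))
    (F := fun c x => u x * (c ^ 2 * φ (c • x))) (x₀ := c) (s := Ioo 0 2)
    (F' := fun c x => u x * (c * L (c • x)))
    (bound := fun x => |u x| * (2 * C)) (Ioo_mem_nhds hcp (by linarith)) (Eventually.of_forall hm)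
    (h.integrable_u_mul (contDiff_dil h1 c).continuous (hasCompactSupport_dil hc₀ hc h3)) ?_ ?_
    (h.int.abs.mul_const _) (Eventually.of_forall fun x t _ => hd x t)).2
  · refine key.congr_deriv ?_
    have hp := h.parts_rad (φ := fun x => c ^ 2 * φ (c • x)) (contDiff_dil h1 c)
      (hasCompactSupport_dil hc₀ hc h3) (tsupport_dil_subset hc₀ hc h3)
    have e4 : ∀ x, fderiv ℝ (fun x => c ^ 2 * φ (c • x)) x x + 2 * (c ^ 2 * φ (c • x))
        = c * (c * L (c • x)) := by
      intro x
      have e5 : HasFDerivAt (fun x : Plane => c • x) (c • ContinuousLinearMap.id ℝ Plane) x :=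
        (c • ContinuousLinearMap.id ℝ Plane).hasFDerivAt
      have e2 := (((h1.differentiable one_ne_zero (c • x)).hasFDerivAt).comp x e5).const_mul (c ^ 2)
      have e3 : fderiv ℝ (fun x => c ^ 2 * φ (c • x)) x
        = c ^ 2 • ((fderiv ℝ φ (c • x)).comp (c • ContinuousLinearMap.id ℝ Plane)) := e2.fderiv
      rw [e3]
      simp [hL]
      ring
    simp_rw [e4] at hp
    have e6 : ∫ x, u x * (c * (c * L (c • x))) = c * ∫ x, u x * (c * L (c • x)) := by
      rw [← integral_const_mul]; congr 1 with x; ring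
    have e7 : ∫ x, ⟪x, σ x⟫ * (c ^ 2 * φ (c • x)) ∂ν = c * ∫ x, c * (⟪x, σ x⟫ * φ (c • x)) ∂ν := by
      rw [← integral_const_mul]; congr 1 with x; ring
    rw [e6, e7, ← mul_neg] at hp
    exact mul_left_cancel₀ hcp.ne' hp
  · exact (h.meas.mul (measurable_const.mul (hLc.comp (continuous_const_smul c)).measurable)).aestronglyMeasurable
  · refine Eventually.of_forall fun x t ht => ?_
    rw [norm_mul, norm_mul, Real.norm_eq_abs, Real.norm_of_nonneg ht.1.le]
    have := mul_le_mul ht.2.le (hC (t • x)) (norm_nonneg _) zero_le_two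
    gcongr

lemma NBV.dil_sub (h : NBV R u ν σ) {φ : Plane → ℝ} (h1 : ContDiff ℝ 1 φ)
    (h2 : HasCompactSupport φ) {c : ℝ} (hc : 0 < c) :
    ∫ x, (u (c⁻¹ • x) - u x) * φ x
      = (∫ x, u x * (c ^ 2 * φ (c • x))) - ∫ x, u x * (1 ^ 2 * φ ((1:ℝ) • x)) := by
  obtain ⟨C, hC⟩ := h2.exists_bound_of_continuous h1.continuous
  have hi : Integrable fun x => u (c⁻¹ • x) * φ x :=
    (h.int.comp_smul (inv_ne_zero hc.ne')).mul_bdd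
      h1.continuous.aestronglyMeasurable (c := C) (Eventually.of_forall hC)
  have e1 : ∫ x, u x * (c ^ 2 * φ (c • x)) = ∫ x, u (c⁻¹ • x) * φ x := by
    have := Measure.integral_comp_smul (volume : Measure Plane) (fun x => u (c⁻¹ • x) * φ x) c
    simp only [smul_smul, inv_mul_cancel₀ hc.ne', one_smul] at this
    rw [finrank_euclideanSpace_fin, abs_of_pos (by positivity), smul_eq_mul] at this
    have e : ∫ x, u x * (c ^ 2 * φ (c • x)) = c ^ 2 * ∫ x, u x * φ (c • x) := by
      rw [← integral_const_mul]; congr 1 with x; ring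
    rw [e, this]
    field_simp
  rw [e1]
  simp only [one_pow, one_mul, one_smul]
  rw [← integral_sub hi (h.integrable_u_mul h1.continuous h2)]
  congr 1 with x
  ring

/-- Dilating `u` by the factor `c⁻¹ ≥ 1` changes it in `L¹` of the disc of radius `c R` by at most
a multiple of `1 - c`. -/
lemma NBV.lintegral_dil_le (h : NBV R u ν σ) (hR : 0 < R) {c : ℝ} (hc : 0 < c) (hc1 : c ≤ 1) :
    ∫⁻ x in Metric.ball (0:Plane) (c * R), ‖u (c⁻¹ • x) - u x‖ₑ
      ≤ ENNReal.ofReal (R * ν.real univ * (1 - c)) := by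
  have : IsFiniteMeasure ν := ⟨h.bv.finite⟩
  set D : Plane → ℝ := fun x => u (c⁻¹ • x) - u x with hD
  have hDm : Measurable D := (h.meas.comp (measurable_const_smul c⁻¹)).sub h.meas
  have hDi : Integrable D := (h.int.comp_smul (inv_ne_zero hc.ne')).sub h.int
  have e0 : ∫⁻ x in Metric.ball (0:Plane) (c * R), ‖u (c⁻¹ • x) - u x‖ₑ
      = ∫⁻ x, ‖(Metric.ball (0:Plane) (c * R)).indicator D x‖ₑ := by
    rw [← lintegral_indicator measurableSet_ball]
    refine lintegral_congr fun x => ?_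
    rw [enorm_indicator_eq_indicator_enorm]
  rw [e0]
  refine lintegral_le_of_test volume (Metric.isOpen_ball (x := (0:Plane)) (ε := c * R))
    (hDm.indicator measurableSet_ball) (hDi.indicator measurableSet_ball)
    (Eventually.of_forall fun x hx => indicator_of_notMem hx _) ?_
  intro φ h1 h2 h3 h4
  have e1 : ∀ x, (Metric.ball (0:Plane) (c * R)).indicator D x * φ x = D x * φ x := by
    intro x
    by_cases hx : x ∈ Metric.ball (0:Plane) (c * R)
    · rw [indicator_of_mem hx]
    · rw [indicator_of_notMem hx, image_eq_zero_of_notMem_tsupport (fun h => hx (h3 h))]; simp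
  simp_rw [e1, hD]
  rw [h.dil_sub h1 h2 hc]
  refine (le_abs_self _).trans ?_
  have := (convex_Icc (𝕜 := ℝ) c 1).norm_image_sub_le_of_norm_hasDerivWithin_le (x := 1) (y := c)
    (C := R * ν.real univ)
    (fun s hs => (h.hasDerivAt_dil h1 h2 hc hs.1 hs.2 h3).hasDerivWithinAt) (fun s hs => ?_)
    (right_mem_Icc.2 hc1) (left_mem_Icc.2 hc1)
  · rw [Real.norm_eq_abs, Real.norm_eq_abs, abs_sub_comm c 1, abs_of_nonneg (sub_nonneg.2 hc1)] at this
    exact this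
  · rw [norm_neg]
    refine norm_integral_le_of_norm_le_const ?_
    filter_upwards [h.bv.unit, h.ae_mem] with x hx hxR
    rw [norm_mul, norm_mul, Real.norm_of_nonneg (hc.le.trans hs.1)]
    have e1 : ‖⟪x, σ x⟫‖ ≤ R := by
      refine (norm_inner_le_norm _ _).trans ?_
      rw [hx, mul_one]
      exact (mem_ball_zero_iff.1 hxR).le
    have e2 : ‖⟪x, σ x⟫‖ * ‖φ (s • x)‖ ≤ R * 1 := mul_le_mul e1 (h4 _) (norm_nonneg _) hR.le
    have e3 := mul_le_mul hs.2 e2 (by positivity) zero_le_one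
    linarith
end

/-! ### Radial dependence of the slices -/

section
variable {R : ℝ} {u : Plane → ℝ} {ν : Measure Plane} {σ : Plane → Plane}

lemma smul_pol (c r θ : ℝ) : c • pol r θ = pol (c * r) θ := by
  ext i; fin_cases i <;> simp [pol, mul_assoc]

/-- The `L¹` distance between the slices of `u` on the circles of radius `(1 + t) r` and `r`. -/
def dilDist (u : Plane → ℝ) (t r : ℝ) : ℝ≥0∞ := ldist (sl u ((1 + t) * r)) (sl u r)

lemma measurable_dilDist (hu : Measurable u) :
    Measurable fun p : ℝ × ℝ => dilDist u p.1 p.2 := by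
  refine Measurable.lintegral_prod_right'
    (f := fun q : (ℝ × ℝ) × ℝ => ‖sl u ((1 + q.1.1) * q.1.2) q.2 - sl u q.1.2 q.2‖ₑ) ?_
  have h := sl_meas2 hu
  have h1 : Measurable fun q : (ℝ × ℝ) × ℝ => sl u ((1 + q.1.1) * q.1.2) q.2 :=
    h.comp (by fun_prop : Measurable fun q : (ℝ × ℝ) × ℝ => ((1 + q.1.1) * q.1.2, q.2))
  have h2 : Measurable fun q : (ℝ × ℝ) × ℝ => sl u q.1.2 q.2 :=
    h.comp (by fun_prop : Measurable fun q : (ℝ × ℝ) × ℝ => (q.1.2, q.2))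
  exact (h1.sub h2).enorm

/-- The `L¹` distance between slices at relative radial step `t`, integrated over the radii, is
at most linear in `t`. -/
lemma NBV.lintegral_dilDist_le (h : NBV R u ν σ) (hR : 0 < R) {t : ℝ} (ht : 0 < t) :
    ∫⁻ r in Ioi 0, (if (1 + t) * r < R then ENNReal.ofReal r * dilDist u t r else 0)
      ≤ ENNReal.ofReal (R * ν.real univ * t) := by
  have h1t : 0 < 1 + t := by linarith
  have key := h.lintegral_dil_le hR (c := (1 + t)⁻¹) (inv_pos.2 h1t) (inv_le_one_of_one_le₀ (by linarith))
  have hb : 1 - (1 + t)⁻¹ ≤ t := by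
    have : 1 - (1 + t)⁻¹ = t * (1 + t)⁻¹ := by field_simp; ring
    rw [this]
    exact mul_le_of_le_one_right ht.le (inv_le_one_of_one_le₀ (by linarith))
  refine le_trans (le_trans (le_of_eq ?_) key) (ENNReal.ofReal_le_ofReal ?_)
  · rw [inv_inv, ← lintegral_indicator measurableSet_ball,
      lintegral_polar (f := (Metric.ball (0:Plane) ((1 + t)⁻¹ * R)).indicator
        fun x => ‖u ((1 + t) • x) - u x‖ₑ) ?_ 0]
    · refine setLIntegral_congr_fun measurableSet_Ioi fun r hr => ?_
      have hiff : ∀ θ, pol r θ ∈ Metric.ball (0:Plane) ((1 + t)⁻¹ * R) ↔ (1 + t) * r < R := by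
        intro θ
        rw [mem_ball_zero_iff, norm_pol, abs_of_pos hr, lt_inv_mul_iff₀ h1t]
      by_cases hh : (1 + t) * r < R
      · simp only [hh, if_true]
        congr 1
        rw [zero_add]
        refine setLIntegral_congr_fun measurableSet_Ioc fun θ _ => ?_
        rw [indicator_of_mem ((hiff θ).2 hh), smul_pol]
        rfl
      · simp only [hh, if_false]
        have : ∀ θ, (Metric.ball (0:Plane) ((1 + t)⁻¹ * R)).indicator
          (fun x => ‖u ((1 + t) • x) - u x‖ₑ) (pol r θ) = 0 := fun θ =>
            indicator_of_notMem (fun h' => hh ((hiff θ).1 h')) _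
        simp [this]
    · exact ((h.meas.comp (measurable_const_smul (1 + t))).sub h.meas).enorm.indicator measurableSet_ball
  · exact mul_le_mul_of_nonneg_left hb (mul_nonneg hR.le measureReal_nonneg)

/-- For almost every radius `r` the slices depend on the radius in a Lipschitz way at `r`, for
most radii in `(r, r + r / (k + 1))` and infinitely many `k`. -/
lemma NBV.ae_radial (h : NBV R u ν σ) (hR : 0 < R) :
    ∀ᵐ r ∂volume.restrict (Ioo 0 R), ∃ C : ℝ, 0 < C ∧ ∃ᶠ k : ℕ in atTop,
      volume {t ∈ Ioo 0 (1 / ((k:ℝ) + 1)) | ENNReal.ofReal (C * t) < dilDist u t r}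
        ≤ ENNReal.ofReal (1 / (4 * ((k:ℝ) + 1))) := by
  have hfin : IsFiniteMeasure ν := ⟨h.bv.finite⟩
  have hdm := measurable_dilDist h.meas
  set f : ℝ → ℝ → ℝ≥0∞ := fun t r => if (1 + t) * r < R then ENNReal.ofReal r * dilDist u t r else 0
    with hf
  have hfm : Measurable fun p : ℝ × ℝ => f p.1 p.2 := by
    refine Measurable.ite (measurableSet_lt (by fun_prop) measurable_const) ?_ measurable_const
    exact (by fun_prop : Measurable fun p : ℝ × ℝ => ENNReal.ofReal p.2).mul hdm
  -- Averages over `t` of the radial difference quotients, bounded in `L¹` uniformly in `k`; Fatou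
  -- and Chebyshev then give the claim.
  set G : ℕ → ℝ → ℝ≥0∞ := fun k r => ((k:ℝ≥0∞) + 1) *
    ∫⁻ t in Ioo 0 (1 / ((k:ℝ) + 1)), ENNReal.ofReal t⁻¹ * f t r with hG
  have hgm : Measurable fun p : ℝ × ℝ => ENNReal.ofReal p.1⁻¹ * f p.1 p.2 :=
    (by fun_prop : Measurable fun p : ℝ × ℝ => ENNReal.ofReal p.1⁻¹).mul hfm
  have hGm : ∀ k, Measurable (G k) := fun k =>
    Measurable.const_mul (Measurable.lintegral_prod_right'
      (f := fun p : ℝ × ℝ => ENNReal.ofReal p.2⁻¹ * f p.2 p.1) (hgm.comp measurable_swap)) _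
  have hGi : ∀ k, ∫⁻ r in Ioi 0, G k r ≤ ENNReal.ofReal (R * ν.real univ) := by
    intro k
    rw [lintegral_const_mul _ (Measurable.lintegral_prod_right'
      (f := fun p : ℝ × ℝ => ENNReal.ofReal p.2⁻¹ * f p.2 p.1) (hgm.comp measurable_swap)),
      lintegral_lintegral_swap (f := fun r t => ENNReal.ofReal t⁻¹ * f t r) (hgm.comp measurable_swap).aemeasurable]
    have e1 : ∀ t ∈ Ioo 0 (1 / ((k:ℝ) + 1)), ∫⁻ r in Ioi 0, ENNReal.ofReal t⁻¹ * f t r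
        ≤ ENNReal.ofReal (R * ν.real univ) := by
      intro t ht
      rw [lintegral_const_mul (f := f t) _ (hfm.comp measurable_prodMk_left)]
      refine (mul_le_mul_right (h.lintegral_dilDist_le hR ht.1) _).trans (le_of_eq ?_)
      rw [← ENNReal.ofReal_mul (inv_nonneg.2 ht.1.le)]
      congr 1
      have := ht.1.ne'
      field_simp
    refine (mul_le_mul_right (setLIntegral_mono measurable_const e1) _).trans (le_of_eq ?_)
    rw [setLIntegral_const, Real.volume_Ioo, sub_zero, mul_comm _ (ENNReal.ofReal (1 / _)), ← mul_assoc]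
    have : ((k:ℝ≥0∞) + 1) = ENNReal.ofReal ((k:ℝ) + 1) := by
      rw [ENNReal.ofReal_add (by positivity) zero_le_one]; simp
    rw [this, ← ENNReal.ofReal_mul (by positivity), mul_one_div_cancel (by positivity)]
    simp
  have hlim : ∀ᵐ r ∂volume.restrict (Ioi 0), liminf (fun k => G k r) atTop < ⊤ := by
    refine ae_lt_top (Measurable.liminf hGm) (ne_of_lt ?_)
    refine (lintegral_liminf_le hGm).trans_lt ?_
    refine (liminf_le_of_frequently_le' (Frequently.of_forall hGi)).trans_lt ENNReal.ofReal_lt_top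
  have hlim2 := ae_restrict_of_ae_restrict_of_subset (Ioo_subset_Ioi_self : Ioo 0 R ⊆ Ioi 0) hlim
  filter_upwards [hlim2, ae_restrict_mem measurableSet_Ioo] with r hr hrR
  obtain ⟨A, hA1, hA2⟩ := exists_between hr
  obtain ⟨B, hB⟩ : ∃ B : ℝ, B = A.toReal + 1 := ⟨_, rfl⟩
  have hB0 : 0 < B := by rw [hB]; positivity
  have hAB : A ≤ ENNReal.ofReal B := by
    rw [ENNReal.le_ofReal_iff_toReal_le hA2.ne hB0.le, hB]; linarith
  have hr0 := hrR.1
  refine ⟨4 * B / r, by positivity, ?_⟩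
  have hfreq : ∃ᶠ k in atTop, G k r < A := frequently_lt_of_liminf_lt (by isBoundedDefault) hA1
  have hev : ∀ᶠ k : ℕ in atTop, (1 + 1 / ((k:ℝ) + 1)) * r < R := by
    have : Tendsto (fun k : ℕ => (1 + 1 / ((k:ℝ) + 1)) * r) atTop (𝓝 ((1 + 0) * r)) :=
      (tendsto_one_div_add_atTop_nhds_zero_nat.const_add 1).mul_const r
    exact this.eventually_lt_const (by simpa using hrR.2)
  refine (hfreq.and_eventually hev).mono fun k hk => ?_
  obtain ⟨hk1, hk2⟩ := hk
  set S := {t ∈ Ioo 0 (1 / ((k:ℝ) + 1)) | ENNReal.ofReal (4 * B / r * t) < dilDist u t r} with hS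
  have hSm : MeasurableSet S := by
    refine measurableSet_Ioo.inter (measurableSet_lt (by fun_prop) (hdm.comp measurable_prodMk_right))
  have c1 : ENNReal.ofReal (4 * B) * volume S ≤ ∫⁻ t in Ioo 0 (1 / ((k:ℝ) + 1)), ENNReal.ofReal t⁻¹ * f t r := by
    rw [← setLIntegral_const]
    refine (setLIntegral_mono (hgm.comp measurable_prodMk_right) fun t ht => ?_).trans
      (lintegral_mono_set (fun t ht => ht.1))
    have hlt : (1 + t) * r < R := lt_of_le_of_lt (mul_le_mul_of_nonneg_right (by linarith [ht.1.2]) hr0.le) hk2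
    simp only [hf, hlt, if_true, Function.comp]
    refine le_trans (le_of_eq ?_) (mul_le_mul_right (mul_le_mul_right ht.2.le _) _)
    have := ht.1.1
    rw [← ENNReal.ofReal_mul hr0.le, ← ENNReal.ofReal_mul (by positivity)]
    congr 1
    field_simp
  have c2 : ENNReal.ofReal ((k:ℝ) + 1) * (ENNReal.ofReal (4 * B) * volume S) ≤ ENNReal.ofReal B := by
    have : ((k:ℝ≥0∞) + 1) = ENNReal.ofReal ((k:ℝ) + 1) := by
      rw [ENNReal.ofReal_add (by positivity) zero_le_one]; simp
    rw [← this]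
    exact ((mul_le_mul_right c1 _).trans hk1.le).trans hAB
  have hST : volume S ≠ ⊤ := ne_top_of_le_ne_top (by simp) (measure_mono (fun t ht => ht.1) : volume S ≤ volume (Ioo 0 (1 / ((k:ℝ) + 1))))
  rw [← ENNReal.ofReal_toReal hST, ← ENNReal.ofReal_mul (by positivity),
    ← ENNReal.ofReal_mul (by positivity), ENNReal.ofReal_le_ofReal_iff hB0.le] at c2
  rw [← ENNReal.ofReal_toReal hST]
  refine ENNReal.ofReal_le_ofReal ?_
  rw [le_div_iff₀ (by positivity)]
  nlinarith
end

/-! ### Jumps of slices -/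

section
variable {R : ℝ} {u : Plane → ℝ} {ν : Measure Plane} {σ : Plane → Plane}

/-- The function `g` jumps upwards at `θ`, from below `q₁` to above `q₂`, with room `w` on both
sides. -/
def JumpAt (g : ℝ → ℝ) (w q₁ q₂ θ : ℝ) : Prop :=
  (∀ᵐ τ, τ ∈ Ioo (θ - w) θ → g τ ≤ q₁) ∧ ∀ᵐ τ, τ ∈ Ioo θ (θ + w) → q₂ ≤ g τ

/-- Radii whose slice has a quantified upward jump at an angle close to `κ`. -/
def JumpSet (u : Plane → ℝ) (κ w q₁ q₂ : ℝ) : Set ℝ :=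
  {r | ∃ θ, |θ - κ| < w / 4 ∧ JumpAt (sl u r) w q₁ q₂ θ}

lemma jump_dist_aux {f g : ℝ → ℝ} {w q₁ q₂ θ η : ℝ} (hw1 : w ≤ 1)
    (hf : JumpAt f w q₁ q₂ θ) (hg : JumpAt g w q₁ q₂ η) (hle : θ ≤ η) (hlt : η < θ + w)
    (hpf : Function.Periodic f (2 * Real.pi)) (hpg : Function.Periodic g (2 * Real.pi)) :
    ENNReal.ofReal ((q₂ - q₁) * (η - θ)) ≤ ldist f g := by
  have hpi := Real.pi_gt_three
  have e0 : ldist f g = ∫⁻ τ in Ioc θ (θ + 2 * Real.pi), ‖f τ - g τ‖ₑ := by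
    unfold ldist
    rw [lintegral_period (f := fun s => ‖f s - g s‖ₑ) Real.two_pi_pos _ θ 0, zero_add]
    intro s; simp only [hpf s, hpg s]
  have e1 : ENNReal.ofReal ((q₂ - q₁) * (η - θ)) ≤ ∫⁻ τ in Ioo θ η, ‖f τ - g τ‖ₑ := by
    rcases le_or_gt (q₂ - q₁) 0 with h0 | h0
    · rw [ENNReal.ofReal_of_nonpos (mul_nonpos_of_nonpos_of_nonneg h0 (by linarith))]; exact zero_le
    rw [ENNReal.ofReal_mul h0.le, ← Real.volume_Ioo (a := θ), ← setLIntegral_const]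
    refine lintegral_mono_ae ?_
    filter_upwards [ae_restrict_mem measurableSet_Ioo, ae_restrict_of_ae hf.2, ae_restrict_of_ae hg.1]
      with τ hτ h1 h2
    have h1' := h1 ⟨hτ.1, hτ.2.trans hlt⟩
    have h2' := h2 ⟨by linarith [hτ.1], hτ.2⟩
    rw [Real.enorm_eq_ofReal_abs]
    exact ENNReal.ofReal_le_ofReal ((by linarith : q₂ - q₁ ≤ f τ - g τ).trans (le_abs_self _))
  rw [e0]
  exact e1.trans (lintegral_mono_set fun τ hτ => ⟨hτ.1, by linarith [hτ.2]⟩)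

lemma ldist_comm (f g : ℝ → ℝ) : ldist f g = ldist g f := by
  unfold ldist
  simp_rw [← edist_eq_enorm_sub, edist_comm]

/-- Two functions with quantified jumps at nearby angles are at `L¹` distance at least the jump
height times the distance of the angles. -/
lemma jump_dist {f g : ℝ → ℝ} {w q₁ q₂ θ η : ℝ} (hw1 : w ≤ 1)
    (hf : JumpAt f w q₁ q₂ θ) (hg : JumpAt g w q₁ q₂ η) (hlt : |θ - η| < w)
    (hpf : Function.Periodic f (2 * Real.pi)) (hpg : Function.Periodic g (2 * Real.pi)) :
    ENNReal.ofReal ((q₂ - q₁) * |θ - η|) ≤ ldist f g := by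
  rw [abs_lt] at hlt
  rcases le_total θ η with h | h
  · rw [abs_sub_comm, abs_of_nonneg (sub_nonneg.2 h)]
    exact jump_dist_aux hw1 hf hg h (by linarith) hpf hpg
  · rw [abs_of_nonneg (sub_nonneg.2 h), ldist_comm]
    exact jump_dist_aux hw1 hg hf h (by linarith) hpg hpf

lemma dist_pol_lt {r s θ τ δ c : ℝ} (hr : 0 < r) (hs : r < s) (hs' : s < r + r * δ) (hδ : 0 < δ)
    (hδ1 : δ ≤ 1) (hc : 0 ≤ c) (hτ : |τ - θ| ≤ 2 * (c * δ)) :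
    dist (pol s τ) (pol r θ) < r * (1 + 3 * c) * δ := by
  refine lt_of_pow_lt_pow_left₀ 2 (by positivity) ?_
  rw [dist_pol_sq]
  have h1 : 1 - Real.cos (τ - θ) ≤ 2 * (c * δ) ^ 2 := by
    have := Real.one_sub_sq_div_two_le_cos (x := τ - θ)
    have h2 : (τ - θ) ^ 2 ≤ (2 * (c * δ)) ^ 2 := by
      rw [← sq_abs]; gcongr
    nlinarith
  have h3 : (s - r) ^ 2 < (r * δ) ^ 2 := pow_lt_pow_left₀ (by linarith) (by linarith) two_ne_zero
  have h4 : s ≤ 2 * r := by nlinarith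
  have h5 : 2 * s * r * (1 - Real.cos (τ - θ)) ≤ 2 * (2 * r) * r * (2 * (c * δ) ^ 2) := by
    have := Real.cos_le_one (τ - θ)
    gcongr
  have h6 : 0 ≤ r ^ 2 * c * δ ^ 2 := by positivity
  have h7 : 0 ≤ r ^ 2 * c ^ 2 * δ ^ 2 := by positivity
  nlinarith

/-- A lower bound for the oscillation of `u` in a disc, from the values of `u` on an arc for a large
set `E` of radii. -/
lemma lintegral_ball_ge (hu : Measurable u) {r θ δ c b d K : ℝ} {E : Set ℝ} {a a' : ℝ} (hr : 0 < r)
    (hE : E ⊆ Ioo r (r + r * δ)) (hEv : ENNReal.ofReal (r * δ / 2) ≤ volume E)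
    (hδ : 0 < δ) (hδ1 : δ ≤ 1) (hc : 0 ≤ c) (hcδ : 2 * (c * δ) < Real.pi)
    (ha : a' - a = c * δ) (haθ : θ - 2 * (c * δ) ≤ a) (haθ' : a' ≤ θ + 2 * (c * δ)) (hd : 0 ≤ d)
    (hK : K = r * (1 + 3 * c))
    (hEu : ∀ s ∈ E, ∀ᵐ τ, τ ∈ Ioo a a' → d ≤ |sl u s τ - b|) :
    ENNReal.ofReal (r ^ 2 * d * c / 2 * δ ^ 2)
      ≤ ∫⁻ y in Metric.ball (pol r θ) (K * δ), ‖u y - b‖ₑ := by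
  set f : ℝ → ℝ≥0∞ := fun s => ∫⁻ τ in Ioo a a', ‖sl u s τ - b‖ₑ with hf
  have hfm : Measurable f := Measurable.lintegral_prod_right'
    (f := fun p : ℝ × ℝ => ‖sl u p.1 p.2 - b‖ₑ) ((sl_meas2 hu).sub measurable_const).enorm
  have hfE : ∀ s ∈ E, ENNReal.ofReal (d * (c * δ)) ≤ f s := by
    intro s hs
    rw [ENNReal.ofReal_mul hd, ← ha, ← Real.volume_Ioo, ← setLIntegral_const]
    refine lintegral_mono_ae ?_
    filter_upwards [ae_restrict_mem measurableSet_Ioo, ae_restrict_of_ae (hEu s hs)] with τ h1 h2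
    rw [Real.enorm_eq_ofReal_abs]
    exact ENNReal.ofReal_le_ofReal (h2 h1)
  have h1 : ENNReal.ofReal (r * (d * (c * δ))) * volume E
      ≤ ∫⁻ s in Ioo r (r + r * δ), ENNReal.ofReal s * f s := by
    have hm : Measurable fun s : ℝ => ENNReal.ofReal s * f s := by fun_prop
    refine le_trans ?_ (mul_meas_ge_le_lintegral₀ hm.aemeasurable (ENNReal.ofReal (r * (d * (c * δ)))))
    refine mul_le_mul_right ?_ _
    rw [Measure.restrict_apply (measurableSet_le measurable_const hm)]
    refine measure_mono fun s hs => ⟨?_, hE hs⟩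
    simp only [mem_ofPred_eq]
    rw [ENNReal.ofReal_mul hr.le]
    exact mul_le_mul' (ENNReal.ofReal_le_ofReal (hE hs).1.le) (hfE s hs)
  have h2 : ∫⁻ s in Ioo r (r + r * δ), ENNReal.ofReal s * f s
      ≤ ∫⁻ y in Metric.ball (pol r θ) (K * δ), ‖u y - b‖ₑ := by
    rw [← lintegral_indicator measurableSet_ball,
      lintegral_polar (f := (Metric.ball (pol r θ) (K * δ)).indicator fun y => ‖u y - b‖ₑ)
      ((hu.sub measurable_const).enorm.indicator measurableSet_ball) (θ - Real.pi)]
    refine le_trans (setLIntegral_mono' measurableSet_Ioo fun s hs => ?_)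
      (lintegral_mono_set (fun s hs => (hr.trans hs.1 : (0:ℝ) < s)))
    refine mul_le_mul_right ?_ _
    refine le_trans (setLIntegral_mono' measurableSet_Ioo fun τ hτ => ?_)
      (lintegral_mono_set (s := Ioo a a') fun τ hτ => ⟨by linarith [hτ.1], by linarith [hτ.2]⟩)
    rw [indicator_of_mem]
    · rfl
    · rw [Metric.mem_ball, hK]
      refine dist_pol_lt hr hs.1 hs.2 hδ hδ1 hc ?_
      rw [abs_le]
      constructor <;> linarith [hτ.1, hτ.2]
  refine le_trans ?_ (h1.trans h2)
  refine le_trans (le_of_eq ?_) (mul_le_mul_right hEv _)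
  rw [← ENNReal.ofReal_mul (by positivity)]
  congr 1
  ring

open scoped Pointwise in
/-- If `J` has density close to one at `r` and `p` fails on few relative increments, then `J` and
`p` hold jointly on a large set of radii just above `r`. -/
lemma jump_volume {J : Set ℝ} {r δ : ℝ} (hr : 0 < r) (hδ : 0 < δ) (p : ℝ → Prop)
    (hJ : ENNReal.ofReal (15 / 8 * (r * δ)) ≤ volume (J ∩ Metric.closedBall r (r * δ)))
    (hS : volume {t ∈ Ioo 0 δ | ¬ p t} ≤ ENNReal.ofReal (1 / 4 * δ)) :
    ENNReal.ofReal (r * δ / 2)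
      ≤ volume {s ∈ J ∩ Ioo r (r + r * δ) | p (s / r - 1)} := by
  set E := {s ∈ J ∩ Ioo r (r + r * δ) | p (s / r - 1)} with hE
  set S := {t ∈ Ioo 0 δ | ¬ p t} with hSd
  have hsub : J ∩ Metric.closedBall r (r * δ) ⊆ E ∪ (Icc (r - r * δ) r ∪ {r + r * δ} ∪
      (fun s => s + -r) ⁻¹' (r • S)) := by
    intro s hs
    have h2 := hs.2
    rw [Real.closedBall_eq_Icc] at h2
    by_cases h3 : s ≤ r
    · exact Or.inr (Or.inl (Or.inl ⟨h2.1, h3⟩))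
    by_cases h4 : s = r + r * δ
    · exact Or.inr (Or.inl (Or.inr h4))
    have h5 : s < r + r * δ := lt_of_le_of_ne h2.2 h4
    push Not at h3
    by_cases h6 : p (s / r - 1)
    · exact Or.inl ⟨⟨hs.1, h3, h5⟩, h6⟩
    · refine Or.inr (Or.inr ⟨s / r - 1, ⟨⟨?_, ?_⟩, h6⟩, ?_⟩)
      · rw [sub_pos, lt_div_iff₀ hr]; linarith
      · rw [sub_lt_iff_lt_add, div_lt_iff₀ hr]; linarith
      · simp only [smul_eq_mul]; field_simp; ring
  have h1 := (measure_mono hsub : volume _ ≤ _)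
  have h2 : volume ((fun s => s + -r) ⁻¹' (r • S)) ≤ ENNReal.ofReal (1 / 4 * (r * δ)) := by
    rw [measure_preimage_add_right, Measure.addHaar_smul]
    simp only [Module.finrank_self, pow_one, abs_of_pos hr]
    refine (mul_le_mul_right hS _).trans (le_of_eq ?_)
    rw [← ENNReal.ofReal_mul hr.le]
    congr 1
    ring
  have h3 : volume (E ∪ (Icc (r - r * δ) r ∪ {r + r * δ} ∪ (fun s => s + -r) ⁻¹' (r • S)))
      ≤ volume E + (ENNReal.ofReal (r * δ) + 0 + ENNReal.ofReal (1 / 4 * (r * δ))) := by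
    refine (measure_union_le _ _).trans (add_le_add le_rfl ?_)
    refine (measure_union_le _ _).trans (add_le_add ?_ h2)
    refine (measure_union_le _ _).trans (add_le_add ?_ ?_)
    · rw [Real.volume_Icc]; simp
    · simp
  have hrd : 0 < r * δ := mul_pos hr hδ
  rw [add_zero, ← ENNReal.ofReal_add (by positivity) (by positivity)] at h3
  have h4 := hJ.trans (h1.trans h3)
  have h5 : ENNReal.ofReal (15 / 8 * (r * δ)) = ENNReal.ofReal (5 / 8 * (r * δ)) +
      ENNReal.ofReal (r * δ + 1 / 4 * (r * δ)) := by
    rw [← ENNReal.ofReal_add (by positivity) (by positivity)]; congr 1; ring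
  rw [h5] at h4
  have h6 := (ENNReal.add_le_add_iff_right ENNReal.ofReal_ne_top).1 h4
  exact (ENNReal.ofReal_le_ofReal (by linarith)).trans h6
end

/-! ### Almost every circle is free of jumps -/

section
variable {R : ℝ} {u : Plane → ℝ} {ν : Measure Plane} {σ : Plane → Plane}

/-- At a density point of the jump set at which the slices vary in a Lipschitz way, `u` has no
approximate limit. -/
lemma jump_contra (hu : Measurable u) (hi : Integrable u) {r θ κ w q₁ q₂ C b : ℝ} (hr : 0 < r)
    (hw : 0 < w) (hw1 : w ≤ 1) (hq : q₁ < q₂) (hC : 0 < C) (hκ : |θ - κ| < w / 4)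
    (hθ : JumpAt (sl u r) w q₁ q₂ θ)
    (hfreq : ∃ᶠ k : ℕ in atTop,
      volume {t ∈ Ioo 0 (1 / ((k:ℝ) + 1)) | ENNReal.ofReal (C * t) < dilDist u t r}
        ≤ ENNReal.ofReal (1 / (4 * ((k:ℝ) + 1))))
    (hdens : Tendsto (fun ρ => volume (JumpSet u κ w q₁ q₂ ∩ Metric.closedBall r ρ)
      / volume (Metric.closedBall r ρ)) (𝓝[>] 0) (𝓝 1))
    (hb : Tendsto (fun ρ : ℝ =>
      (∫ y in Metric.ball (pol r θ) ρ, |u y - b|) / (volume (Metric.ball (pol r θ) ρ)).toReal)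
      (𝓝[>] 0) (𝓝 0)) : False := by
  have hdq : 0 < q₂ - q₁ := sub_pos.2 hq
  obtain ⟨c, hc⟩ : ∃ c, c = C / (q₂ - q₁) := ⟨_, rfl⟩
  have hc0 : 0 < c := by rw [hc]; positivity
  obtain ⟨K, hK⟩ : ∃ K, K = r * (1 + 3 * c) := ⟨_, rfl⟩
  have hK0 : 0 < K := by rw [hK]; positivity
  obtain ⟨d, hd⟩ : ∃ d, d = (q₂ - q₁) / 2 := ⟨_, rfl⟩
  have hd0 : 0 < d := by rw [hd]; positivity
  obtain ⟨ε, hε⟩ : ∃ ε, ε = r ^ 2 * d * c / 2 / (K ^ 2 * Real.pi) := ⟨_, rfl⟩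
  have hε0 : 0 < ε := by rw [hε]; positivity
  have hδlim : Tendsto (fun k : ℕ => 1 / ((k:ℝ) + 1)) atTop (𝓝[>] 0) :=
    tendsto_nhdsWithin_iff.2 ⟨tendsto_one_div_add_atTop_nhds_zero_nat,
      Eventually.of_forall fun k => by simp only [mem_Ioi]; positivity⟩
  have hmul : ∀ L : ℝ, 0 < L → Tendsto (fun δ : ℝ => L * δ) (𝓝[>] 0) (𝓝[>] 0) := by
    intro L hL
    refine tendsto_nhdsWithin_iff.2 ⟨?_, ?_⟩
    · have : Tendsto (fun δ : ℝ => L * δ) (𝓝 0) (𝓝 (L * 0)) := (continuous_const_mul L).tendsto 0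
      rw [mul_zero] at this
      exact this.mono_left nhdsWithin_le_nhds
    · filter_upwards [self_mem_nhdsWithin] with δ hδ using mul_pos hL hδ
  have ev1 := hδlim.eventually ((hmul r hr).eventually (hdens.eventually
    (lt_mem_nhds (show ENNReal.ofReal (15 / 16) < 1 by
      rw [ENNReal.ofReal_lt_one]; norm_num))))
  have ev2 := hδlim.eventually ((hmul K hK0).eventually (hb.eventually (gt_mem_nhds hε0)))
  have ev3 : ∀ᶠ k : ℕ in atTop, 3 * c * (1 / ((k:ℝ) + 1)) < w :=
    hδlim.eventually ((((hmul (3 * c) (by positivity)).mono_right nhdsWithin_le_nhds).eventually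
      (gt_mem_nhds hw)))
  obtain ⟨k, hk, ⟨e1, e2⟩, e3⟩ := (hfreq.and_eventually ((ev1.and ev2).and ev3)).exists
  obtain ⟨δ, hδ⟩ : ∃ δ : ℝ, δ = 1 / ((k:ℝ) + 1) := ⟨_, rfl⟩
  have hδ0 : 0 < δ := by rw [hδ]; positivity
  have hδ1 : δ ≤ 1 := by
    rw [hδ, div_le_one (by positivity)]
    have : (0:ℝ) ≤ k := Nat.cast_nonneg k
    linarith
  have hδ4 : 1 / (4 * ((k:ℝ) + 1)) = 1 / 4 * δ := by rw [hδ]; field_simp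
  rw [hδ4] at hk
  rw [← hδ] at hk e1 e2 e3
  have hpi := Real.pi_gt_three
  have hrδ : 0 < r * δ := mul_pos hr hδ0
  set E := {s ∈ JumpSet u κ w q₁ q₂ ∩ Ioo r (r + r * δ) |
    dilDist u (s / r - 1) r ≤ ENNReal.ofReal (C * (s / r - 1))} with hE
  have hEv : ENNReal.ofReal (r * δ / 2) ≤ volume E := by
    refine jump_volume (J := JumpSet u κ w q₁ q₂) hr hδ0
      (fun t => dilDist u t r ≤ ENNReal.ofReal (C * t)) ?_ (by simpa only [not_le] using hk)
    rw [Real.volume_closedBall] at e1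
    have := ENNReal.mul_le_of_le_div e1.le
    rw [← ENNReal.ofReal_mul (by norm_num)] at this
    refine le_trans (ENNReal.ofReal_le_ofReal (by linarith)) this
  -- On the radii in `E` the jump sits within angle `c δ` of `θ`.
  have hEθ : ∀ s ∈ E, ∃ η, |η - θ| < c * δ ∧ JumpAt (sl u s) w q₁ q₂ η := by
    rintro s ⟨⟨⟨η, hη1, hη2⟩, hs1, hs2⟩, hs3⟩
    refine ⟨η, ?_, hη2⟩
    have hηθ : |η - θ| < w := by
      rw [abs_lt] at *
      constructor <;> linarith [hκ.1, hκ.2, hη1.1, hη1.2]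
    have hj := jump_dist hw1 hη2 hθ hηθ (sl_per u s) (sl_per u r)
    unfold dilDist at hs3
    rw [show (1 + (s / r - 1)) * r = s by field_simp; ring] at hs3
    have ht : s / r - 1 < δ := by rw [sub_lt_iff_lt_add, div_lt_iff₀ hr]; linarith
    have ht0 : 0 < s / r - 1 := by rw [sub_pos, lt_div_iff₀ hr]; linarith
    have h4 := (ENNReal.ofReal_le_ofReal_iff (by positivity)).1 (hj.trans hs3)
    rw [hc, div_mul_eq_mul_div, lt_div_iff₀ hdq]
    nlinarith
  have hcδ : 2 * (c * δ) < Real.pi := by linarith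
  have hlow : ENNReal.ofReal (r ^ 2 * d * c / 2 * δ ^ 2)
      ≤ ∫⁻ y in Metric.ball (pol r θ) (K * δ), ‖u y - b‖ₑ := by
    -- Whichever value `b` is proposed, one side of the jump stays away from it.
    rcases le_total ((q₁ + q₂) / 2) b with hbq | hbq
    · refine lintegral_ball_ge (E := E) (a := θ - 2 * (c * δ)) (a' := θ - c * δ) hu hr
        (fun s hs => hs.1.2) hEv hδ0 hδ1 hc0.le hcδ (by ring) le_rfl (by nlinarith) hd0.le hK ?_
      intro s hs
      obtain ⟨η, hη, hηJ⟩ := hEθ s hs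
      rw [abs_lt] at hη
      filter_upwards [hηJ.1] with τ h1 hτ
      have := h1 ⟨by linarith [hτ.1], by linarith [hτ.2]⟩
      rw [abs_sub_comm]
      refine le_trans ?_ (le_abs_self _)
      rw [hd]; linarith
    · refine lintegral_ball_ge (E := E) (a := θ + c * δ) (a' := θ + 2 * (c * δ)) hu hr
        (fun s hs => hs.1.2) hEv hδ0 hδ1 hc0.le hcδ (by ring) (by nlinarith) le_rfl hd0.le hK ?_
      intro s hs
      obtain ⟨η, hη, hηJ⟩ := hEθ s hs
      rw [abs_lt] at hη
      filter_upwards [hηJ.2] with τ h1 hτ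
      have := h1 ⟨by linarith [hτ.1], by linarith [hτ.2]⟩
      refine le_trans ?_ (le_abs_self _)
      rw [hd]; linarith
  have hKδ : 0 < K * δ := mul_pos hK0 hδ0
  have hIntb : IntegrableOn (fun y => u y - b) (Metric.ball (pol r θ) (K * δ)) :=
    hi.integrableOn.sub (integrableOn_const measure_ball_lt_top.ne)
  have e5 : ENNReal.ofReal (∫ y in Metric.ball (pol r θ) (K * δ), |u y - b|)
      = ∫⁻ y in Metric.ball (pol r θ) (K * δ), ‖u y - b‖ₑ := by
    rw [ofReal_integral_eq_lintegral_ofReal hIntb.abs (Eventually.of_forall fun y => abs_nonneg _)]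
    simp only [Real.enorm_eq_ofReal_abs]
  rw [← e5, ENNReal.ofReal_le_ofReal_iff (integral_nonneg fun y => abs_nonneg _)] at hlow
  rw [EuclideanSpace.volume_ball_fin_two, div_lt_iff₀] at e2
  · have e6 : (ENNReal.ofReal (K * δ) ^ 2 * ENNReal.ofReal Real.pi).toReal = (K * δ) ^ 2 * Real.pi := by
      rw [ENNReal.toReal_mul, ENNReal.toReal_pow, ENNReal.toReal_ofReal hKδ.le,
        ENNReal.toReal_ofReal Real.pi_pos.le]
    rw [e6] at e2
    have e7 : ε * ((K * δ) ^ 2 * Real.pi) = r ^ 2 * d * c / 2 * δ ^ 2 := by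
      rw [hε]; field_simp
    linarith
  · rw [ENNReal.toReal_mul, ENNReal.toReal_pow, ENNReal.toReal_ofReal hKδ.le,
      ENNReal.toReal_ofReal Real.pi_pos.le]
    positivity

/-- A function without approximate discontinuities has no jumps on almost every circle. -/
lemma ae_notMem_jumpSet (hu : Measurable u) (hi : Integrable u)
    (hrad : ∀ᵐ r ∂volume.restrict (Ioo 0 R), ∃ C : ℝ, 0 < C ∧ ∃ᶠ k : ℕ in atTop,
      volume {t ∈ Ioo 0 (1 / ((k:ℝ) + 1)) | ENNReal.ofReal (C * t) < dilDist u t r}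
        ≤ ENNReal.ofReal (1 / (4 * ((k:ℝ) + 1))))
    (hS : ∀ x ∈ Metric.ball (0:Plane) R, ∃ b : ℝ, Tendsto (fun ρ : ℝ =>
      (∫ y in Metric.ball x ρ, |u y - b|) / (volume (Metric.ball x ρ)).toReal) (𝓝[>] 0) (𝓝 0))
    {κ w q₁ q₂ : ℝ} (hw : 0 < w) (hw1 : w ≤ 1) (hq : q₁ < q₂) :
    ∀ᵐ r ∂volume.restrict (Ioo 0 R), r ∉ JumpSet u κ w q₁ q₂ := by
  have hd := ae_imp_of_ae_restrict
    (Besicovitch.ae_tendsto_measure_inter_div (volume : Measure ℝ) (JumpSet u κ w q₁ q₂))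
  filter_upwards [hrad, ae_restrict_of_ae hd, ae_restrict_mem measurableSet_Ioo]
    with r ⟨C, hC, hf⟩ hdr hrR hJ
  obtain ⟨θ, hθ1, hθ2⟩ := hJ
  obtain ⟨b, hb⟩ := hS (pol r θ) (by
    rw [mem_ball_zero_iff, norm_pol, abs_of_pos hrR.1]; exact hrR.2)
  exact jump_contra hu hi hrR.1 hw hw1 hq hC hθ1 hθ2 hf (hdr ⟨θ, hθ1, hθ2⟩) hb
end

/-! ### Essential continuity and stability on arcs -/

section
variable {R : ℝ} {u : Plane → ℝ} {ν : Measure Plane} {σ : Plane → Plane}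

lemma exists_left_lim {g : ℝ → ℝ} (hg : PerL1 g) (hfin : evar g < ⊤) (θ : ℝ) :
    ∃ l : ℝ, ∀ ε > 0, ∃ w > 0, ∀ τ ∈ Ioo (θ - w) θ, LebPt g τ → |g τ - l| < ε := by
  have hbv : BoundedVariationOn g ({x | LebPt g x} ∩ Icc (θ - Real.pi) (θ - Real.pi + 2 * Real.pi)) :=
    ((eVariationOn_le_evar hg _).trans_lt hfin).ne
  obtain ⟨l, hl⟩ := hbv.exists_tendsto_left θ
  refine ⟨l, fun ε hε => ?_⟩
  obtain ⟨w, hw, h⟩ := Metric.tendsto_nhdsWithin_nhds.1 hl ε hε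
  have hpi := Real.pi_pos
  refine ⟨min w Real.pi, lt_min hw hpi, fun τ hτ hL => ?_⟩
  have h1 := min_le_left w Real.pi
  have h2 := min_le_right w Real.pi
  have := h (x := τ) ⟨⟨hL, by linarith [hτ.1], by linarith [hτ.2]⟩, hτ.2⟩
    (by rw [Real.dist_eq, abs_lt]; constructor <;> linarith [hτ.1, hτ.2])
  rwa [Real.dist_eq] at this

lemma exists_right_lim {g : ℝ → ℝ} (hg : PerL1 g) (hfin : evar g < ⊤) (θ : ℝ) :
    ∃ l : ℝ, ∀ ε > 0, ∃ w > 0, ∀ τ ∈ Ioo θ (θ + w), LebPt g τ → |g τ - l| < ε := by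
  have hbv : BoundedVariationOn g ({x | LebPt g x} ∩ Icc (θ - Real.pi) (θ - Real.pi + 2 * Real.pi)) :=
    ((eVariationOn_le_evar hg _).trans_lt hfin).ne
  obtain ⟨l, hl⟩ := hbv.exists_tendsto_right θ
  refine ⟨l, fun ε hε => ?_⟩
  obtain ⟨w, hw, h⟩ := Metric.tendsto_nhdsWithin_nhds.1 hl ε hε
  have hpi := Real.pi_pos
  refine ⟨min w Real.pi, lt_min hw hpi, fun τ hτ hL => ?_⟩
  have h1 := min_le_left w Real.pi
  have h2 := min_le_right w Real.pi
  have := h (x := τ) ⟨⟨hL, by linarith [hτ.1], by linarith [hτ.2]⟩, hτ.1⟩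
    (by rw [Real.dist_eq, abs_lt]; constructor <;> linarith [hτ.1, hτ.2])
  rwa [Real.dist_eq] at this

/-- Two one-sided limits that differ produce a quantified jump. -/
lemma jumpAt_of_lims {g : ℝ → ℝ} (hg : PerL1 g) {θ l l' : ℝ} (hlt : l < l')
    (hl : ∀ ε > 0, ∃ w > 0, ∀ τ ∈ Ioo (θ - w) θ, LebPt g τ → |g τ - l| < ε)
    (hr : ∀ ε > 0, ∃ w > 0, ∀ τ ∈ Ioo θ (θ + w), LebPt g τ → |g τ - l'| < ε) :
    ∃ w q₁ q₂, 0 < w ∧ w ≤ 1 ∧ q₁ < q₂ ∧ JumpAt g w q₁ q₂ θ := by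
  obtain ⟨w1, hw1, h1⟩ := hl ((l' - l) / 3) (by linarith)
  obtain ⟨w2, hw2, h2⟩ := hr ((l' - l) / 3) (by linarith)
  have a1 := min_le_left (min w1 w2) 1
  have a2 := min_le_left w1 w2
  have a3 := min_le_right w1 w2
  refine ⟨min (min w1 w2) 1, l + (l' - l) / 3, l' - (l' - l) / 3,
    lt_min (lt_min hw1 hw2) one_pos, min_le_right _ _, by linarith, ?_, ?_⟩
  · filter_upwards [hg.ae_lebPt] with τ hτ hm
    linarith [(abs_lt.1 (h1 τ ⟨by linarith [hm.1], hm.2⟩ hτ)).2]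
  · filter_upwards [hg.ae_lebPt] with τ hτ hm
    linarith [(abs_lt.1 (h2 τ ⟨hm.1, by linarith [hm.2]⟩ hτ)).1]

lemma PerL1.neg {g : ℝ → ℝ} (hg : PerL1 g) : PerL1 (-g) :=
  ⟨hg.meas.neg, fun x => by simp [hg.per x], by simpa using hg.fin⟩

/-- A slice of finite variation without jumps is essentially uniformly continuous. -/
lemma essCont_of_no_jump {g : ℝ → ℝ} (hg : PerL1 g) (hfin : evar g < ⊤)
    (hj : ∀ w q₁ q₂ θ, 0 < w → w ≤ 1 → q₁ < q₂ → ¬ JumpAt g w q₁ q₂ θ)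
    (hj' : ∀ w q₁ q₂ θ, 0 < w → w ≤ 1 → q₁ < q₂ → ¬ JumpAt (-g) w q₁ q₂ θ) {ε : ℝ} (hε : 0 < ε) :
    ∃ h > 0, ∀ θ, ∃ m, ∀ᵐ τ, τ ∈ Ioo (θ - h) (θ + h) → |g τ - m| ≤ ε := by
  have loc : ∀ θ, ∃ m, ∃ w > 0, ∀ᵐ τ, τ ∈ Metric.ball θ w → |g τ - m| ≤ ε := by
    intro θ
    obtain ⟨l, hl⟩ := exists_left_lim hg hfin θ
    obtain ⟨l', hr⟩ := exists_right_lim hg hfin θ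
    have heq : l = l' := by
      rcases lt_trichotomy l l' with h | h | h
      · obtain ⟨w, q₁, q₂, hw, hw1, hq, hJ⟩ := jumpAt_of_lims hg h hl hr
        exact absurd hJ (hj w q₁ q₂ θ hw hw1 hq)
      · exact h
      · obtain ⟨w, q₁, q₂, hw, hw1, hq, hJ⟩ := jumpAt_of_lims hg.neg (neg_lt_neg h) (θ := θ)
          (fun ε hε => by
            obtain ⟨w, hw, h⟩ := hl ε hε
            refine ⟨w, hw, fun τ hτ hL => ?_⟩
            have hL' : LebPt g τ := by
              have := hL.neg
              simpa [LebPt, avgR] using this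
            have := h τ hτ hL'
            rwa [Pi.neg_apply, ← neg_sub', abs_neg])
          (fun ε hε => by
            obtain ⟨w, hw, h⟩ := hr ε hε
            refine ⟨w, hw, fun τ hτ hL => ?_⟩
            have hL' : LebPt g τ := by
              have := hL.neg
              simpa [LebPt, avgR] using this
            have := h τ hτ hL'
            rwa [Pi.neg_apply, ← neg_sub', abs_neg])
        exact absurd hJ (hj' w q₁ q₂ θ hw hw1 hq)
    subst heq
    obtain ⟨w1, hw1, h1⟩ := hl ε hε
    obtain ⟨w2, hw2, h2⟩ := hr ε hε
    have a2 := min_le_left w1 w2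
    have a3 := min_le_right w1 w2
    refine ⟨l, min w1 w2, lt_min hw1 hw2, ?_⟩
    have hne : ∀ᵐ τ : ℝ, τ ≠ θ := by simp [ae_iff]
    filter_upwards [hg.ae_lebPt, hne] with τ hτ hn hm
    rw [Real.ball_eq_Ioo] at hm
    rcases lt_or_gt_of_ne hn with h | h
    · exact (h1 τ ⟨by linarith [hm.1], h⟩ hτ).le
    · exact (h2 τ ⟨h, by linarith [hm.2]⟩ hτ).le
  choose m w hw hm using loc
  obtain ⟨h, hh, hleb⟩ := lebesgue_number_lemma_of_metric (isCompact_Icc (a := (0:ℝ)) (b := 2 * Real.pi))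
    (c := fun θ => Metric.ball θ (w θ)) (fun θ => Metric.isOpen_ball)
    (fun θ _ => mem_iUnion.2 ⟨θ, Metric.mem_ball_self (hw θ)⟩)
  refine ⟨h, hh, fun θ => ?_⟩
  -- translate the angle into one period
  obtain ⟨θ₀, hθ₀, k, hk⟩ : ∃ θ₀ ∈ Ico (0:ℝ) (2 * Real.pi), ∃ k : ℤ, θ = θ₀ + k * (2 * Real.pi) := by
    refine ⟨toIcoMod Real.two_pi_pos 0 θ, by simpa using toIcoMod_mem_Ico Real.two_pi_pos 0 θ,
      toIcoDiv Real.two_pi_pos 0 θ, ?_⟩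
    have := toIcoMod_add_toIcoDiv_zsmul Real.two_pi_pos 0 θ
    rw [zsmul_eq_mul] at this
    exact this.symm
  obtain ⟨η, hη⟩ := hleb θ₀ ⟨hθ₀.1, hθ₀.2.le⟩
  refine ⟨m η, ?_⟩
  have := (measurePreserving_sub_right (volume : Measure ℝ) (k * (2 * Real.pi))).quasiMeasurePreserving.ae (hm η)
  filter_upwards [this] with τ hτ hmem
  rw [hg.per.sub_int_mul_eq] at hτ
  refine hτ (hη ?_)
  rw [Real.ball_eq_Ioo]
  constructor <;> linarith [hmem.1, hmem.2]

lemma NBV.ae_evar_lt_top (h : NBV R u ν σ) : ∀ᵐ r ∂volume.restrict (Ioi 0), evar (sl u r) < ⊤ := by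
  have h1 := h.lintegral_evar
  have h2 : ∫⁻ r in Ioi 0, ENNReal.ofReal r * evar (sl u r) ≠ ⊤ := by
    rw [h1]; exact h.angMass_lt_top.ne
  have h3 := ae_lt_top (by have := measurable_evar h.meas; fun_prop) h2
  filter_upwards [h3, ae_restrict_mem measurableSet_Ioi] with r hr hr0
  refine lt_top_iff_ne_top.2 fun htop => ?_
  rw [htop, ENNReal.mul_top (by simpa using hr0)] at hr
  exact lt_irrefl _ hr

lemma mem_jumpSet_rat {r w q₁ q₂ θ : ℝ} (hw : 0 < w) (hw1 : w ≤ 1) (hq : q₁ < q₂)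
    (hJ : JumpAt (sl u r) w q₁ q₂ θ) :
    ∃ κ w' p₁ p₂ : ℚ, (0:ℝ) < w' ∧ (w':ℝ) ≤ 1 ∧ (p₁:ℝ) < p₂ ∧ r ∈ JumpSet u κ w' p₁ p₂ := by
  obtain ⟨w', h1, h2⟩ := exists_rat_btwn hw
  obtain ⟨p₁, h3, h4⟩ := exists_rat_btwn hq
  obtain ⟨p₂, h5, h6⟩ := exists_rat_btwn h4
  obtain ⟨κ, h7, h8⟩ := exists_rat_btwn (show θ - (w':ℝ) / 4 < θ + (w':ℝ) / 4 by linarith)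
  refine ⟨κ, w', p₁, p₂, h1, by linarith, h5, θ, by rw [abs_lt]; constructor <;> linarith, ?_, ?_⟩
  · filter_upwards [hJ.1] with τ hτ hm
    exact (hτ ⟨by linarith [hm.1], hm.2⟩).trans h3.le
  · filter_upwards [hJ.2] with τ hτ hm
    exact h6.le.trans (hτ ⟨hm.1, by linarith [hm.2]⟩)

/-- The exceptional radii of `ae_notMem_jumpSet`, taken over rational parameters, form a null set. -/
lemma ae_no_jump (hu : Measurable u) (hi : Integrable u)
    (hrad : ∀ᵐ r ∂volume.restrict (Ioo 0 R), ∃ C : ℝ, 0 < C ∧ ∃ᶠ k : ℕ in atTop,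
      volume {t ∈ Ioo 0 (1 / ((k:ℝ) + 1)) | ENNReal.ofReal (C * t) < dilDist u t r}
        ≤ ENNReal.ofReal (1 / (4 * ((k:ℝ) + 1))))
    (hS : ∀ x ∈ Metric.ball (0:Plane) R, ∃ b : ℝ, Tendsto (fun ρ : ℝ =>
      (∫ y in Metric.ball x ρ, |u y - b|) / (volume (Metric.ball x ρ)).toReal) (𝓝[>] 0) (𝓝 0)) :
    ∀ᵐ r ∂volume.restrict (Ioo 0 R),
      ∀ w q₁ q₂ θ, 0 < w → w ≤ 1 → q₁ < q₂ → ¬ JumpAt (sl u r) w q₁ q₂ θ := by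
  have key : ∀ κ w p₁ p₂ : ℚ, ∀ᵐ r ∂volume.restrict (Ioo 0 R),
      (0:ℝ) < w → (w:ℝ) ≤ 1 → (p₁:ℝ) < p₂ → r ∉ JumpSet u κ w p₁ p₂ := by
    intro κ w p₁ p₂
    by_cases h : (0:ℝ) < w ∧ (w:ℝ) ≤ 1 ∧ (p₁:ℝ) < p₂
    · filter_upwards [ae_notMem_jumpSet hu hi hrad hS (κ := κ) h.1 h.2.1 h.2.2] with r hr _ _ _
      exact hr
    · exact Eventually.of_forall fun r h1 h2 h3 => absurd ⟨h1, h2, h3⟩ h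
  simp_rw [← ae_all_iff] at key
  filter_upwards [key] with r hr w q₁ q₂ θ hw hw1 hq hJ
  obtain ⟨κ, w', p₁, p₂, a1, a2, a3, a4⟩ := mem_jumpSet_rat hw hw1 hq hJ
  exact hr κ w' p₁ p₂ a1 a2 a3 a4

/-- A `BV` function without approximate discontinuities is essentially uniformly continuous on
almost every circle. -/
lemma NBV.ae_essCont (h : NBV R u ν σ) (hR : 0 < R)
    (hS : ∀ x ∈ Metric.ball (0:Plane) R, ∃ b : ℝ, Tendsto (fun ρ : ℝ =>
      (∫ y in Metric.ball x ρ, |u y - b|) / (volume (Metric.ball x ρ)).toReal) (𝓝[>] 0) (𝓝 0)) :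
    ∀ᵐ r ∂volume.restrict (Ioo 0 R), ∀ ε > 0,
      ∃ h > 0, ∀ θ, ∃ m, ∀ᵐ τ, τ ∈ Ioo (θ - h) (θ + h) → |sl u r τ - m| ≤ ε := by
  have hdil : ∀ t r, dilDist (-u) t r = dilDist u t r := by
    intro t r
    simp only [dilDist, ldist, sl, Pi.neg_apply]
    refine lintegral_congr fun θ => ?_
    rw [← enorm_neg]; congr 1; ring
  have h1 := ae_no_jump h.meas h.int (h.ae_radial hR) hS
  have h2 := ae_no_jump (R := R) h.meas.neg h.int.neg
    (by simp only [hdil]; exact h.ae_radial hR)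
    (fun x hx => by
      obtain ⟨b, hb⟩ := hS x hx
      refine ⟨-b, hb.congr fun ρ => ?_⟩
      congr 1
      refine integral_congr_ae (Eventually.of_forall fun y => ?_)
      simp only [Pi.neg_apply]
      rw [← abs_neg]; congr 1; ring)
  have hsub : Ioo 0 R ⊆ Ioi 0 := fun x hx => hx.1
  filter_upwards [h1, h2, ae_restrict_of_ae_restrict_of_subset hsub h.ae_evar_lt_top,
    ae_restrict_of_ae_restrict_of_subset hsub (ae_perL1 h.meas h.int)] with r a1 a2 a3 a4 ε hε
  exact essCont_of_no_jump a4 a3 a1 a2 hε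

/-- Stability of local bounds: a function `L¹`-close to `g` with almost no more variation than `g`
inherits, up to `ε`, the bounds that `g` satisfies on short arcs. -/
lemma arc_stability {g : ℝ → ℝ} (hg : PerL1 g) (hfin : evar g < ⊤) {a ε : ℝ} (ha : 0 < a)
    (hε : 0 < ε) : ∃ η > 0, ∀ w, PerL1 w → evar w ≤ evar g + ENNReal.ofReal η →
      ldist w g ≤ ENNReal.ofReal η → ∀ θ m ρ, (∀ᵐ s, s ∈ Ioo (θ - a) (θ + a) → |g s - m| ≤ ρ) →
        ∀ᵐ s, s ∈ Ioo (θ - a / 2) (θ + a / 2) → |w s - m| ≤ ρ + ε := by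
  -- A step at which the difference quotient of `g` nearly attains its variation.
  obtain ⟨n, hn1, hn2⟩ : ∃ n : ℕ, evar g ≤ ((n:ℝ≥0∞) + 1) * tinc g (1 / ((n:ℝ) + 1)) + ENNReal.ofReal ε
      ∧ 1 / ((n:ℝ) + 1) < a / 2 := by
    have e2 : ∀ᶠ n : ℕ in atTop, 1 / ((n:ℝ) + 1) < a / 2 :=
      tendsto_one_div_add_atTop_nhds_zero_nat.eventually (gt_mem_nhds (by linarith))
    have e1 : ∀ᶠ n : ℕ in atTop,
        evar g ≤ ((n:ℝ≥0∞) + 1) * tinc g (1 / ((n:ℝ) + 1)) + ENNReal.ofReal ε := by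
      by_cases h0 : evar g = 0
      · exact Eventually.of_forall fun n => by rw [h0]; exact zero_le
      have hlt : evar g - ENNReal.ofReal ε < evar g :=
        ENNReal.sub_lt_self hfin.ne h0 (by simpa using hε)
      filter_upwards [eventually_lt_of_lt_liminf hlt] with n hn
      exact tsub_le_iff_right.1 hn.le
    exact (e1.and e2).exists
  obtain ⟨h, hh⟩ : ∃ h : ℝ, h = 1 / ((n:ℝ) + 1) := ⟨_, rfl⟩
  have hh0 : 0 < h := by rw [hh]; positivity
  have hh1 : h ≤ 1 := by
    rw [hh, div_le_one (by positivity)]; have : (0:ℝ) ≤ n := Nat.cast_nonneg n; linarith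
  rw [← hh] at hn1 hn2
  have hpi := Real.pi_gt_three
  have hinv : ENNReal.ofReal h * ((n:ℝ≥0∞) + 1) = 1 := by
    have : ((n:ℝ≥0∞) + 1) = ENNReal.ofReal ((n:ℝ) + 1) := by
      rw [ENNReal.ofReal_add (by positivity) zero_le_one]; simp
    rw [this, ← ENNReal.ofReal_mul hh0.le, hh]
    rw [one_div_mul_cancel (by positivity)]; simp
  have hev : ENNReal.ofReal h * evar g ≤ tinc g h + ENNReal.ofReal (h * ε) := by
    calc ENNReal.ofReal h * evar g
        ≤ ENNReal.ofReal h * (((n:ℝ≥0∞) + 1) * tinc g h + ENNReal.ofReal ε) := by gcongr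
      _ = _ := by rw [mul_add, ← mul_assoc, hinv, one_mul, ENNReal.ofReal_mul hh0.le]
  have htfin : tinc g h ≠ ⊤ := ((tinc_le hg hh0).trans_lt (ENNReal.mul_lt_top (by simp) hfin)).ne
  refine ⟨h * ε / 7, by positivity, fun w hw hwe hwd θ m ρ hb => ?_⟩
  filter_upwards [hw.ae_lebPt] with x hx hxm
  have hcl := evar_closeness hw hg hx hh0 (by linarith) (m := m) (ρ := ρ) (by
    filter_upwards [hb] with s hs hsm
    exact hs ⟨by linarith [hsm.1, hxm.1], by linarith [hsm.2, hxm.2]⟩)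
  have h2 : tinc g h + ENNReal.ofReal h * ENNReal.ofReal (2 * (|w x - m| - ρ))
      ≤ tinc g h + ENNReal.ofReal (h * (2 * ε)) := by
    calc _ ≤ ENNReal.ofReal h * evar w + 6 * ldist w g := hcl
      _ ≤ ENNReal.ofReal h * (evar g + ENNReal.ofReal (h * ε / 7)) + 6 * ENNReal.ofReal (h * ε / 7) := by
          gcongr
      _ = ENNReal.ofReal h * evar g + ENNReal.ofReal (h * (h * ε / 7) + 6 * (h * ε / 7)) := by
          rw [mul_add, add_assoc, ENNReal.ofReal_add (by positivity) (by positivity),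
            ENNReal.ofReal_mul hh0.le, ENNReal.ofReal_mul (p := 6) (by norm_num)]
          simp
      _ ≤ (tinc g h + ENNReal.ofReal (h * ε)) + ENNReal.ofReal (h * ε) := by
          gcongr
          nlinarith [mul_pos hh0 hε]
      _ = _ := by
          rw [add_assoc, ← ENNReal.ofReal_add (by positivity) (by positivity)]
          congr 2; ring
  rw [ENNReal.add_le_add_iff_left htfin, ← ENNReal.ofReal_mul hh0.le,
    ENNReal.ofReal_le_ofReal_iff (by positivity), mul_le_mul_iff_right₀ hh0] at h2
  linarith
end

/-! ### The precise representative on circles -/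

section
variable {R : ℝ} {u : Plane → ℝ} {ν : Measure Plane} {σ : Plane → Plane}

/-- The precise representative obeys bounds that hold outside sets of density zero. -/
lemma abs_preciseRep_sub_le {v : Plane → ℝ} {x : Plane} {m ρ : ℝ}
    (h : ∀ ε > 0, Tendsto (fun δ => volume (Metric.ball x δ ∩ {y | ρ + ε < |v y - m|})
      / volume (Metric.ball x δ)) (𝓝[>] 0) (𝓝 0)) : |preciseRep v x - m| ≤ ρ := by
  set T := {t : ℝ | Tendsto (fun r : ℝ =>
      volume (Metric.ball x r ∩ {y | t < v y}) / volume (Metric.ball x r)) (𝓝[>] 0) (𝓝 0)} with hT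
  have hprec : preciseRep v x = sInf T := rfl
  have hmem : ∀ ε > 0, m + ρ + ε ∈ T := by
    intro ε hε
    refine tendsto_of_tendsto_of_tendsto_of_le_of_le tendsto_const_nhds (h ε hε)
      (fun _ => zero_le) (fun δ => ?_)
    refine ENNReal.div_le_div_right (measure_mono (inter_subset_inter_right _ fun y hy => ?_)) _
    exact lt_of_lt_of_le (by have : m + ρ + ε < v y := hy; linarith) (le_abs_self (v y - m))
  have hlow : ∀ t ∈ T, m - ρ ≤ t := by
    intro t ht
    by_contra! hlt
    obtain ⟨ε, hε⟩ : ∃ ε, ε = (m - ρ - t) / 2 := ⟨_, rfl⟩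
    have hε0 : 0 < ε := by rw [hε]; linarith
    have hsum := Tendsto.add ht (h ε hε0)
    rw [add_zero] at hsum
    have h1 : ∀ᶠ δ : ℝ in 𝓝[>] 0, (1:ℝ≥0∞) ≤ volume (Metric.ball x δ ∩ {y | t < v y})
        / volume (Metric.ball x δ) + volume (Metric.ball x δ ∩ {y | ρ + ε < |v y - m|})
        / volume (Metric.ball x δ) := by
      filter_upwards [self_mem_nhdsWithin] with δ hδ
      rw [← ENNReal.add_div, ENNReal.le_div_iff_mul_le (Or.inl (Metric.measure_ball_pos _ _ hδ).ne')
        (Or.inl measure_ball_lt_top.ne), one_mul]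
      refine le_trans (measure_mono fun y hy => ?_) (measure_union_le _ _)
      rcases lt_or_ge t (v y) with hv | hv
      · exact Or.inl ⟨hy, hv⟩
      · refine Or.inr ⟨hy, ?_⟩
        change ρ + ε < |v y - m|
        rw [abs_sub_comm]
        exact lt_of_lt_of_le (by linarith) (le_abs_self _)
    have := ge_of_tendsto hsum h1
    simp at this
  rw [hprec, abs_le]
  constructor
  · linarith [le_csInf ⟨_, hmem 1 one_pos⟩ hlow]
  · have : sInf T ≤ m + ρ := le_of_forall_pos_le_add fun ε hε => csInf_le ⟨_, hlow⟩ (hmem ε hε)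
    linarith

/-- A countable family of functions approximating every slice in `L¹`. -/
lemma exists_dense_seq : ∃ G : ℕ → ℝ → ℝ, (∀ j, Measurable (G j)) ∧
    ∀ g, PerL1 g → ∀ η : ℝ≥0∞, 0 < η → ∃ j, ldist g (G j) < η := by
  have : Fact ((1:ℝ≥0∞) ≤ 1) := ⟨le_rfl⟩
  have : Fact ((1:ℝ≥0∞) ≠ ⊤) := ⟨by simp⟩
  set μ : Measure ℝ := volume.restrict (Ioc 0 (2 * Real.pi)) with hμ
  let D := TopologicalSpace.denseSeq (Lp ℝ 1 μ)
  refine ⟨fun j => (D j : ℝ → ℝ),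
    fun j => (Lp.stronglyMeasurable (D j)).measurable, fun g hg η hη => ?_⟩
  have hgm : MemLp g 1 μ := memLp_one_iff_integrable.2 ⟨hg.meas.aestronglyMeasurable, hg.fin⟩
  obtain ⟨j, hj⟩ := (TopologicalSpace.denseRange_denseSeq (Lp ℝ 1 μ)).exists_mem_open
    (Metric.isOpen_eball (x := hgm.toLp g) (ε := η)) ⟨_, Metric.mem_eball_self hη⟩
  refine ⟨j, lt_of_eq_of_lt ?_ hj⟩
  rw [edist_comm, Lp.edist_def, eLpNorm_one_eq_lintegral_enorm]
  unfold ldist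
  refine lintegral_congr_ae ?_
  filter_upwards [hgm.coeFn_toLp] with θ hθ
  simp only [Pi.sub_apply, hθ]; rfl

lemma ldist_triangle {f g k : ℝ → ℝ} (hf : Measurable f) (hg : Measurable g) :
    ldist f k ≤ ldist f g + ldist k g := by
  rw [ldist_comm k g]
  unfold ldist
  rw [← lintegral_add_left (f := fun θ => ‖f θ - g θ‖ₑ) (hf.sub hg).enorm]
  refine lintegral_mono fun θ => ?_
  simp only [← edist_eq_enorm_sub]
  exact edist_triangle _ _ _

/-- Almost every radius is a point of approximate continuity of the slices and of their
variation. -/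
lemma ae_approx_cont (hu : Measurable u) (hi : Integrable u) :
    ∀ᵐ r ∂volume.restrict (Ioi 0), evar (sl u r) < ⊤ → ∀ η > 0, ∃ N : Set ℝ, MeasurableSet N ∧
      (∀ s ∉ N, evar (sl u s) ≤ evar (sl u r) + ENNReal.ofReal η ∧
        ldist (sl u s) (sl u r) ≤ ENNReal.ofReal η) ∧
      Tendsto (fun δ => volume (N ∩ Metric.closedBall r δ) / volume (Metric.closedBall r δ))
        (𝓝[>] 0) (𝓝 0) := by
  obtain ⟨G, hG, hdense⟩ := exists_dense_seq
  -- Countably many sets of bad radii; almost every radius outside one of them is a point of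
  -- density zero for it.
  let N : ℕ → ℚ → ℚ → Set ℝ := fun j p q =>
    {s | ENNReal.ofReal p ≤ evar (sl u s) ∨ ENNReal.ofReal q ≤ ldist (sl u s) (G j)}
  have hN : ∀ j p q, MeasurableSet (N j p q) := fun j p q =>
    (measurableSet_le measurable_const (measurable_evar hu)).union
      (measurableSet_le measurable_const (measurable_ldist_const hu (hG j)))
  have hall : ∀ᵐ r : ℝ, ∀ j p q, Tendsto (fun δ => volume (N j p q ∩ Metric.closedBall r δ)
      / volume (Metric.closedBall r δ)) (𝓝[>] 0) (𝓝 ((N j p q).indicator 1 r)) := by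
    simp_rw [ae_all_iff]
    exact fun j p q => Besicovitch.ae_tendsto_measure_inter_div_of_measurableSet _ (hN j p q)
  filter_upwards [ae_restrict_of_ae hall, ae_perL1 hu hi] with r hr hper hfin η hη
  obtain ⟨j, hj⟩ := hdense _ hper (ENNReal.ofReal (η / 2)) (by simpa using hη)
  obtain ⟨p, hp1, hp2⟩ := exists_rat_btwn
    (show (evar (sl u r)).toReal < (evar (sl u r)).toReal + η by linarith)
  have hjt : ldist (sl u r) (G j) ≠ ⊤ := hj.ne_top
  obtain ⟨q, hq1, hq2⟩ := exists_rat_btwn ((ENNReal.lt_ofReal_iff_toReal_lt hjt).1 hj)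
  have hsum : ENNReal.ofReal p ≤ evar (sl u r) + ENNReal.ofReal η := by
    rw [← ENNReal.ofReal_toReal hfin.ne, ← ENNReal.ofReal_add ENNReal.toReal_nonneg hη.le]
    exact ENNReal.ofReal_le_ofReal hp2.le
  have hrN : r ∉ N j p q := by
    rintro (h | h)
    · exact absurd h (not_le.2 ((ENNReal.lt_ofReal_iff_toReal_lt hfin.ne).2 hp1))
    · exact absurd h (not_le.2 ((ENNReal.lt_ofReal_iff_toReal_lt hjt).2 hq1))
  refine ⟨N j p q, hN j p q, fun s hs => ?_, ?_⟩
  · have hs' : evar (sl u s) < ENNReal.ofReal p ∧ ldist (sl u s) (G j) < ENNReal.ofReal q := by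
      have : ¬ (_ ∨ _) := hs
      rw [not_or, not_le, not_le] at this
      exact this
    refine ⟨hs'.1.le.trans hsum, (ldist_triangle (sl_meas hu s) (hG j)).trans ?_⟩
    have : ENNReal.ofReal η = ENNReal.ofReal (η / 2) + ENNReal.ofReal (η / 2) := by
      rw [← ENNReal.ofReal_add (by positivity) (by positivity)]; congr 1; ring
    rw [this]
    exact add_le_add (hs'.2.le.trans (ENNReal.ofReal_le_ofReal hq2.le)) hj.le
  · have := hr j p q
    rwa [indicator_of_notMem hrN] at this

/-- Near `pol r θ`, small balls are narrow in the angular direction. -/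
lemma abs_angle_lt {r s θ τ δ : ℝ} (hr : 0 < r) (hδ : 0 < δ) (hs : r / 2 ≤ s)
    (hτ : |τ - θ| ≤ Real.pi) (hd : dist (pol s τ) (pol r θ) < δ) :
    |τ - θ| < Real.pi / r * δ := by
  have h1 := dist_pol_sq r s θ τ
  have h2 := Real.cos_le_one_sub_mul_cos_sq hτ
  have hpi := Real.pi_pos
  have h3 : dist (pol s τ) (pol r θ) ^ 2 < δ ^ 2 := by
    have := dist_nonneg (x := pol s τ) (y := pol r θ)
    nlinarith
  have h4 : r * r * (2 / Real.pi ^ 2 * (τ - θ) ^ 2) ≤ 2 * s * r * (1 - Real.cos (τ - θ)) := by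
    refine mul_le_mul (by nlinarith) (by linarith) (by positivity) (by nlinarith)
  refine lt_of_pow_lt_pow_left₀ 2 (by positivity) ?_
  rw [sq_abs]
  have h5 : r * r * (2 / Real.pi ^ 2 * (τ - θ) ^ 2) < δ ^ 2 := by nlinarith [sq_nonneg (s - r)]
  have h6 : (τ - θ) ^ 2 * 2 < (Real.pi / r * δ) ^ 2 := by
    have : (Real.pi / r * δ) ^ 2 = Real.pi ^ 2 / r ^ 2 * δ ^ 2 := by ring
    rw [this, div_mul_eq_mul_div, lt_div_iff₀ (by positivity)]
    have h7 : Real.pi ^ 2 * (r * r * (2 / Real.pi ^ 2 * (τ - θ) ^ 2)) = (τ - θ) ^ 2 * 2 * r ^ 2 := by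
      field_simp
    rw [← h7]
    exact mul_lt_mul_of_pos_left h5 (by positivity)
  nlinarith [sq_nonneg (τ - θ)]

/-- A polar Fubini estimate for the measure of the bad part of a small ball. -/
lemma volume_bad_le {v : Plane → ℝ} (hv : Measurable v) {r θ m b a δ : ℝ} (hr : 0 < r)
    {N : Set ℝ} (hN : MeasurableSet N) (hδ : 0 < δ) (hδr : δ < r / 2)
    (hδa : Real.pi / r * δ ≤ a)
    (hgood : ∀ᵐ s ∂volume.restrict (Ioi 0), s ∉ N →
      ∀ᵐ τ, τ ∈ Ioo (θ - a) (θ + a) → |sl v s τ - m| ≤ b) :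
    volume (Metric.ball (pol r θ) δ ∩ {y | b < |v y - m|})
      ≤ ENNReal.ofReal (4 * Real.pi * δ) * volume (N ∩ Metric.closedBall r δ) := by
  have hpi := Real.pi_pos
  set B := Metric.ball (pol r θ) δ ∩ {y | b < |v y - m|} with hB
  have hBm : MeasurableSet B := Metric.isOpen_ball.measurableSet.inter
    (measurableSet_lt measurable_const (by fun_prop))
  rw [← lintegral_indicator_one hBm,
    lintegral_polar (f := B.indicator 1) (measurable_one.indicator hBm) (θ - Real.pi)]
  have hNm : MeasurableSet (N ∩ Metric.closedBall r δ) := hN.inter Metric.isClosed_closedBall.measurableSet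
  calc _ ≤ ∫⁻ s in Ioi 0, (N ∩ Metric.closedBall r δ).indicator
        (fun _ => ENNReal.ofReal (4 * Real.pi * δ)) s := by
        refine lintegral_mono_ae ?_
        filter_upwards [hgood, ae_restrict_mem measurableSet_Ioi] with s hs hs0
        have hs0' : 0 < s := hs0
        by_cases hsr : s ∈ Metric.closedBall r δ
        swap
        · have : ∀ τ, B.indicator (1 : Plane → ℝ≥0∞) (pol s τ) = 0 := fun τ => by
            refine indicator_of_notMem (fun hm => hsr ?_) _
            have h1 : dist (pol s τ) (pol r θ) < δ := hm.1
            rw [Metric.mem_closedBall, Real.dist_eq]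
            have h2 := abs_norm_sub_norm_le (pol s τ) (pol r θ)
            rw [norm_pol, norm_pol, abs_of_pos hs0', abs_of_pos hr, ← dist_eq_norm] at h2
            exact (h2.trans_lt h1).le
          simp [this]
        have hsr' : |s - r| ≤ δ := by rwa [Metric.mem_closedBall, Real.dist_eq] at hsr
        rw [abs_le] at hsr'
        have hang : ∀ τ ∈ Ioc (θ - Real.pi) (θ - Real.pi + 2 * Real.pi), pol s τ ∈ B →
            τ ∈ Ioo (θ - Real.pi / r * δ) (θ + Real.pi / r * δ) := fun τ hτ hm => by
          have := abs_angle_lt (θ := θ) (τ := τ) hr hδ (s := s) (by linarith)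
            (by rw [abs_le]; constructor <;> linarith [hτ.1, hτ.2]) hm.1
          rw [abs_lt] at this
          constructor <;> linarith [this.1, this.2]
        by_cases hsN : s ∈ N
        · rw [indicator_of_mem (show s ∈ N ∩ Metric.closedBall r δ from ⟨hsN, hsr⟩)]
          calc _ ≤ ENNReal.ofReal s * ∫⁻ τ in Ioc (θ - Real.pi) (θ - Real.pi + 2 * Real.pi),
                (Ioo (θ - Real.pi / r * δ) (θ + Real.pi / r * δ)).indicator 1 τ := by
                gcongr 1
                refine setLIntegral_mono (measurable_one.indicator measurableSet_Ioo) fun τ hτ => ?_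
                by_cases hm : pol s τ ∈ B
                · rw [indicator_of_mem hm, indicator_of_mem (hang τ hτ hm)]; simp
                · rw [indicator_of_notMem hm]; exact zero_le
            _ ≤ ENNReal.ofReal s * ∫⁻ τ,
                (Ioo (θ - Real.pi / r * δ) (θ + Real.pi / r * δ)).indicator 1 τ := by
                gcongr 1
                exact setLIntegral_le_lintegral _ _
            _ ≤ _ := by
                rw [lintegral_indicator_one measurableSet_Ioo, Real.volume_Ioo,
                  ← ENNReal.ofReal_mul hs0'.le]
                refine ENNReal.ofReal_le_ofReal ?_
                have : (2 * r) * (2 * (Real.pi / r * δ)) = 4 * Real.pi * δ := by field_simp; ring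
                rw [← this]
                refine mul_le_mul (by linarith) (by linarith) ?_ (by linarith)
                have : 0 < Real.pi / r * δ := by positivity
                linarith
        · have h0 : ∫⁻ τ in Ioc (θ - Real.pi) (θ - Real.pi + 2 * Real.pi),
              B.indicator (1 : Plane → ℝ≥0∞) (pol s τ) = 0 := by
            rw [← lintegral_zero (μ := volume.restrict
              (Ioc (θ - Real.pi) (θ - Real.pi + 2 * Real.pi)))]
            refine lintegral_congr_ae ?_
            filter_upwards [ae_restrict_of_ae (hs hsN), ae_restrict_mem measurableSet_Ioc] with τ h1 hτ
            refine indicator_of_notMem (fun hm => ?_) _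
            have h2 := hang τ hτ hm
            exact absurd (h1 ⟨by linarith [h2.1], by linarith [h2.2]⟩) (not_le.2 hm.2)
          rw [h0, mul_zero]; exact zero_le
    _ ≤ _ := by
        refine (setLIntegral_le_lintegral _ _).trans ?_
        rw [lintegral_indicator_const hNm]

/-- On almost every circle, essential bounds on arcs pass to the precise representative. -/
lemma NBV.ae_preciseRep (h : NBV R u ν σ) : ∀ᵐ r ∂volume.restrict (Ioi 0), ∀ θ m ρ a : ℝ, 0 < a →
    (∀ᵐ τ, τ ∈ Ioo (θ - a) (θ + a) → |sl u r τ - m| ≤ ρ) →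
      |preciseRep u (pol r θ) - m| ≤ ρ := by
  have hper := ae_perL1 h.meas h.int
  filter_upwards [ae_approx_cont h.meas h.int, h.ae_evar_lt_top, hper,
    ae_restrict_mem measurableSet_Ioi] with r hac hfin hgr hr0 θ m ρ a ha hb
  have hr : 0 < r := hr0
  have hpi := Real.pi_pos
  refine abs_preciseRep_sub_le fun ε hε => ?_
  obtain ⟨η, hη, hst⟩ := arc_stability hgr hfin ha hε
  obtain ⟨N, hN, hNs, hNd⟩ := hac hfin η hη
  have hgood : ∀ᵐ s ∂volume.restrict (Ioi 0), s ∉ N →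
      ∀ᵐ τ, τ ∈ Ioo (θ - a / 2) (θ + a / 2) → |sl u s τ - m| ≤ ρ + ε := by
    filter_upwards [hper] with s hs hsN
    exact hst _ hs (hNs s hsN).1 (hNs s hsN).2 θ m ρ hb
  have hlim := ENNReal.Tendsto.const_mul (a := 8) hNd (Or.inr (by simp))
  rw [mul_zero] at hlim
  have ev : ∀ᶠ δ : ℝ in 𝓝[>] 0, 0 < δ ∧ δ < r / 2 ∧ Real.pi / r * δ ≤ a / 2 := by
    have e1 : ∀ᶠ δ : ℝ in 𝓝 0, δ < r / 2 := gt_mem_nhds (by linarith)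
    have e2 : ∀ᶠ δ : ℝ in 𝓝 0, δ < a / 2 / (Real.pi / r) := gt_mem_nhds (by positivity)
    filter_upwards [self_mem_nhdsWithin, nhdsWithin_le_nhds e1, nhdsWithin_le_nhds e2] with δ h1 h2 h3
    refine ⟨h1, h2, ?_⟩
    rw [lt_div_iff₀ (by positivity)] at h3
    linarith
  refine tendsto_of_tendsto_of_tendsto_of_le_of_le' tendsto_const_nhds hlim
    (Eventually.of_forall fun _ => zero_le) ?_
  filter_upwards [ev] with δ ⟨hδ, hδr, hδa⟩
  have hle := volume_bad_le h.meas hr hN hδ hδr hδa hgood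
  have hvb : volume (Metric.ball (pol r θ) δ) = ENNReal.ofReal (Real.pi * δ ^ 2) := by
    rw [EuclideanSpace.volume_ball_fin_two, ← ENNReal.ofReal_pow hδ.le,
      ← ENNReal.ofReal_mul (by positivity), mul_comm]
  have hvc : volume (Metric.closedBall r δ) = ENNReal.ofReal (2 * δ) := Real.volume_closedBall _ _
  have hpos : ENNReal.ofReal (Real.pi * δ ^ 2) ≠ 0 := by
    rw [Ne, ENNReal.ofReal_eq_zero, not_le]; positivity
  have hpos2 : ENNReal.ofReal (2 * δ) ≠ 0 := by
    rw [Ne, ENNReal.ofReal_eq_zero, not_le]; positivity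
  rw [hvb, hvc]
  refine ENNReal.div_le_of_le_mul (hle.trans_eq ?_)
  have h8 : ENNReal.ofReal (4 * Real.pi * δ) * ENNReal.ofReal (2 * δ)
      = 8 * ENNReal.ofReal (Real.pi * δ ^ 2) := by
    rw [← ENNReal.ofReal_mul (by positivity), ← ENNReal.ofReal_ofNat 8,
      ← ENNReal.ofReal_mul (by norm_num)]
    congr 1; ring
  have h9 : volume (N ∩ Metric.closedBall r δ)
      = ENNReal.ofReal (2 * δ) * (volume (N ∩ Metric.closedBall r δ) / ENNReal.ofReal (2 * δ)) :=
    (ENNReal.mul_div_cancel hpos2 ENNReal.ofReal_ne_top).symm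
  conv_lhs => rw [h9, ← mul_assoc, h8]
  ring
end

/-! ### Convergence on almost every circle -/

section
variable {R : ℝ} {u : Plane → ℝ} {ν : Measure Plane} {σ : Plane → Plane}

lemma exists_subseq_ae_tendsto {α : Type*} [MeasurableSpace α] {μ : Measure α} {f : ℕ → α → ℝ≥0∞}
    (hf : ∀ i, Measurable (f i)) (h : Tendsto (fun i => ∫⁻ x, f i x ∂μ) atTop (𝓝 0)) :
    ∃ φ : ℕ → ℕ, StrictMono φ ∧ ∀ᵐ x ∂μ, Tendsto (fun i => f (φ i) x) atTop (𝓝 0) := by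
  obtain ⟨φ, hφ, hle⟩ := extraction_forall_of_eventually (P := fun n k =>
    ∫⁻ x, f k x ∂μ ≤ (2:ℝ≥0∞)⁻¹ ^ n) fun n => by
      have hpos : (0:ℝ≥0∞) < (2:ℝ≥0∞)⁻¹ ^ n := ENNReal.pow_pos (by simp) n
      filter_upwards [h.eventually (gt_mem_nhds hpos)] with k hk using hk.le
  refine ⟨φ, hφ, ?_⟩
  have hsum : ∫⁻ x, ∑' i, f (φ i) x ∂μ ≠ ⊤ := by
    rw [lintegral_tsum fun i => (hf _).aemeasurable]
    refine ne_top_of_le_ne_top ?_ (ENNReal.tsum_le_tsum hle)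
    rw [ENNReal.tsum_geometric]
    simp
  filter_upwards [ae_lt_top (Measurable.tsum fun i => hf (φ i)) hsum] with x hx
  exact ENNReal.tendsto_atTop_zero_of_tsum_ne_top hx.ne

/-- Lower semicontinuity of the essential variation under `L¹` convergence. -/
lemma evar_sub_tendsto {g : ℝ → ℝ} {w : ℕ → ℝ → ℝ} (hg : PerL1 g) (hfin : evar g < ⊤)
    (hw : ∀ i, PerL1 (w i)) (hd : Tendsto (fun i => ldist (w i) g) atTop (𝓝 0)) :
    Tendsto (fun i => evar g - evar (w i)) atTop (𝓝 0) := by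
  rw [ENNReal.tendsto_nhds_zero]
  intro ε hε
  have hε2 : 0 < ε / 2 := ENNReal.half_pos hε.ne'
  obtain ⟨n, hn⟩ : ∃ n : ℕ, evar g ≤ ((n:ℝ≥0∞) + 1) * tinc g (1 / ((n:ℝ) + 1)) + ε / 2 := by
    by_cases h0 : evar g = 0
    · exact ⟨0, by rw [h0]; exact zero_le⟩
    have hlt : evar g - ε / 2 < evar g := ENNReal.sub_lt_self hfin.ne h0 hε2.ne'
    obtain ⟨n, hn⟩ := (eventually_lt_of_lt_liminf hlt).exists
    exact ⟨n, tsub_le_iff_right.1 hn.le⟩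
  have hlim : Tendsto (fun i => ((n:ℝ≥0∞) + 1) * (2 * ldist (w i) g)) atTop (𝓝 0) := by
    have := ENNReal.Tendsto.const_mul (a := ((n:ℝ≥0∞) + 1) * 2) hd (Or.inr (by finiteness))
    rw [mul_zero] at this
    simpa only [mul_assoc] using this
  filter_upwards [hlim.eventually (gt_mem_nhds hε2)] with i hi
  rw [tsub_le_iff_right]
  have hpos : (0:ℝ) < 1 / ((n:ℝ) + 1) := by positivity
  have hinv : ((n:ℝ≥0∞) + 1) * ENNReal.ofReal (1 / ((n:ℝ) + 1)) = 1 := by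
    have : ((n:ℝ≥0∞) + 1) = ENNReal.ofReal ((n:ℝ) + 1) := by
      rw [ENNReal.ofReal_add (by positivity) zero_le_one]; simp
    rw [this, ← ENNReal.ofReal_mul (by positivity), mul_one_div_cancel (by positivity)]; simp
  calc evar g ≤ ((n:ℝ≥0∞) + 1) * tinc g (1 / ((n:ℝ) + 1)) + ε / 2 := hn
    _ ≤ ((n:ℝ≥0∞) + 1) * (ENNReal.ofReal (1 / ((n:ℝ) + 1)) * evar (w i) + 2 * ldist (w i) g)
        + ε / 2 := by
        gcongr
        exact (tinc_le_add (hw i) hg _).trans (by gcongr; exact tinc_le (hw i) hpos)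
    _ = evar (w i) + ((n:ℝ≥0∞) + 1) * (2 * ldist (w i) g) + ε / 2 := by
        rw [mul_add, ← mul_assoc, hinv, one_mul]
    _ ≤ evar (w i) + ε / 2 + ε / 2 := by gcongr
    _ = ε + evar (w i) := by rw [add_assoc, ENNReal.add_halves, add_comm]

/-- Convergence of the total angular variation forces the excess variation of the slices to vanish
in the mean. -/
lemma tendsto_excess {ui : ℕ → Plane → ℝ} {νi : ℕ → Measure Plane} {σi : ℕ → Plane → Plane}
    (hi : ∀ i, NBV R (ui i) (νi i) (σi i)) (h : NBV R u ν σ)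
    (hmass : ∀ ε > 0, ∀ᶠ i in atTop, angMass (νi i) (σi i) ≤ angMass ν σ + ε)
    (hd : ∀ᵐ r ∂volume.restrict (Ioi 0),
      Tendsto (fun i => ldist (sl (ui i) r) (sl u r)) atTop (𝓝 0)) :
    Tendsto (fun i => ∫⁻ r in Ioi 0, ENNReal.ofReal r * (evar (sl (ui i) r) - evar (sl u r)))
      atTop (𝓝 0) := by
  have mV := measurable_evar h.meas
  have mVi := fun i => measurable_evar (hi i).meas
  have hlow : Tendsto (fun i => ∫⁻ r in Ioi 0,
      ENNReal.ofReal r * (evar (sl u r) - evar (sl (ui i) r))) atTop (𝓝 0) := by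
    rw [← lintegral_zero (μ := volume.restrict (Ioi (0:ℝ)))]
    refine tendsto_lintegral_of_dominated_convergence (fun r => ENNReal.ofReal r * evar (sl u r))
      (fun i => by have := mVi i; fun_prop) (fun i => Eventually.of_forall fun r => ?_) ?_ ?_
    · simp only
      gcongr
      exact tsub_le_self
    · rw [h.lintegral_evar]; exact h.angMass_lt_top.ne
    · filter_upwards [hd, ae_perL1 h.meas h.int, h.ae_evar_lt_top,
        ae_all_iff.2 fun i => ae_perL1 (hi i).meas (hi i).int] with r h1 h2 h3 h4
      have := ENNReal.Tendsto.const_mul (a := ENNReal.ofReal r) (evar_sub_tendsto h2 h3 h4 h1)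
        (Or.inr ENNReal.ofReal_ne_top)
      rwa [mul_zero] at this
  rw [ENNReal.tendsto_nhds_zero] at hlow ⊢
  intro ε hε
  have hε2 : 0 < ε / 2 := ENNReal.half_pos hε.ne'
  filter_upwards [hlow _ hε2, hmass _ hε2] with i h1 h2
  -- `V + (Vᵢ - V)⁺ = Vᵢ + (V - Vᵢ)⁺`, integrated over the radii.
  have key : angMass ν σ + ∫⁻ r in Ioi 0, ENNReal.ofReal r * (evar (sl (ui i) r) - evar (sl u r))
      = angMass (νi i) (σi i)
        + ∫⁻ r in Ioi 0, ENNReal.ofReal r * (evar (sl u r) - evar (sl (ui i) r)) := by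
    have := mVi i
    rw [← h.lintegral_evar, ← (hi i).lintegral_evar, ← lintegral_add_left (by fun_prop),
      ← lintegral_add_left (by fun_prop)]
    refine lintegral_congr fun r => ?_
    rw [← mul_add, ← mul_add, add_tsub_eq_max, add_tsub_eq_max, max_comm]
  have h3 : angMass ν σ + ∫⁻ r in Ioi 0, ENNReal.ofReal r * (evar (sl (ui i) r) - evar (sl u r))
      ≤ angMass ν σ + ε := by
    rw [key, ← ENNReal.add_halves ε, ← add_assoc]
    exact add_le_add h2 h1
  exact (ENNReal.add_le_add_iff_left h.angMass_lt_top.ne).1 h3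

lemma tendsto_of_ofReal_mul {r : ℝ} (hr : 0 < r) {f : ℕ → ℝ≥0∞}
    (h : Tendsto (fun i => ENNReal.ofReal r * f i) atTop (𝓝 0)) : Tendsto f atTop (𝓝 0) := by
  have h0 : ENNReal.ofReal r ≠ 0 := by simpa using hr
  have := ENNReal.Tendsto.const_mul (a := (ENNReal.ofReal r)⁻¹) h
    (Or.inr (ENNReal.inv_ne_top.2 h0))
  rw [mul_zero] at this
  refine this.congr fun i => ?_
  rw [← mul_assoc, ENNReal.inv_mul_cancel h0 ENNReal.ofReal_ne_top, one_mul]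

/-- The uniform convergence on circles for Borel representatives vanishing off the disc. -/
lemma NBV.uniform_on_spheres {ui : ℕ → Plane → ℝ} {νi : ℕ → Measure Plane}
    {σi : ℕ → Plane → Plane} (hR : 0 < R) (hi : ∀ i, NBV R (ui i) (νi i) (σi i)) (h : NBV R u ν σ)
    (hL : Tendsto (fun i => ∫⁻ x, ‖ui i x - u x‖ₑ) atTop (𝓝 0))
    (hν : Tendsto (fun i => (νi i).real univ) atTop (𝓝 (ν.real univ)))
    (hS : ∀ x ∈ Metric.ball (0:Plane) R, ∃ b : ℝ, Tendsto (fun ρ : ℝ =>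
      (∫ y in Metric.ball x ρ, |u y - b|) / (volume (Metric.ball x ρ)).toReal) (𝓝[>] 0) (𝓝 0)) :
    ∃ φ : ℕ → ℕ, StrictMono φ ∧ ∀ᵐ r ∂volume.restrict (Ioo 0 R),
      TendstoUniformlyOn (fun i => preciseRep (ui (φ i))) (preciseRep u) atTop
        (Metric.sphere (0:Plane) r) := by
  have hmass : ∀ ε > 0, ∀ᶠ i in atTop, angMass (νi i) (σi i) ≤ angMass ν σ + ε := by
    intro ε hε
    obtain ⟨e, he0, he⟩ : ∃ e : ℝ, 0 < e ∧ ENNReal.ofReal e ≤ ε := by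
      rcases eq_or_ne ε ⊤ with rfl | ht
      · exact ⟨1, one_pos, le_top⟩
      · exact ⟨ε.toReal, ENNReal.toReal_pos hε.ne' ht, ENNReal.ofReal_toReal_le⟩
    filter_upwards [angMass_limsup hR hi h hL hν he0] with i hle
    unfold angMass
    rw [← ofReal_integral_norm_eq_lintegral_enorm (hi i).integrable_ang,
      ← ofReal_integral_norm_eq_lintegral_enorm h.integrable_ang]
    refine (ENNReal.ofReal_le_ofReal hle).trans ?_
    rw [ENNReal.ofReal_add (integral_nonneg fun x => norm_nonneg _) he0.le]
    gcongr
  have hD := hL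
  simp_rw [fun i => lintegral_ldist (hi i).meas h.meas] at hD
  obtain ⟨φ, hφ, hφd⟩ := exists_subseq_ae_tendsto
    (fun i => by have := measurable_ldist (hi i).meas h.meas; fun_prop) hD
  have hd1 : ∀ᵐ r ∂volume.restrict (Ioi 0),
      Tendsto (fun i => ldist (sl (ui (φ i)) r) (sl u r)) atTop (𝓝 0) := by
    filter_upwards [hφd, ae_restrict_mem measurableSet_Ioi] with r hr hr0
    exact tendsto_of_ofReal_mul hr0 hr
  have hex := tendsto_excess (fun i => hi (φ i)) h
    (fun ε hε => hφ.tendsto_atTop.eventually (hmass ε hε)) hd1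
  obtain ⟨ψ, hψ, hψd⟩ := exists_subseq_ae_tendsto
    (fun i => by
      have := measurable_evar (hi (φ i)).meas
      have := measurable_evar h.meas
      fun_prop) hex
  refine ⟨φ ∘ ψ, hφ.comp hψ, ?_⟩
  have hsub : Ioo 0 R ⊆ Ioi 0 := fun x hx => hx.1
  filter_upwards [h.ae_essCont hR hS,
    ae_restrict_of_ae_restrict_of_subset hsub hd1,
    ae_restrict_of_ae_restrict_of_subset hsub hψd,
    ae_restrict_of_ae_restrict_of_subset hsub h.ae_evar_lt_top,
    ae_restrict_of_ae_restrict_of_subset hsub (ae_perL1 h.meas h.int),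
    ae_restrict_of_ae_restrict_of_subset hsub h.ae_preciseRep,
    ae_restrict_of_ae_restrict_of_subset hsub
      (ae_all_iff.2 fun i => ae_perL1 (hi i).meas (hi i).int),
    ae_restrict_of_ae_restrict_of_subset hsub (ae_all_iff.2 fun i => (hi i).ae_preciseRep),
    ae_restrict_mem measurableSet_Ioo] with r hec hd he hfin hper hpr hperi hpri hr
  rw [Metric.tendstoUniformlyOn_iff]
  intro ε hε
  obtain ⟨a, ha, hm⟩ := hec (ε / 4) (by positivity)
  obtain ⟨η, hη, hst⟩ := arc_stability hper hfin ha (show 0 < ε / 4 by positivity)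
  have hη' : (0:ℝ≥0∞) < ENNReal.ofReal η := by simpa using hη
  have ev1 := (hd.comp hψ.tendsto_atTop).eventually (gt_mem_nhds hη')
  have ev2 := (tendsto_of_ofReal_mul hr.1 he).eventually (gt_mem_nhds hη')
  filter_upwards [ev1, ev2] with i h1 h2 x hx
  obtain ⟨θ, rfl⟩ := exists_pol hr.1 (mem_sphere_zero_iff_norm.1 hx)
  obtain ⟨m, hmθ⟩ := hm θ
  have h3 := hst (sl (ui (φ (ψ i))) r) (hperi _)
    (by rw [add_comm]; exact tsub_le_iff_right.1 h2.le) h1.le θ m _ hmθ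
  have h4 := hpr θ m _ a ha hmθ
  have h5 := hpri (φ (ψ i)) θ m _ (a / 2) (by linarith) h3
  rw [Real.dist_eq]
  simp only [Function.comp_apply]
  rw [abs_le] at h4 h5
  rw [abs_lt]
  constructor <;> linarith [h4.1, h4.2, h5.1, h5.2]

/-- Every `BV` function on the disc has a Borel representative vanishing off the disc, with the
same derivative. -/
lemma exists_nbv {v : Plane → ℝ} (h : IsBVScalarOn (Metric.ball (0 : Plane) R) v ν σ) :
    ∃ w, NBV R w ν σ ∧ w =ᵐ[volume.restrict (Metric.ball (0 : Plane) R)] v := by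
  have hB : MeasurableSet (Metric.ball (0 : Plane) R) := Metric.isOpen_ball.measurableSet
  have hm := h.integrable.1
  have hae : (Metric.ball (0 : Plane) R).indicator (hm.mk v)
      =ᵐ[volume.restrict (Metric.ball (0 : Plane) R)] v := by
    filter_upwards [ae_restrict_mem hB, hm.ae_eq_mk] with x hx hx2
    rw [indicator_of_mem hx, hx2]
  have hIntb : IntegrableOn ((Metric.ball (0 : Plane) R).indicator (hm.mk v))
      (Metric.ball (0 : Plane) R) := h.integrable.congr hae.symm
  refine ⟨(Metric.ball (0 : Plane) R).indicator (hm.mk v),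
    ⟨hm.stronglyMeasurable_mk.measurable.indicator hB, ?_, fun x hx => indicator_of_notMem hx _, ?_⟩,
    hae⟩
  · rw [← integrableOn_iff_integrable_of_support_subset (s := Metric.ball (0 : Plane) R)]
    · exact hIntb
    · exact support_indicator_subset
  · refine ⟨hIntb, h.finite, h.concentrated, h.meas, h.unit, fun φ h1 h2 h3 l => ?_⟩
    rw [← h.parts φ h1 h2 h3 l]
    refine integral_congr_ae ?_
    filter_upwards [hae] with x hx
    rw [hx]

lemma ball_subset_eventually {x : Plane} (hx : x ∈ Metric.ball (0 : Plane) R) :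
    ∀ᶠ ρ : ℝ in 𝓝[>] 0, Metric.ball x ρ ⊆ Metric.ball 0 R := by
  have : ∀ᶠ ρ : ℝ in 𝓝 0, ρ < R - dist x 0 := gt_mem_nhds (sub_pos.2 hx)
  filter_upwards [nhdsWithin_le_nhds this] with ρ hρ
  exact Metric.ball_subset_ball' (by linarith)

/-- The precise representative depends only on the almost-everywhere class. -/
lemma preciseRep_congr {v w : Plane → ℝ}
    (h : w =ᵐ[volume.restrict (Metric.ball (0 : Plane) R)] v) {x : Plane}
    (hx : x ∈ Metric.ball (0 : Plane) R) : preciseRep w x = preciseRep v x := by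
  unfold preciseRep
  congr 1
  ext t
  refine tendsto_congr' ?_
  filter_upwards [ball_subset_eventually hx] with ρ hρ
  congr 1
  have h1 := ae_restrict_of_ae_restrict_of_subset hρ h
  rw [inter_comm, inter_comm _ {y | t < v y},
    ← Measure.restrict_apply' Metric.isOpen_ball.measurableSet,
    ← Measure.restrict_apply' Metric.isOpen_ball.measurableSet]
  refine measure_congr ?_
  filter_upwards [h1] with y hy
  exact propext (by change t < w y ↔ t < v y; rw [hy])
end

end

/-- Proposition 3.5': if `u_i → u` strictly in `BV(B(0,R))` on the planar disc and
`S_u = ∅`, then there is a subsequence such that for a.e. `0 < r < R` the precise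
representatives `u_i*` converge to `u*` uniformly on the circle `∂B(0,r)`. -/
theorem strict_convergence_uniform_on_spheres (R : ℝ) (hR : 0 < R)
    (ui : ℕ → EuclideanSpace ℝ (Fin 2) → ℝ) (u : EuclideanSpace ℝ (Fin 2) → ℝ)
    (νi : ℕ → Measure (EuclideanSpace ℝ (Fin 2)))
    (σi : ℕ → EuclideanSpace ℝ (Fin 2) → EuclideanSpace ℝ (Fin 2))
    (ν : Measure (EuclideanSpace ℝ (Fin 2)))
    (σ : EuclideanSpace ℝ (Fin 2) → EuclideanSpace ℝ (Fin 2))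
    (hBVi : ∀ i, IsBVScalarOn (Metric.ball (0 : EuclideanSpace ℝ (Fin 2)) R) (ui i) (νi i) (σi i))
    (hBV : IsBVScalarOn (Metric.ball (0 : EuclideanSpace ℝ (Fin 2)) R) u ν σ)
    (hL1 : Tendsto (fun i => ∫ x in Metric.ball (0 : EuclideanSpace ℝ (Fin 2)) R,
        |ui i x - u x| ∂volume) atTop (nhds 0))
    (hvar : Tendsto (fun i => νi i (Metric.ball (0 : EuclideanSpace ℝ (Fin 2)) R)) atTop
        (nhds (ν (Metric.ball (0 : EuclideanSpace ℝ (Fin 2)) R))))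
    (hSu : approxDiscSet (Metric.ball (0 : EuclideanSpace ℝ (Fin 2)) R) u = ∅) :
    ∃ φ : ℕ → ℕ, StrictMono φ ∧
      ∀ᵐ r ∂(volume.restrict (Set.Ioo (0:ℝ) R)),
        TendstoUniformlyOn (fun i => preciseRep (ui (φ i))) (preciseRep u) atTop
          (Metric.sphere (0 : EuclideanSpace ℝ (Fin 2)) r) := by
  obtain ⟨w, hw, hwu⟩ := exists_nbv hBV
  choose wi hwi hwui using fun i => exists_nbv (hBVi i)
  have hBm : MeasurableSet (Metric.ball (0 : Plane) R) := Metric.isOpen_ball.measurableSet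
  have hmass : ∀ (μ : Measure Plane), μ (Metric.ball (0 : Plane) R)ᶜ = 0 →
      μ (Metric.ball (0 : Plane) R) = μ Set.univ := by
    intro μ hμ
    rw [← measure_add_measure_compl hBm, hμ, add_zero]
  have hν : Tendsto (fun i => (νi i).real Set.univ) atTop (nhds (ν.real Set.univ)) := by
    simp_rw [fun i => hmass (νi i) (hBVi i).concentrated, hmass ν hBV.concentrated] at hvar
    exact (ENNReal.tendsto_toReal hBV.finite.ne).comp hvar
  have hL : Tendsto (fun i => ∫⁻ x, ‖wi i x - w x‖ₑ) atTop (nhds 0) := by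
    have h1 : ∀ i, ∫⁻ x, ‖wi i x - w x‖ₑ
        = ENNReal.ofReal (∫ x in Metric.ball (0 : Plane) R, |ui i x - u x|) := by
      intro i
      have e1 : ∫⁻ x, ‖wi i x - w x‖ₑ = ∫⁻ x in Metric.ball (0 : Plane) R, ‖wi i x - w x‖ₑ := by
        symm
        refine setLIntegral_eq_of_support_subset ?_
        intro x hx
        by_contra hxB
        exact hx (by simp [(hwi i).zero x hxB, hw.zero x hxB])
      have e2 := ofReal_integral_norm_eq_lintegral_enorm
        ((hBVi i).integrable.sub hBV.integrable)
      rw [e1]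
      refine Eq.trans (lintegral_congr_ae ?_) e2.symm
      filter_upwards [hwu, hwui i] with x h1 h2
      simp [h1, h2]
    simp_rw [h1]
    simpa using ENNReal.tendsto_ofReal hL1
  have hS : ∀ x ∈ Metric.ball (0 : Plane) R, ∃ b : ℝ, Tendsto (fun ρ : ℝ =>
      (∫ y in Metric.ball x ρ, |w y - b|) / (volume (Metric.ball x ρ)).toReal)
      (nhdsWithin 0 (Set.Ioi 0)) (nhds 0) := by
    intro x hx
    by_contra hno
    have hmem : x ∈ approxDiscSet (Metric.ball (0 : Plane) R) u := by
      refine ⟨hx, fun ⟨c, hc⟩ => hno ⟨c, hc.congr' ?_⟩⟩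
      filter_upwards [ball_subset_eventually hx] with ρ hρ
      congr 1
      refine integral_congr_ae ?_
      filter_upwards [ae_restrict_of_ae_restrict_of_subset hρ hwu] with y hy
      rw [hy]
    rw [hSu] at hmem
    exact hmem
  obtain ⟨φ, hφ, hmain⟩ := NBV.uniform_on_spheres hR hwi hw hL hν hS
  refine ⟨φ, hφ, ?_⟩
  filter_upwards [hmain, ae_restrict_mem measurableSet_Ioo] with r hr hrR
  have hsph : ∀ x ∈ Metric.sphere (0 : Plane) r, x ∈ Metric.ball (0 : Plane) R := fun x hx => by
    rw [Metric.mem_ball, Metric.mem_sphere.1 hx]; exact hrR.2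
  refine (hr.congr (Eventually.of_forall fun i x hx => ?_)).congr_right fun x hx => ?_
  · exact preciseRep_congr (hwui (φ i)) (hsph x hx)
  · exact preciseRep_congr hwu (hsph x hx)
end
end

section
/- Let v₁, v₂ ∈ ℝ² be unit vectors and let a₁, a₂ ∈ (0,1] be such that the cones C₁ := C(v₁,a₁) and C₂ := C(v₂,a₂) satisfy C₁ ∩ C₂ = {0} and (−C₁) ∩ C₂ = {0}. Then there exists δ > 0, depending only on the two cones, such that for every V ∈ ℝ², either |V·z| ≥ δ|V||z| for all z ∈ C₁, or |V·z| ≥ δ|V||z| for all z ∈ C₂. -/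
/-!
By homogeneity it suffices to treat unit vectors. If a unit vector `V` is orthogonal to unit
vectors `x ∈ C₁` and `y ∈ C₂`, then, the orthogonal complement of `V` in the plane being a line,
`x = y` or `x = -y`; this contradicts the assumption that both `C₁` and `-C₁` meet `C₂` only
at the origin (`eq_or_eq_neg_of_orthogonal`). Hence the continuous function
`(V, x, y) ↦ max |V·x| |V·y|` is positive on the compact set
`S¹ × (C₁ ∩ S¹) × (C₂ ∩ S¹)`, so it is bounded below there by some `δ > 0`. If `V` violated
both alternatives for this `δ`, normalizing `V` and the two witnesses would violate the bound.
-/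

open scoped RealInnerProductSpace

theorem isClosed_cone (v : EuclideanSpace ℝ (Fin 2)) (a : ℝ) : IsClosed (cone v a) :=
  isClosed_le (by fun_prop) (by fun_prop)

theorem smul_mem_cone {v : EuclideanSpace ℝ (Fin 2)} {a : ℝ} {x : EuclideanSpace ℝ (Fin 2)}
    (hx : x ∈ cone v a) {c : ℝ} (hc : 0 ≤ c) : c • x ∈ cone v a := by
  have h : a * ‖x‖ ≤ ⟪x, v⟫ := hx
  change a * ‖c • x‖ ≤ ⟪c • x, v⟫
  rw [norm_smul, real_inner_smul_left, Real.norm_of_nonneg hc]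
  nlinarith [mul_le_mul_of_nonneg_left h hc]

/-- Two unit vectors of the plane orthogonal to the same unit vector agree up to sign. -/
theorem eq_or_eq_neg_of_orthogonal {V x y : EuclideanSpace ℝ (Fin 2)} (hV : ‖V‖ = 1)
    (hx : ‖x‖ = 1) (hy : ‖y‖ = 1) (hVx : ⟪V, x⟫ = 0) (hVy : ⟪V, y⟫ = 0) : x = y ∨ x = -y := by
  -- A unit vector orthogonal to `V` is `s • (-V 1, V 0)` with `s = ±1` the determinant.
  have key : ∀ w : EuclideanSpace ℝ (Fin 2), ‖w‖ = 1 → ⟪V, w⟫ = 0 →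
      (w 0 = -V 1 ∧ w 1 = V 0) ∨ (w 0 = V 1 ∧ w 1 = -V 0) := by
    intro w hw h
    have hV2 : V 0 ^ 2 + V 1 ^ 2 = 1 := by
      have := EuclideanSpace.real_norm_sq_eq V
      rw [hV, Fin.sum_univ_two] at this
      linarith
    have hw2 : w 0 ^ 2 + w 1 ^ 2 = 1 := by
      have := EuclideanSpace.real_norm_sq_eq w
      rw [hw, Fin.sum_univ_two] at this
      linarith
    have h' : V 0 * w 0 + V 1 * w 1 = 0 := by
      simp [PiLp.inner_apply, Fin.sum_univ_two] at h
      linarith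
    have e0 : w 0 = -(V 0 * w 1 - V 1 * w 0) * V 1 := by
      linear_combination (-w 0) * hV2 + V 0 * h'
    have e1 : w 1 = (V 0 * w 1 - V 1 * w 0) * V 0 := by
      linear_combination (-w 1) * hV2 + V 1 * h'
    have hs : (V 0 * w 1 - V 1 * w 0) ^ 2 = 1 := by
      linear_combination (w 0 ^ 2 + w 1 ^ 2) * hV2 + hw2 - (V 0 * w 0 + V 1 * w 1) * h'
    rcases (by simpa using hs : V 0 * w 1 - V 1 * w 0 = 1 ∨ V 0 * w 1 - V 1 * w 0 = -1) with hs | hs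
    · left; rw [hs] at e0 e1; constructor <;> linarith
    · right; rw [hs] at e0 e1; constructor <;> linarith
  rcases key x hx hVx with ⟨h0, h1⟩ | ⟨h0, h1⟩ <;> rcases key y hy hVy with ⟨k0, k1⟩ | ⟨k0, k1⟩
  · left; ext i; fin_cases i <;> simp [*]
  · right; ext i; fin_cases i <;> simp [*]
  · right; ext i; fin_cases i <;> simp [*]
  · left; ext i; fin_cases i <;> simp [*]

theorem norm_inv_smul_eq_one {x : EuclideanSpace ℝ (Fin 2)} (hx : 0 < ‖x‖) :
    ‖‖x‖⁻¹ • x‖ = 1 := by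
  rw [norm_smul, norm_inv, norm_norm, inv_mul_cancel₀ hx.ne']

/-- A failure of the lower bound for `V` and `z` passes to the normalized vectors. -/
theorem abs_inner_normalize_lt {V z : EuclideanSpace ℝ (Fin 2)} {δ : ℝ}
    (hV : 0 < ‖V‖) (hz : 0 < ‖z‖) (h : |⟪V, z⟫| < δ * (‖V‖ * ‖z‖)) :
    |⟪‖V‖⁻¹ • V, ‖z‖⁻¹ • z⟫| < δ := by
  rw [real_inner_smul_left, real_inner_smul_right, abs_mul, abs_mul, abs_inv, abs_inv,
    abs_norm, abs_norm, ← mul_assoc, ← mul_inv, inv_mul_lt_iff₀ (by positivity)]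
  linarith

theorem norms_pos_of_abs_inner_lt {V z : EuclideanSpace ℝ (Fin 2)} {δ : ℝ}
    (h : |⟪V, z⟫| < δ * (‖V‖ * ‖z‖)) : 0 < ‖V‖ ∧ 0 < ‖z‖ := by
  constructor <;> rw [norm_pos_iff] <;> rintro rfl <;> simp at h

/-- Lemma 3.6: given two cones intersecting only at the origin (and likewise after
negating one of them), there is `δ > 0` such that every vector `V` satisfies
`|V·z| ≥ δ|V||z|` either for all `z` in the first cone or for all `z` in the second cone. -/
theorem two_cones_lemma (v₁ v₂ : EuclideanSpace ℝ (Fin 2)) (hv₁ : ‖v₁‖ = 1) (hv₂ : ‖v₂‖ = 1)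
    (a₁ a₂ : ℝ) (ha₁ : 0 < a₁) (ha₁' : a₁ ≤ 1) (ha₂ : 0 < a₂) (ha₂' : a₂ ≤ 1)
    (hC : cone v₁ a₁ ∩ cone v₂ a₂ = {0})
    (hC' : (Neg.neg '' cone v₁ a₁) ∩ cone v₂ a₂ = {0}) :
    ∃ δ : ℝ, 0 < δ ∧ ∀ V : EuclideanSpace ℝ (Fin 2),
      (∀ z ∈ cone v₁ a₁, δ * (‖V‖ * ‖z‖) ≤ |⟪V, z⟫|) ∨
      (∀ z ∈ cone v₂ a₂, δ * (‖V‖ * ‖z‖) ≤ |⟪V, z⟫|) := by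
  have hS : IsCompact (Metric.sphere (0 : EuclideanSpace ℝ (Fin 2)) 1) := isCompact_sphere 0 1
  have hK := hS.prod ((hS.inter_left (isClosed_cone v₁ a₁)).prod
    (hS.inter_left (isClosed_cone v₂ a₂)))
  obtain ⟨δ, hδ, hmin⟩ := hK.exists_forall_le'
    (f := fun p => max |⟪p.1, p.2.1⟫| |⟪p.1, p.2.2⟫|) (a := 0)
    (Continuous.continuousOn (by fun_prop)) (by
      rintro ⟨V, x, y⟩ ⟨hV, ⟨hx, hx1⟩, ⟨hy, hy1⟩⟩
      simp only [mem_sphere_zero_iff_norm] at hV hx1 hy1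
      by_contra hle
      obtain ⟨hl, hr⟩ := max_le_iff.mp (not_lt.mp hle)
      have hy0 : y ∉ ({0} : Set (EuclideanSpace ℝ (Fin 2))) := by
        rintro rfl
        simp at hy1
      rcases eq_or_eq_neg_of_orthogonal hV hx1 hy1 (abs_nonpos_iff.mp hl)
        (abs_nonpos_iff.mp hr) with h | h
      · exact hy0 (hC ▸ ⟨h ▸ hx, hy⟩)
      · exact hy0 (hC' ▸ ⟨⟨x, hx, by simp [h]⟩, hy⟩))
  refine ⟨δ, hδ, fun V => ?_⟩
  by_contra! hcon
  obtain ⟨⟨x, hx, hVx⟩, ⟨y, hy, hVy⟩⟩ := hcon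
  obtain ⟨hV0, hx0⟩ := norms_pos_of_abs_inner_lt hVx
  obtain ⟨-, hy0⟩ := norms_pos_of_abs_inner_lt hVy
  refine absurd (hmin (‖V‖⁻¹ • V, ‖x‖⁻¹ • x, ‖y‖⁻¹ • y) ⟨?_, ⟨?_, ?_⟩, ⟨?_, ?_⟩⟩)
    (not_le.mpr (max_lt (abs_inner_normalize_lt hV0 hx0 hVx) (abs_inner_normalize_lt hV0 hy0 hVy)))
  · exact mem_sphere_zero_iff_norm.mpr (norm_inv_smul_eq_one hV0)
  · exact smul_mem_cone hx (inv_nonneg.mpr hx0.le)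
  · exact mem_sphere_zero_iff_norm.mpr (norm_inv_smul_eq_one hx0)
  · exact smul_mem_cone hy (inv_nonneg.mpr hy0.le)
  · exact mem_sphere_zero_iff_norm.mpr (norm_inv_smul_eq_one hy0)
end
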